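/- For each ε>0, the functional I_ε : 𝒰 → [0,+∞] is lower semicontinuous with respect to the metric d_𝒰. -/

import Mathlib

/-!
Lower semicontinuity of `I_ε` is a weak-strong compactness argument. Let `u_n → u` in `𝒰` with
`I_ε(u_n) < M` for infinitely many `n`; the claim is `I_ε(u) ≤ M`.

*Gradient bound.* Testing with `l χ u_n`, where `χ(t,x) = a(t) θ(x)²` is a space-time cutoff and
`l > 0` is small, the quadratic `σ`-term is absorbed by the `D`-term since `D ≥ c > 0` and `σ` is
bounded; the time term is `½ ∫ χ_t u²`, which is controlled because `0 ≤ u ≤ 1`. This bounds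
`∂ₓu_n` in `L²` of each box `[0,T] × [-R,R]` (`apriori`). Such a function is not smooth; `energy`
uses instead `J_n (χ J_n u)`, where the self-adjointness of the mollification `J_n` makes the time
term exact.

*Strong convergence.* Convergence in `𝒰` gives weak convergence of every time slice
(`slice_tendsto`), so the spatial primitives of `u_n - u` tend to zero in `L²_loc`
(`prim_tendsto`). Interpolating between the primitive and the bounded gradient (`interp`) yields
`u_n → u` in `L²_loc` (`strong_conv`). No regularity in time is needed for this.

*Conclusion.* Along an ultrafilter finer than `atTop` and containing the set of good indices, the
gradients converge weakly in `L²_loc` (`loc_weak`), and the limit is the weak gradient of `u`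
(`limit_weakDx`), unique up to null sets (`weak_unique`). For each fixed test function the expression defining `I_ε` is a
combination of strongly convergent factors and one strong-times-weak product, hence converges
(`Iexpr_tendsto`), and the bound by `M` passes to the supremum (`Ieps_le_of_frequently`).
-/

open MeasureTheory Set Filter Topology
open scoped ENNReal Classical

noncomputable section

namespace GammaSCL

/-! ### Spatial test functions and the metric on `U` -/

/-- Smooth compactly supported test functions on `ℝ`, supported in `(-N, N)`. -/
structure STest (N : ℝ) where
  toFun : ℝ → ℝ
  smooth : ContDiff ℝ (⊤ : ℕ∞) toFun
  cpt : HasCompactSupport toFun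
  supp : Function.support toFun ⊆ Ioo (-N) N

/-- The negative Sobolev seminorm `‖w‖_{-1,N}`. -/
def negNorm (N : ℝ) (w : ℝ → ℝ) : ℝ :=
  sSup { r : ℝ | ∃ φ : STest N, (∫ x, deriv φ.toFun x ^ 2) = 1 ∧ r = ∫ x, w x * φ.toFun x }

/-- The metric `d_U` on the space `U` of measurable `[0,1]`-valued functions. -/
def dU (u v : ℝ → ℝ) : ℝ :=
  ∑' n : ℕ, (2 : ℝ)⁻¹ ^ (n + 1) *
    (negNorm ((n : ℝ) + 1) (fun x => u x - v x) /
      (1 + negNorm ((n : ℝ) + 1) (fun x => u x - v x)))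

/-- The space `𝒰 = C([0,T]; U)`. -/
structure cU (T : ℝ) where
  toFun : ℝ × ℝ → ℝ
  meas : Measurable toFun
  mem01 : ∀ p, toFun p ∈ Icc (0:ℝ) 1
  cont : ∀ t₀ ∈ Icc (0:ℝ) T, ∀ δ > 0, ∃ ζ > 0, ∀ t ∈ Icc (0:ℝ) T,
    |t - t₀| < ζ → dU (fun x => toFun (t, x)) (fun x => toFun (t₀, x)) < δ

/-- The uniform metric `d_𝒰` on `𝒰`. -/
def dcU (T : ℝ) (u v : cU T) : ℝ :=
  sSup { r : ℝ | ∃ t ∈ Icc (0:ℝ) T,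
    r = dU (fun x => u.toFun (t, x)) (fun x => v.toFun (t, x)) }

/-- The metric `d_𝒳` on `𝒳`. -/
def dX (T : ℝ) (u v : cU T) : ℝ :=
  (∑' n : ℕ, (2 : ℝ)⁻¹ ^ (n + 1) *
    ∫ p in Icc (0:ℝ) T ×ˢ Icc (-((n : ℝ) + 1)) ((n : ℝ) + 1), |u.toFun p - v.toFun p|) +
  dcU T u v

/-! ### Space-time test functions -/

/-- Smooth test functions compactly supported in `(0,T) × ℝ`. -/
structure TTest (T : ℝ) where
  toFun : ℝ × ℝ → ℝ
  smooth : ContDiff ℝ (⊤ : ℕ∞) toFun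
  cpt : HasCompactSupport toFun
  supp : Function.support toFun ⊆ Ioo (0 : ℝ) T ×ˢ (univ : Set ℝ)

/-- Smooth test functions compactly supported in `[0,T] × ℝ` (no vanishing at `t = 0, T`). -/
structure TTestC where
  toFun : ℝ × ℝ → ℝ
  smooth : ContDiff ℝ (⊤ : ℕ∞) toFun
  cpt : HasCompactSupport toFun

/-- Partial derivative in `t`. -/
def ptF (ψ : ℝ × ℝ → ℝ) : ℝ × ℝ → ℝ := fun p => fderiv ℝ ψ p (1, 0)
/-- Partial derivative in `x`. -/
def pxF (ψ : ℝ × ℝ → ℝ) : ℝ × ℝ → ℝ := fun p => fderiv ℝ ψ p (0, 1)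

/-- The `L²([0,T] × ℝ)` inner product `⟨⟨g, h⟩⟩`. -/
def pair (T : ℝ) (g h : ℝ × ℝ → ℝ) : ℝ :=
  ∫ p in Icc (0:ℝ) T ×ˢ (univ : Set ℝ), g p * h p

/-! ### Weak derivatives -/

/-- Locally square integrable on `[0,T] × ℝ`. -/
def L2loc (T : ℝ) (w : ℝ × ℝ → ℝ) : Prop :=
  Measurable w ∧ ∀ R > 0, IntegrableOn (fun p => w p ^ 2) (Icc (0:ℝ) T ×ˢ Icc (-R) R)

/-- `w` is the weak `x`-derivative of `u`. -/
def HasWeakDx (T : ℝ) (u w : ℝ × ℝ → ℝ) : Prop :=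
  ∀ φ : TTest T, pair T u (pxF φ.toFun) = - pair T w φ.toFun

/-- `u` admits a locally square integrable weak `x`-derivative. -/
def hasDx (T : ℝ) (u : ℝ × ℝ → ℝ) : Prop := ∃ w, L2loc T w ∧ HasWeakDx T u w

/-- A choice of weak `x`-derivative. -/
def wDx (T : ℝ) (u : ℝ × ℝ → ℝ) : ℝ × ℝ → ℝ :=
  if h : hasDx T u then h.choose else 0

/-! ### The parabolic cost functional -/

/-- The expression inside the supremum defining `I_ε`. -/
def IexprW (f D σ : ℝ → ℝ) (T ε : ℝ) (u w : ℝ × ℝ → ℝ) (φ : TTest T) : ℝ :=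
  - pair T u (ptF φ.toFun) - pair T (fun p => f (u p)) (pxF φ.toFun)
    + ε / 2 * pair T (fun p => D (u p) * w p) (pxF φ.toFun)
    - 1 / 2 * pair T (fun p => σ (u p) * pxF φ.toFun p) (pxF φ.toFun)

/-- The cost functional `I_ε : 𝒰 → [0,+∞]`. -/
def Ieps (f D σ : ℝ → ℝ) (T ε : ℝ) (u : cU T) : ℝ≥0∞ :=
  if hasDx T u.toFun then
    ⨆ φ : TTest T, ENNReal.ofReal (IexprW f D σ T ε u.toFun (wDx T u.toFun) φ)
  else ⊤

/-- The rescaled cost functional `H_ε := ε⁻¹ I_ε`. -/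
def Heps (f D σ : ℝ → ℝ) (T ε : ℝ) (u : cU T) : ℝ≥0∞ :=
  ENNReal.ofReal ε⁻¹ * Ieps f D σ T ε u

/-! ### Young measures -/

/-- The space `𝓜` of Young measures. -/
structure YM (T : ℝ) where
  m : ℝ × ℝ → Measure ℝ
  prob : ∀ p, IsProbabilityMeasure (m p)
  supp01 : ∀ p, m p (Icc (0:ℝ) 1)ᶜ = 0
  meas : ∀ F : ℝ → ℝ, Continuous F → Measurable fun p => ∫ l, F l ∂ m p
  bar_mem : ∀ p, (∫ l, l ∂ m p) ∈ Icc (0:ℝ) 1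
  bar_cont : ∀ t₀ ∈ Icc (0:ℝ) T, ∀ δ > 0, ∃ ζ > 0, ∀ t ∈ Icc (0:ℝ) T,
    |t - t₀| < ζ →
      dU (fun x => ∫ l, l ∂ m (t, x)) (fun x => ∫ l, l ∂ m (t₀, x)) < δ

/-- The moment `μ(F)`. -/
def YM.mom {T : ℝ} (μ : YM T) (F : ℝ → ℝ) : ℝ × ℝ → ℝ := fun p => ∫ l, F l ∂ μ.m p

/-- The barycenter `μ(ι)` of a Young measure, as an element of `𝒰`. -/
def YM.bar {T : ℝ} (μ : YM T) : cU T :=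
  ⟨fun p => ∫ l, l ∂ μ.m p, μ.meas (fun l => l) continuous_id', μ.bar_mem, μ.bar_cont⟩

/-- The metric `d_𝓜 = d_w + d_𝒰(μ(ι), ν(ι))`. -/
def dM (T : ℝ) (dw : YM T → YM T → ℝ) (μ ν : YM T) : ℝ :=
  dw μ ν + dcU T μ.bar ν.bar

/-- `dw` is a distance generating the weak* topology on Young measures. -/
def GeneratesWeakStar (T : ℝ) (dw : YM T → YM T → ℝ) : Prop :=
  (∀ μ ν, dw μ ν = dw ν μ) ∧ (∀ μ ν, 0 ≤ dw μ ν) ∧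
  ∀ (μ : ℕ → YM T) (ν : YM T),
    Tendsto (fun n => dw (μ n) ν) atTop (𝓝 0) ↔
      ∀ g : ℝ × (ℝ × ℝ) → ℝ, Continuous g → HasCompactSupport g →
        Tendsto
          (fun n => ∫ p in Icc (0:ℝ) T ×ˢ (univ : Set ℝ), ∫ l, g (l, p) ∂ (μ n).m p)
          atTop
          (𝓝 (∫ p in Icc (0:ℝ) T ×ˢ (univ : Set ℝ), ∫ l, g (l, p) ∂ ν.m p))

/-- The lift `𝓘_ε` of `I_ε` to Young measures. -/
def calIeps (f D σ : ℝ → ℝ) (T ε : ℝ) (μ : YM T) : ℝ≥0∞ :=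
  if h : ∃ u : cU T, ∀ p, μ.m p = Measure.dirac (u.toFun p) then
    Ieps f D σ T ε h.choose
  else ⊤

/-- The limiting functional `𝓘` on Young measures. -/
def calI (f σ : ℝ → ℝ) (T : ℝ) (μ : YM T) : ℝ≥0∞ :=
  ⨆ φ : TTest T, ENNReal.ofReal
    (- pair T (μ.mom (fun l => l)) (ptF φ.toFun) - pair T (μ.mom f) (pxF φ.toFun)
      - 1 / 2 * pair T (fun p => μ.mom σ p * pxF φ.toFun p) (pxF φ.toFun))

/-! ### Γ-convergence via sequences -/

/-- Sequential compactness with respect to a distance function. -/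
def SeqCompactIn {α : Type*} (d : α → α → ℝ) (K : Set α) : Prop :=
  ∀ x : ℕ → α, (∀ n, x n ∈ K) → ∃ y ∈ K, ∃ s : ℕ → ℕ, StrictMono s ∧
    Tendsto (fun n => d (x (s n)) y) atTop (𝓝 0)

/-- Equicoercivity of a family of functionals. -/
def Equicoercive {α : Type*} (d : α → α → ℝ) (F : ℝ → α → ℝ≥0∞) : Prop :=
  ∀ M : ℝ, 0 < M → ∃ K : Set α, SeqCompactIn d K ∧
    ∀ ε ∈ Ioc (0:ℝ) 1, { x : α | F ε x ≤ ENNReal.ofReal M } ⊆ K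

/-- The Γ-liminf inequality `Γ-liminf F_ε ≥ G`. -/
def GammaLiminfGE {α : Type*} (d : α → α → ℝ) (F : ℝ → α → ℝ≥0∞) (G : α → ℝ≥0∞) : Prop :=
  ∀ (x : α) (e : ℕ → ℝ) (xs : ℕ → α), (∀ n, 0 < e n) → Tendsto e atTop (𝓝 0) →
    Tendsto (fun n => d (xs n) x) atTop (𝓝 0) →
    G x ≤ Filter.liminf (fun n => F (e n) (xs n)) atTop

/-- The Γ-limsup inequality `Γ-limsup F_ε ≤ G`. -/
def GammaLimsupLE {α : Type*} (d : α → α → ℝ) (F : ℝ → α → ℝ≥0∞) (G : α → ℝ≥0∞) : Prop :=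
  ∀ (x : α) (e : ℕ → ℝ), (∀ n, 0 < e n) → Tendsto e atTop (𝓝 0) →
    ∃ xs : ℕ → α, Tendsto (fun n => d (xs n) x) atTop (𝓝 0) ∧
      Filter.limsup (fun n => F (e n) (xs n)) atTop ≤ G x

/-- Γ-convergence of `F_ε` to `G`. -/
def GammaConvergesTo {α : Type*} (d : α → α → ℝ) (F : ℝ → α → ℝ≥0∞) (G : α → ℝ≥0∞) : Prop :=
  GammaLiminfGE d F G ∧ GammaLimsupLE d F G

/-! ### Entropies, entropy production, kinetic measures -/

/-- Weak solutions to `u_t + f(u)_x = 0`. -/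
def IsWeakSolution (f : ℝ → ℝ) (T : ℝ) (u : ℝ × ℝ → ℝ) : Prop :=
  ∀ φ : TTest T, pair T u (ptF φ.toFun) + pair T (fun p => f (u p)) (pxF φ.toFun) = 0

/-- Derivative within `[0,1]`. -/
def dIcc (g : ℝ → ℝ) : ℝ → ℝ := fun v => derivWithin g (Icc 0 1) v

/-- An entropy–entropy flux pair. -/
structure Entropy (f : ℝ → ℝ) where
  eta : ℝ → ℝ
  q : ℝ → ℝ
  smooth : ContDiffOn ℝ 2 eta (Icc 0 1)
  qcont : ContinuousOn q (Icc 0 1)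
  flux : ∀ a ∈ Icc (0:ℝ) 1, ∀ b ∈ Icc (0:ℝ) 1,
    q b - q a = ∫ v in a..b, dIcc eta v * deriv f v

/-- The `η`-entropy production `℘_{η,u}(φ)`. -/
def entProd (f : ℝ → ℝ) (T : ℝ) (E : Entropy f) (u : ℝ × ℝ → ℝ) (φ : TTest T) : ℝ :=
  - pair T (fun p => E.eta (u p)) (ptF φ.toFun) - pair T (fun p => E.q (u p)) (pxF φ.toFun)

/-- `‖℘_{η,u}‖_{TV,L}`. -/
def TVabs (f : ℝ → ℝ) (T : ℝ) (E : Entropy f) (L : ℝ) (u : ℝ × ℝ → ℝ) : ℝ≥0∞ :=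
  ⨆ φ : { φ : TTest T // Function.support φ.toFun ⊆ Ioo (0:ℝ) T ×ˢ Ioo (-L) L ∧
          ∀ p, |φ.toFun p| ≤ 1 },
    ENNReal.ofReal (entProd f T E u φ.1)

/-- `‖℘⁺_{η,u}‖_{TV,L}`. -/
def TVpos (f : ℝ → ℝ) (T : ℝ) (E : Entropy f) (L : ℝ) (u : ℝ × ℝ → ℝ) : ℝ≥0∞ :=
  ⨆ φ : { φ : TTest T // Function.support φ.toFun ⊆ Ioo (0:ℝ) T ×ˢ Ioo (-L) L ∧
          ∀ p, φ.toFun p ∈ Icc (0:ℝ) 1 },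
    ENNReal.ofReal (entProd f T E u φ.1)

/-- Entropy-measure solutions: every entropy production extends to a Radon measure. -/
def EMsol (f : ℝ → ℝ) (T : ℝ) (u : cU T) : Prop :=
  IsWeakSolution f T u.toFun ∧ ∀ E : Entropy f, ∀ L > 0, TVabs f T E L u.toFun ≠ ⊤

/-- `v`-derivative (within `[0,1]`) of a sampler. -/
def dv1 (θ : ℝ → ℝ × ℝ → ℝ) : ℝ → ℝ × ℝ → ℝ :=
  fun v p => derivWithin (fun w => θ w p) (Icc 0 1) v

/-- An entropy sampler together with a conjugated entropy flux sampler. -/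
structure Sampler (f : ℝ → ℝ) (T : ℝ) where
  θ : ℝ → ℝ × ℝ → ℝ
  Q : ℝ → ℝ × ℝ → ℝ
  cpt : HasCompactSupport (Function.uncurry θ)
  supp : Function.support (Function.uncurry θ) ⊆
    Icc (0:ℝ) 1 ×ˢ (Ioo (0:ℝ) T ×ˢ (univ : Set ℝ))
  smooth_p : ∀ v, ContDiff ℝ (⊤ : ℕ∞) (θ v)
  smooth_v : ∀ p, ContDiffOn ℝ 2 (fun v => θ v p) (Icc 0 1)
  cont0 : Continuous (Function.uncurry θ)
  cont1 : ContinuousOn (Function.uncurry (dv1 θ)) (Icc (0:ℝ) 1 ×ˢ (univ : Set (ℝ × ℝ)))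
  cont2 : ContinuousOn (Function.uncurry (dv1 (dv1 θ))) (Icc (0:ℝ) 1 ×ˢ (univ : Set (ℝ × ℝ)))
  Qsmooth : ∀ v, ContDiff ℝ 1 (Q v)
  Qflux : ∀ (p : ℝ × ℝ), ∀ a ∈ Icc (0:ℝ) 1, ∀ b ∈ Icc (0:ℝ) 1,
    Q b p - Q a p = ∫ v in a..b, dv1 θ v p * deriv f v

/-- The `ϑ`-sampled entropy production `P_{ϑ,u}`. -/
def Ptheta (f : ℝ → ℝ) (T : ℝ) (S : Sampler f T) (u : ℝ × ℝ → ℝ) : ℝ :=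
  - ∫ p in Icc (0:ℝ) T ×ˢ (univ : Set ℝ),
      (fderiv ℝ (S.θ (u p)) p (1, 0) + fderiv ℝ (S.Q (u p)) p (0, 1))

/-- `(ρp, ρn)` is a decomposition of the kinetic measure `ϱ_u` of a weak solution `u`. -/
def IsKineticMeasure (f : ℝ → ℝ) (T : ℝ) (u : ℝ × ℝ → ℝ)
    (ρp ρn : ℝ → Measure (ℝ × ℝ)) : Prop :=
  (∀ v, ρp v ((Ioo (0:ℝ) T ×ˢ (univ : Set ℝ))ᶜ) = 0 ∧
        ρn v ((Ioo (0:ℝ) T ×ˢ (univ : Set ℝ))ᶜ) = 0) ∧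
  (∀ L > 0, ∃ C : ℝ≥0∞, C ≠ ⊤ ∧ ∀ v ∈ Icc (0:ℝ) 1,
      ρp v (Icc (0:ℝ) T ×ˢ Icc (-L) L) + ρn v (Icc (0:ℝ) T ×ˢ Icc (-L) L) ≤ C) ∧
  (∀ g : ℝ × ℝ → ℝ, Continuous g → HasCompactSupport g →
      Measurable fun v => (∫ p, g p ∂ ρp v) - ∫ p, g p ∂ ρn v) ∧
  ∀ S : Sampler f T, Ptheta f T S u =
    ∫ v in Icc (0:ℝ) 1,
      ((∫ p, dv1 (dv1 S.θ) v p ∂ ρp v) - ∫ p, dv1 (dv1 S.θ) v p ∂ ρn v)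

/-- The Γ-entropy cost functional `H`. -/
def Hfun (f D σ : ℝ → ℝ) (T : ℝ) (u : cU T) : ℝ≥0∞ :=
  if IsWeakSolution f T u.toFun then
    ⨅ ρ : { ρ : (ℝ → Measure (ℝ × ℝ)) × (ℝ → Measure (ℝ × ℝ)) //
            IsKineticMeasure f T u.toFun ρ.1 ρ.2 },
      ∫⁻ v in Icc (0:ℝ) 1, ENNReal.ofReal (D v / σ v) * ρ.1.1 v univ
  else ⊤

/-- Entropic solutions. -/
def EntropicSol (f : ℝ → ℝ) (T : ℝ) (u : cU T) : Prop :=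
  IsWeakSolution f T u.toFun ∧
  ∀ E : Entropy f, (∀ v ∈ Icc (0:ℝ) 1, 0 ≤ dIcc (dIcc E.eta) v) →
    ∀ φ : TTest T, (∀ p, 0 ≤ φ.toFun p) → entProd f T E u.toFun φ ≤ 0

/-- There is no interval in which `f` is affine. -/
def NoAffinePiece (f : ℝ → ℝ) : Prop :=
  ∀ a b : ℝ, 0 ≤ a → a < b → b ≤ 1 →
    ¬ ∃ c d : ℝ, ∀ v ∈ Icc a b, f v = c * v + d

/-- Entropy-splittable solutions. -/
def Splittable (f : ℝ → ℝ) (T : ℝ) (u : cU T) : Prop :=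
  EMsol f T u ∧
  ∃ Ep En : Set (ℝ × ℝ), IsClosed Ep ∧ IsClosed En ∧
    Ep ⊆ Icc (0:ℝ) T ×ˢ (univ : Set ℝ) ∧ En ⊆ Icc (0:ℝ) T ×ˢ (univ : Set ℝ) ∧
    (∃ ρp ρn : ℝ → Measure (ℝ × ℝ), IsKineticMeasure f T u.toFun ρp ρn ∧
      ∀ᵐ v ∂(volume.restrict (Icc (0:ℝ) 1)), ρp v Epᶜ = 0 ∧ ρn v Enᶜ = 0) ∧
    ∀ L > 0, ∀ a b : ℝ, 0 ≤ a → a < b → b ≤ T →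
      ∃ a' b' : ℝ, a ≤ a' ∧ a' < b' ∧ b' ≤ b ∧
        ∀ t ∈ Ioo a' b', ∀ x ∈ Icc (-L) L, (t, x) ∉ Ep ∩ En

/-- Nice solutions with respect to `σ`: the set `𝒮_σ`. -/
def NiceSol (f D σ : ℝ → ℝ) (T : ℝ) (u : cU T) : Prop :=
  Splittable f T u ∧ Hfun f D σ T u ≠ ⊤ ∧
  ∀ L > 0, ∃ δ > 0,
    ∀ᵐ p ∂(volume.restrict (Icc (0:ℝ) T ×ˢ Icc (-L) L)), δ ≤ σ (u.toFun p)

/-- The relaxed functional `H̄`. -/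
def Hbar (f D σ : ℝ → ℝ) (T : ℝ) (u : cU T) : ℝ≥0∞ :=
  ⨅ s : { s : ℕ → cU T // (∀ n, NiceSol f D σ T (s n)) ∧
          Tendsto (fun n => dX T (s n) u) atTop (𝓝 0) },
    Filter.liminf (fun n => Hfun f D σ T (s.1 n)) atTop

/-- Continuity in time with values in `L¹_loc(ℝ)`. -/
def ContL1 (T : ℝ) (u : ℝ × ℝ → ℝ) : Prop :=
  ∀ t₀ ∈ Icc (0:ℝ) T, ∀ R > 0, ∀ δ > 0, ∃ ζ > 0, ∀ t ∈ Icc (0:ℝ) T,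
    |t - t₀| < ζ → (∫ x in Icc (-R) R, |u (t, x) - u (t₀, x)|) < δ

/-! ### The relaxation `R_{f,σ}` and the Γ-limit `I` on `𝒰` -/

/-- The function `R_{f,σ}(w,c)`. -/
def Rfs (f σ : ℝ → ℝ) (w c : ℝ) : ℝ≥0∞ :=
  ⨅ ν : { ν : Measure ℝ // IsProbabilityMeasure ν ∧ ν (Icc (0:ℝ) 1)ᶜ = 0 ∧ (∫ l, l ∂ν) = w },
    if (∫ l, σ l ∂ν.1) = 0 then (if (∫ l, f l ∂ν.1) = c then 0 else ⊤)
    else ENNReal.ofReal ((∫ l, f l ∂ν.1 - c) ^ 2 / ∫ l, σ l ∂ν.1)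

/-- The Γ-limit `I` of `I_ε` on `𝒰`. -/
def Ilim (f σ : ℝ → ℝ) (T : ℝ) (u : cU T) : ℝ≥0∞ :=
  ⨅ Φ : { Φ : ℝ × ℝ → ℝ // L2loc T Φ ∧
          ∀ φ : TTest T, - pair T Φ (pxF φ.toFun) = pair T u.toFun (ptF φ.toFun) },
    ∫⁻ p in Icc (0:ℝ) T ×ˢ (univ : Set ℝ), Rfs f σ (u.toFun p) (Φ.1 p)

/-! ### The classes `𝓜_g` and `𝓜₀` -/

/-- The class `𝓜_g`. -/
def Mg (f σ : ℝ → ℝ) (T : ℝ) (μ : YM T) : Prop :=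
  calI f σ T μ ≠ ⊤ ∧
  ∃ r > 0, ∃ L > 0, ∃ ν : Measure ℝ, IsProbabilityMeasure ν ∧ ν (Icc (0:ℝ) 1)ᶜ = 0 ∧
    (∀ p : ℝ × ℝ, p.1 ∈ Icc (0:ℝ) T → r ≤ μ.mom (fun l => l) p ∧ r ≤ μ.mom σ p) ∧
    ∀ p : ℝ × ℝ, p.1 ∈ Icc (0:ℝ) T → L < |p.2| → μ.m p = ν

/-- The class `𝓜₀` of Dirac masses of smooth functions in `𝓜_g`. -/
def M0 (f σ : ℝ → ℝ) (T : ℝ) (μ : YM T) : Prop :=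
  Mg f σ T μ ∧ ∃ u : ℝ × ℝ → ℝ, ContDiff ℝ 1 u ∧ (∀ p, u p ∈ Icc (0:ℝ) 1) ∧
    ∀ p, μ.m p = Measure.dirac (u p)

/-! ### The spaces `𝓓¹_a` and the Riesz representation of the cost -/

/-- `P` represents (the gradient of) an element of the Hilbert space `𝓓¹_a`. -/
def InD1 (T : ℝ) (a P : ℝ × ℝ → ℝ) : Prop :=
  Measurable P ∧ IntegrableOn (fun p => a p * P p ^ 2) (Icc (0:ℝ) T ×ˢ (univ : Set ℝ)) ∧
  ∀ δ > 0, ∃ φ : TTestC,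
    (∫ p in Icc (0:ℝ) T ×ˢ (univ : Set ℝ), a p * (P p - pxF φ.toFun p) ^ 2) < δ

/-- The extended linear functional `ℓ^u_ε(φ)` with boundary terms. -/
def ellC (f D : ℝ → ℝ) (T ε : ℝ) (u w : ℝ × ℝ → ℝ) (φ : TTestC) : ℝ :=
  (∫ x, u (T, x) * φ.toFun (T, x)) - (∫ x, u (0, x) * φ.toFun (0, x))
    - pair T u (ptF φ.toFun) - pair T (fun p => f (u p)) (pxF φ.toFun)
    + ε / 2 * pair T (fun p => D (u p) * w p) (pxF φ.toFun)

/-- `u` is a weak solution to `u_t + f(u)_x = (ε/2)(D(u)u_x)_x - (σ(u)Ψ_x)_x` with `Ψ_x = P`. -/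
def rieszEq (f D σ : ℝ → ℝ) (T ε : ℝ) (u w P : ℝ × ℝ → ℝ) : Prop :=
  ∀ φ : TTestC,
    (∫ x, u (T, x) * φ.toFun (T, x)) - (∫ x, u (0, x) * φ.toFun (0, x))
      - (pair T u (ptF φ.toFun)
        + pair T (fun p => f (u p) - ε / 2 * (D (u p) * w p) + σ (u p) * P p)
            (pxF φ.toFun)) = 0

/-- `μ(ι)_t + μ(f)_x = -(μ(σ) P)_x` weakly. -/
def calIEq (f σ : ℝ → ℝ) (T : ℝ) (μ : YM T) (P : ℝ × ℝ → ℝ) : Prop :=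
  ∀ φ : TTest T,
    - pair T (μ.mom (fun l => l)) (ptF φ.toFun) - pair T (μ.mom f) (pxF φ.toFun)
      = pair T (fun p => μ.mom σ p * P p) (pxF φ.toFun)

/-! ### The cost functional on `L¹_loc` -/

/-- Locally integrable on `[0,T] × ℝ`. -/
def L1loc (T : ℝ) (u : ℝ × ℝ → ℝ) : Prop :=
  Measurable u ∧ ∀ R > 0, IntegrableOn u (Icc (0:ℝ) T ×ˢ Icc (-R) R)

/-- The cost functional `Î_ε` on `L¹_loc([0,T] × ℝ)`. -/
def Ihat (f D σ : ℝ → ℝ) (T ε : ℝ) (u : ℝ × ℝ → ℝ) : ℝ≥0∞ :=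
  if L2loc T (fun p => f (u p)) ∧ hasDx T u then
    ⨆ φ : TTest T, ENNReal.ofReal (IexprW f D σ T ε u (wDx T u) φ)
  else ⊤

/-! ### Hamilton–Jacobi equations -/

/-- The space `𝓑` (representatives of equivalence classes modulo additive constants). -/
structure HJ (T : ℝ) where
  b : ℝ × ℝ → ℝ
  meas : Measurable b
  sq : ∀ t ∈ Icc (0:ℝ) T, ∀ R > 0, IntegrableOn (fun x => b (t, x) ^ 2) (Icc (-R) R)
  contL2 : ∀ t₀ ∈ Icc (0:ℝ) T, ∀ R > 0, ∀ δ > 0, ∃ ζ > 0, ∀ t ∈ Icc (0:ℝ) T,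
    |t - t₀| < ζ → (∫ x in Icc (-R) R, (b (t, x) - b (t₀, x)) ^ 2) < δ
  ux : cU T
  hux : ∀ φ : TTest T, pair T b (pxF φ.toFun) = - pair T ux.toFun φ.toFun

/-- The part of the distance on `𝓑` involving the infimum over additive constants. -/
def dConst (T : ℝ) (b1 b2 : HJ T) : ℝ :=
  sInf { r : ℝ | ∃ c : ℝ, r = sSup { s : ℝ | ∃ t ∈ Icc (0:ℝ) T,
    s = ∑' n : ℕ, (2 : ℝ)⁻¹ ^ (n + 1) *
      Real.sqrt (∫ x in Icc (-((n : ℝ) + 1)) ((n : ℝ) + 1),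
        (b1.b (t, x) - b2.b (t, x) + c) ^ 2) } }

/-- The metric `d_𝓑`. -/
def dB (T : ℝ) (b1 b2 : HJ T) : ℝ := dcU T b1.ux b2.ux + dConst T b1 b2

/-- The metric `d_𝒴`. -/
def dY (T : ℝ) (b1 b2 : HJ T) : ℝ := dX T b1.ux b2.ux + dConst T b1 b2

/-- The expression inside the supremum defining `J_ε`. -/
def JexprW (f D σ : ℝ → ℝ) (T ε : ℝ) (bb uxf w2 : ℝ × ℝ → ℝ) (φ : TTest T) : ℝ :=
  - pair T bb (ptF φ.toFun) + pair T (fun p => f (uxf p)) φ.toFun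
    - ε / 2 * pair T (fun p => D (uxf p) * w2 p) φ.toFun
    - 1 / 2 * pair T (fun p => σ (uxf p) * φ.toFun p) φ.toFun

/-- The cost functional `J_ε` on `𝓑`. -/
def Jeps (f D σ : ℝ → ℝ) (T ε : ℝ) (b : HJ T) : ℝ≥0∞ :=
  if hasDx T b.ux.toFun then
    ⨆ φ : TTest T, ENNReal.ofReal (JexprW f D σ T ε b.b b.ux.toFun (wDx T b.ux.toFun) φ)
  else ⊤

/-- The rescaled cost functional `K_ε := ε⁻¹ J_ε`. -/
def Keps (f D σ : ℝ → ℝ) (T ε : ℝ) (b : HJ T) : ℝ≥0∞ :=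
  ENNReal.ofReal ε⁻¹ * Jeps f D σ T ε b

/-- Weak solutions to `b_t + f(b_x) = 0`. -/
def HJWeakSol (f : ℝ → ℝ) (T : ℝ) (b : HJ T) : Prop :=
  ∀ φ : TTest T, - pair T b.b (ptF φ.toFun) + pair T (fun p => f (b.ux.toFun p)) φ.toFun = 0

/-- The compatibility condition `b_x = μ(ι)` defining `𝓐`. -/
def APred (T : ℝ) (bm : HJ T × YM T) : Prop :=
  ∀ᵐ p ∂(volume.restrict (Icc (0:ℝ) T ×ˢ (univ : Set ℝ))),
    bm.1.ux.toFun p = bm.2.mom (fun l => l) p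

/-- The metric `d_𝓐`. -/
def dA (T : ℝ) (dw : YM T → YM T → ℝ)
    (x y : { bm : HJ T × YM T // APred T bm }) : ℝ :=
  dB T x.1.1 y.1.1 + dM T dw x.1.2 y.1.2

/-- The lift `𝓙_ε` of `J_ε` to `𝓐`. -/
def calJeps (f D σ : ℝ → ℝ) (T ε : ℝ) (x : { bm : HJ T × YM T // APred T bm }) : ℝ≥0∞ :=
  if ∀ p, x.1.2.m p = Measure.dirac (x.1.1.ux.toFun p) then Jeps f D σ T ε x.1.1 else ⊤

/-- The limiting functional `𝓙` on `𝓐`. -/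
def calJ (f σ : ℝ → ℝ) (T : ℝ) (x : { bm : HJ T × YM T // APred T bm }) : ℝ≥0∞ :=
  ⨆ φ : TTest T, ENNReal.ofReal
    (- pair T x.1.1.b (ptF φ.toFun) + pair T (x.1.2.mom f) φ.toFun
      - 1 / 2 * pair T (fun p => x.1.2.mom σ p * φ.toFun p) φ.toFun)

/-! ### Jump sets and BV solutions -/

/-- The function `ρ(v, u⁺, u⁻)` of Remark 2.3. -/
def rhoJ (f : ℝ → ℝ) (v a b : ℝ) : ℝ :=
  if v ∈ Icc (min a b) (max a b) then
    f b * (a - v) + f a * (v - b) - f v * (a - b)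
  else 0

lemma integral_lin3 {α : Type*} [MeasurableSpace α] {μ : Measure α} {f g h : α → ℝ}
    (hf : Integrable f μ) (hg : Integrable g μ) (hh : Integrable h μ) (a b c : ℝ) :
    ∫ x, (a * f x + b * g x + c * h x) ∂μ
      = a * ∫ x, f x ∂μ + b * ∫ x, g x ∂μ + c * ∫ x, h x ∂μ := by
  have h1 : Integrable (fun x => a * f x + b * g x) μ := (hf.const_mul a).add (hg.const_mul b)
  rw [integral_add h1 (hh.const_mul c), integral_add (hf.const_mul a) (hg.const_mul b),
    integral_const_mul, integral_const_mul, integral_const_mul]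

/-! ### Mollification on `ℝ × ℝ` -/

/-- The bump function at the origin of `ℝ × ℝ` supported in the (sup-norm) ball of
radius `1 / (n + 1)`. -/
def bmp (n : ℕ) : ContDiffBump (0 : ℝ × ℝ) where
  rIn := 1 / (2 * ((n : ℝ) + 1))
  rOut := 1 / ((n : ℝ) + 1)
  rIn_pos := by positivity
  rIn_lt_rOut := by
    apply one_div_lt_one_div_of_lt
    · positivity
    · linarith [(Nat.cast_nonneg n : (0:ℝ) ≤ n)]

/-- The mollifying kernel: even, smooth, nonnegative and of total mass one. -/
def ker (n : ℕ) : ℝ × ℝ → ℝ := (bmp n).normed volume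

/-- Mollification `ker n * g`. -/
def J (n : ℕ) (g : ℝ × ℝ → ℝ) : ℝ × ℝ → ℝ :=
  convolution (ker n) g (ContinuousLinearMap.lsmul ℝ ℝ) volume

lemma ker_nonneg (n : ℕ) (p : ℝ × ℝ) : 0 ≤ ker n p := (bmp n).nonneg_normed p
lemma ker_contDiff (n : ℕ) {m : ℕ∞} : ContDiff ℝ m (ker n) := (bmp n).contDiff_normed
lemma ker_cont (n : ℕ) : Continuous (ker n) := (bmp n).continuous_normed
lemma ker_cpt (n : ℕ) : HasCompactSupport (ker n) := (bmp n).hasCompactSupport_normed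
lemma ker_int (n : ℕ) : ∫ p, ker n p = 1 := (bmp n).integral_normed
lemma ker_integrable (n : ℕ) : Integrable (ker n) := (bmp n).integrable_normed
lemma ker_neg (n : ℕ) (p : ℝ × ℝ) : ker n (-p) = ker n p := (bmp n).normed_neg p
lemma ker_supp (n : ℕ) : Function.support (ker n) = Metric.ball 0 (1 / ((n : ℝ) + 1)) :=
  (bmp n).support_normed_eq

lemma J_apply (n : ℕ) (g : ℝ × ℝ → ℝ) (p : ℝ × ℝ) : J n g p = ∫ q, ker n q * g (p - q) := rfl

lemma J_swap (n : ℕ) (g : ℝ × ℝ → ℝ) (p : ℝ × ℝ) : J n g p = ∫ q, ker n (p - q) * g q := by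
  unfold J
  rw [convolution_eq_swap]; rfl

lemma J_contDiff (n : ℕ) {g : ℝ × ℝ → ℝ} (hg : LocallyIntegrable g) {m : ℕ∞} :
    ContDiff ℝ m (J n g) :=
  (ker_cpt n).contDiff_convolution_left _ (ker_contDiff n) hg

lemma J_integrable (n : ℕ) {g : ℝ × ℝ → ℝ} (hg : LocallyIntegrable g) (p : ℝ × ℝ) :
    Integrable fun q => ker n q * g (p - q) :=
  (ker_cpt n).convolutionExists_left (ContinuousLinearMap.lsmul ℝ ℝ) (ker_cont n) hg p

lemma J_fderiv (n : ℕ) {g : ℝ × ℝ → ℝ} (hg : LocallyIntegrable g) (p v : ℝ × ℝ) :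
    fderiv ℝ (J n g) p v = ∫ q, fderiv ℝ (ker n) (p - q) v * g q := by
  have h := (ker_cpt n).hasFDerivAt_convolution_left (ContinuousLinearMap.lsmul ℝ ℝ)
    (ker_contDiff n (m := 1)) hg p
  have h2 : fderiv ℝ (J n g) p = _ := h.fderiv
  rw [h2, convolution_eq_swap, ContinuousLinearMap.integral_apply]
  · rfl
  · have := ((ker_cpt n).fderiv (𝕜 := ℝ)).convolutionExists_left
      ((ContinuousLinearMap.lsmul ℝ ℝ).precompL (ℝ × ℝ))
      ((ker_contDiff n (m := 1)).continuous_fderiv one_ne_zero) hg p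
    exact this.integrable_swap

lemma J_fderiv_smooth (n : ℕ) {G : ℝ × ℝ → ℝ} (hG : ContDiff ℝ 1 G) (hc : HasCompactSupport G)
    (p v : ℝ × ℝ) : fderiv ℝ (J n G) p v = J n (fun q => fderiv ℝ G q v) p := by
  have h := hc.hasFDerivAt_convolution_right (ContinuousLinearMap.lsmul ℝ ℝ)
    (ker_cont n).locallyIntegrable hG p (μ := volume)
  have h2 : fderiv ℝ (J n G) p = _ := h.fderiv
  rw [h2, convolution_precompR_apply _ (ker_cont n).locallyIntegrable (hc.fderiv (𝕜 := ℝ))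
    (hG.continuous_fderiv one_ne_zero)]
  rfl

lemma J_cpt (n : ℕ) {G : ℝ × ℝ → ℝ} (hc : HasCompactSupport G) : HasCompactSupport (J n G) :=
  HasCompactSupport.convolution _ (ker_cpt n) hc

lemma J_supp (n : ℕ) {G : ℝ × ℝ → ℝ} {p : ℝ × ℝ} (hp : J n G p ≠ 0) :
    ∃ q, dist p q < 1 / ((n : ℝ) + 1) ∧ G q ≠ 0 := by
  by_contra! h
  apply hp
  rw [J_swap]
  refine integral_eq_zero_of_ae (Eventually.of_forall fun q => ?_)
  by_cases hq : ker n (p - q) = 0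
  · simp [hq]
  · have : p - q ∈ Function.support (ker n) := hq
    rw [ker_supp, mem_ball_zero_iff, ← dist_eq_norm] at this
    simp [h q this]

lemma J_mem01 (n : ℕ) {g : ℝ × ℝ → ℝ} (h0 : ∀ p, g p ∈ Icc (0:ℝ) 1)
    (p : ℝ × ℝ) : J n g p ∈ Icc (0:ℝ) 1 := by
  rw [J_apply]
  constructor
  · exact integral_nonneg fun q => mul_nonneg (ker_nonneg n q) (h0 _).1
  · rw [← ker_int n]
    refine integral_mono_of_nonneg (Eventually.of_forall fun q =>
      mul_nonneg (ker_nonneg n q) (h0 _).1) (ker_integrable n) (Eventually.of_forall fun q => ?_)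
    exact mul_le_of_le_one_right (ker_nonneg n q) (h0 _).2

lemma J_abs_le (n : ℕ) {g : ℝ × ℝ → ℝ} {C : ℝ} {p : ℝ × ℝ}
    (h0 : ∀ q, dist p q < 1 / ((n : ℝ) + 1) → |g q| ≤ C) : |J n g p| ≤ C := by
  rw [J_apply]
  have : ∀ q, |ker n q * g (p - q)| ≤ ker n q * C := by
    intro q
    rw [abs_mul, abs_of_nonneg (ker_nonneg n q)]
    by_cases hq : ker n q = 0
    · simp [hq]
    · have : q ∈ Function.support (ker n) := hq
      rw [ker_supp, mem_ball_zero_iff] at this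
      exact mul_le_mul_of_nonneg_left (h0 _ (by simpa [dist_eq_norm] using this)) (ker_nonneg n q)
  calc _ ≤ ∫ q, ker n q * C := by
        rw [← Real.norm_eq_abs]
        exact norm_integral_le_of_norm_le ((ker_integrable n).mul_const C)
          (Eventually.of_forall this)
    _ = C := by rw [integral_mul_const, ker_int, one_mul]

/-- Mollification is self-adjoint, the kernel being even. -/
lemma J_adj (n : ℕ) {g G : ℝ × ℝ → ℝ} (hg : Measurable g) {C : ℝ} (hC : ∀ p, |g p| ≤ C)
    (hG : Integrable G) : ∫ p, g p * J n G p = ∫ p, J n g p * G p := by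
  have hi : Integrable (fun z : (ℝ × ℝ) × (ℝ × ℝ) => g z.1 * (ker n (z.1 - z.2) * G z.2))
      (volume.prod volume) := by
    have h1 : Integrable (fun z : (ℝ × ℝ) × (ℝ × ℝ) => ker n (z.1 - z.2) * G z.2)
        (volume.prod volume) := by
      have := hG.convolution_integrand (ContinuousLinearMap.lsmul ℝ ℝ) (ker_integrable n)
      refine this.congr (Eventually.of_forall fun z => ?_)
      simp [mul_comm]
    refine h1.bdd_mul (c := C) (hg.comp measurable_fst).aestronglyMeasurable
      (Eventually.of_forall fun z => by simpa using hC z.1)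
  have e1 : ∀ p, g p * J n G p = ∫ q, g p * (ker n (p - q) * G q) := by
    intro p; rw [J_swap, integral_const_mul]
  have e2 : ∀ q, J n g q * G q = ∫ p, g p * (ker n (p - q) * G q) := by
    intro q; rw [J_swap, ← integral_mul_const]
    refine integral_congr_ae (Eventually.of_forall fun p => ?_)
    have : ker n (q - p) = ker n (p - q) := by rw [← ker_neg, neg_sub]
    simp only [this]; ring
  simp_rw [e1, e2]
  exact integral_integral_swap hi

lemma J_memLp_sq (n : ℕ) {g : ℝ × ℝ → ℝ} (hg : MemLp g 2) :
    MemLp (J n g) 2 ∧ ∫ p, (J n g p) ^ 2 ≤ ∫ p, g p ^ 2 := by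
  have hl : LocallyIntegrable g := hg.locallyIntegrable (by norm_num)
  have hl2 : Integrable fun p => g p ^ 2 := hg.integrable_sq
  have hJ2 : Integrable (J n fun p => g p ^ 2) :=
    (ker_integrable n).integrable_convolution _ hl2
  have hle : ∀ p, (J n g p) ^ 2 ≤ J n (fun p => g p ^ 2) p := by
    intro p
    set m := J n g p with hm
    have i1 := J_integrable n hl p
    have i2 := J_integrable n hl2.locallyIntegrable p
    have h0 : 0 ≤ ∫ q, ker n q * (g (p - q) - m) ^ 2 :=
      integral_nonneg fun q => mul_nonneg (ker_nonneg n q) (sq_nonneg _)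
    have : (fun q => ker n q * (g (p - q) - m) ^ 2) = fun q =>
        1 * (ker n q * g (p - q) ^ 2) + (-2 * m) * (ker n q * g (p - q)) + m ^ 2 * ker n q := by
      funext q; ring
    rw [this, integral_lin3 i2 i1 (ker_integrable n), ker_int, ← J_apply n g p, ← hm] at h0
    have := J_apply n (fun p => g p ^ 2) p
    rw [← this] at h0
    nlinarith
  have hsq : Integrable fun p => (J n g p) ^ 2 := by
    refine hJ2.mono' ((J_contDiff n hl (m := 0)).continuous.pow 2).aestronglyMeasurable
      (Eventually.of_forall fun p => ?_)
    rw [Real.norm_of_nonneg (sq_nonneg _)]; exact hle p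
  refine ⟨(memLp_two_iff_integrable_sq
    (J_contDiff n hl (m := 0)).continuous.aestronglyMeasurable).2 hsq, ?_⟩
  calc _ ≤ ∫ p, J n (fun p => g p ^ 2) p := integral_mono hsq hJ2 hle
    _ = ∫ p, g p ^ 2 := by
      have := integral_convolution (ContinuousLinearMap.lsmul ℝ ℝ) (ker_integrable n) hl2
      rw [ker_int] at this
      simpa [J] using this

lemma J_sub (n : ℕ) {g h : ℝ × ℝ → ℝ} (hg : LocallyIntegrable g) (hh : LocallyIntegrable h) :
    J n (fun p => g p - h p) = fun p => J n g p - J n h p := by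
  funext p
  rw [J_apply, J_apply, J_apply, ← integral_sub (J_integrable n hg p) (J_integrable n hh p)]
  simp_rw [mul_sub]

lemma bmp_tendsto : Tendsto (fun n => (bmp n).rOut) atTop (𝓝 0) :=
  tendsto_one_div_add_atTop_nhds_zero_nat

lemma J_ae_tendsto {g : ℝ × ℝ → ℝ} (hg : LocallyIntegrable g) :
    ∀ᵐ p, Tendsto (fun n => J n g p) atTop (𝓝 (g p)) := by
  refine ContDiffBump.ae_convolution_tendsto_right_of_locallyIntegrable (K := 2) bmp_tendsto
    (Eventually.of_forall fun n => ?_) hg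
  simp only [bmp]
  field_simp; norm_num

/-- `ker n * g → g` in `L²`: by density it suffices to treat continuous compactly supported
functions, mollification being a contraction. -/
lemma J_tendsto_L2 {g : ℝ × ℝ → ℝ} (hg : MemLp g 2) :
    Tendsto (fun n => ∫ p, (J n g p - g p) ^ 2) atTop (𝓝 0) := by
  have cont_case : ∀ h : ℝ × ℝ → ℝ, Continuous h → HasCompactSupport h →
      Tendsto (fun n => ∫ p, (J n h p - h p) ^ 2) atTop (𝓝 0) := by
    intro h hc hs
    obtain ⟨C, hC⟩ := hc.bounded_above_of_compact_support hs
    have hC0 : 0 ≤ C := (norm_nonneg _).trans (hC 0)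
    have hK : IsCompact (Metric.cthickening 1 (tsupport h)) :=
      IsCompact.cthickening hs
    have : Tendsto (fun n => ∫ p, (J n h p - h p) ^ 2) atTop (𝓝 (∫ p : ℝ × ℝ, (0:ℝ))) := by
      refine tendsto_integral_of_dominated_convergence
        (fun p => (Metric.cthickening 1 (tsupport h)).indicator (fun _ => (2 * C) ^ 2) p) ?_ ?_ ?_ ?_
      · intro n
        exact (((J_contDiff n hc.locallyIntegrable (m := 0)).continuous.sub hc).pow
          2).aestronglyMeasurable
      · rw [integrable_indicator_iff hK.isClosed.measurableSet]
        exact integrableOn_const hK.measure_lt_top.ne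
      · intro n
        refine Eventually.of_forall fun p => ?_
        by_cases hp : p ∈ Metric.cthickening 1 (tsupport h)
        · rw [indicator_of_mem hp, Real.norm_of_nonneg (sq_nonneg _), ← sq_abs]
          have h1 : |J n h p| ≤ C := J_abs_le n fun q _ => hC q
          have h2 : |h p| ≤ C := hC p
          have := abs_sub (J n h p) (h p)
          exact pow_le_pow_left₀ (abs_nonneg _) (by linarith) 2
        · rw [indicator_of_notMem hp]
          have h2 : h p = 0 := by
            by_contra h0
            exact hp (Metric.self_subset_cthickening _ (subset_tsupport _ h0))
          have h1 : J n h p = 0 := by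
            by_contra h0
            obtain ⟨q, hq, hq0⟩ := J_supp n h0
            apply hp
            refine Metric.mem_cthickening_of_dist_le p q 1 _ (subset_tsupport _ hq0) (hq.le.trans ?_)
            rw [div_le_one (by positivity)]
            linarith [(Nat.cast_nonneg n : (0:ℝ) ≤ n)]
          simp [h1, h2]
      · filter_upwards [J_ae_tendsto hc.locallyIntegrable] with p hp
        have := (hp.sub_const (h p)).pow 2
        simpa using this
    simpa using this
  have hg' : MemLp g (ENNReal.ofReal 2) := by simpa using hg
  rw [Metric.tendsto_atTop]
  intro ε hε
  obtain ⟨h, hs, hle, hc, hL⟩ := hg'.exists_hasCompactSupport_integral_rpow_sub_le (by norm_num)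
    (show 0 < ε / 12 by positivity)
  have hL : MemLp h 2 := by simpa using hL
  have hle : ∫ p, (g p - h p) ^ 2 ≤ ε / 12 := by simpa using hle
  obtain ⟨N, hN⟩ := Metric.tendsto_atTop.1 (cont_case h hc hs) (ε / 6) (by positivity)
  refine ⟨N, fun n hn => ?_⟩
  have hN := hN n hn
  have nn : 0 ≤ ∫ p, (J n g p - g p) ^ 2 := integral_nonneg fun p => sq_nonneg _
  have nn2 : 0 ≤ ∫ p, (J n h p - h p) ^ 2 := integral_nonneg fun p => sq_nonneg _
  rw [Real.dist_eq, sub_zero, abs_of_nonneg nn2] at hN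
  rw [Real.dist_eq, sub_zero, abs_of_nonneg nn]
  have hd := J_memLp_sq n (hg.sub hL)
  have hlg := hg.locallyIntegrable (by norm_num : (1:ℝ≥0∞) ≤ 2)
  have hlh := hL.locallyIntegrable (by norm_num : (1:ℝ≥0∞) ≤ 2)
  have hsub : J n (g - h) = fun p => J n g p - J n h p := J_sub n hlg hlh
  rw [hsub] at hd
  have hJh := (J_memLp_sq n hL).1
  have i1 := hd.1.integrable_sq
  have i2 := (hJh.sub hL).integrable_sq
  have i3 := (hg.sub hL).integrable_sq
  have i0 := ((J_memLp_sq n hg).1.sub hg).integrable_sq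
  simp only [Pi.sub_apply] at i1 i2 i3 i0 hd
  calc ∫ p, (J n g p - g p) ^ 2
      ≤ ∫ p, (3 * (J n g p - J n h p) ^ 2 + 3 * (J n h p - h p) ^ 2 + 3 * (g p - h p) ^ 2) := by
        refine integral_mono i0 (((i1.const_mul 3).add (i2.const_mul 3)).add (i3.const_mul 3)) ?_
        intro p
        simp only
        nlinarith [sq_nonneg (J n g p - J n h p - (J n h p - h p)),
          sq_nonneg (J n g p - J n h p + (g p - h p)), sq_nonneg (J n h p - h p + (g p - h p))]
    _ = 3 * (∫ p, (J n g p - J n h p) ^ 2) + 3 * (∫ p, (J n h p - h p) ^ 2)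
        + 3 * ∫ p, (g p - h p) ^ 2 := by
        exact integral_lin3 i1 i2 i3 3 3 3
    _ < ε := by linarith [hd.2]

lemma J_congr (n : ℕ) {g h : ℝ × ℝ → ℝ} {p : ℝ × ℝ}
    (H : ∀ q, dist p q < 1 / ((n : ℝ) + 1) → g q = h q) : J n g p = J n h p := by
  rw [J_swap, J_swap]
  refine integral_congr_ae (Eventually.of_forall fun q => ?_)
  by_cases hq : ker n (p - q) = 0
  · simp [hq]
  · have : p - q ∈ Function.support (ker n) := hq
    rw [ker_supp, mem_ball_zero_iff, ← dist_eq_norm] at this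
    simp [H q this]

/-! ### `L²` convergence and convergence of integrals -/

lemma tendsto_integral_mul_of_L2 {α ι : Type*} [MeasurableSpace α] {μ : Measure α} {l : Filter ι}
    {ψ F : α → ℝ} {G : ι → α → ℝ} (hψ : MemLp ψ 2 μ) (hF : MemLp F 2 μ)
    (hG : ∀ᶠ i in l, MemLp (G i) 2 μ)
    (h : Tendsto (fun i => ∫ x, (G i x - F x) ^ 2 ∂μ) l (𝓝 0)) :
    Tendsto (fun i => ∫ x, ψ x * G i x ∂μ) l (𝓝 (∫ x, ψ x * F x ∂μ)) := by
  rw [Metric.tendsto_nhds]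
  intro ε hε
  set A := ∫ x, ψ x ^ 2 ∂μ
  have hA : 0 ≤ A := integral_nonneg fun x => sq_nonneg _
  set κ := ε / (2 * (A + 1))
  have hκ : 0 < κ := by positivity
  have hκA : κ * A < ε / 2 + ε / 4 * 0 := by
    have : κ * (A + 1) = ε / 2 := by simp only [κ]; field_simp
    nlinarith
  have h4 : 0 < ε * κ := by positivity
  filter_upwards [hG, (Metric.tendsto_nhds.1 h) (ε * κ) h4] with i hi hd
  have nn : 0 ≤ ∫ x, (G i x - F x) ^ 2 ∂μ := integral_nonneg fun x => sq_nonneg _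
  rw [Real.dist_eq, sub_zero, abs_of_nonneg nn] at hd
  have i1 : Integrable (fun x => ψ x * G i x) μ := hψ.integrable_mul hi
  have i2 : Integrable (fun x => ψ x * F x) μ := hψ.integrable_mul hF
  have i3 := hψ.integrable_sq
  have i4 : Integrable (fun x => (G i x - F x) ^ 2) μ := (hi.sub hF).integrable_sq
  rw [Real.dist_eq, ← integral_sub i1 i2, ← Real.norm_eq_abs]
  have hb : Integrable (fun x => κ * ψ x ^ 2 + 1 / (4 * κ) * (G i x - F x) ^ 2) μ :=
    (i3.const_mul _).add (i4.const_mul _)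
  calc _ ≤ ∫ x, (κ * ψ x ^ 2 + 1 / (4 * κ) * (G i x - F x) ^ 2) ∂μ := by
        refine norm_integral_le_of_norm_le hb (Eventually.of_forall fun x => ?_)
        rw [← mul_sub, Real.norm_eq_abs, abs_le]
        set a := ψ x
        set b := G i x - F x
        have e : κ * a ^ 2 + 1 / (4 * κ) * b ^ 2 - a * b = κ * (a - b / (2 * κ)) ^ 2 := by
          field_simp; ring
        have e' : κ * a ^ 2 + 1 / (4 * κ) * b ^ 2 + a * b = κ * (a + b / (2 * κ)) ^ 2 := by
          field_simp; ring
        have p1 : 0 ≤ κ * (a - b / (2 * κ)) ^ 2 := by positivity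
        have p2 : 0 ≤ κ * (a + b / (2 * κ)) ^ 2 := by positivity
        constructor <;> linarith
    _ = κ * A + 1 / (4 * κ) * ∫ x, (G i x - F x) ^ 2 ∂μ := by
        rw [integral_add (i3.const_mul _) (i4.const_mul _), integral_const_mul,
          integral_const_mul]
    _ < ε := by
        have : 1 / (4 * κ) * ∫ x, (G i x - F x) ^ 2 ∂μ ≤ 1 / (4 * κ) * (ε * κ) := by gcongr
        have e : 1 / (4 * κ) * (ε * κ) = ε / 4 := by field_simp
        linarith

lemma tendsto_integral_sq_of_L2 {α ι : Type*} [MeasurableSpace α] {μ : Measure α} {l : Filter ι}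
    {F : α → ℝ} {G : ι → α → ℝ} (hF : MemLp F 2 μ)
    (hG : ∀ᶠ i in l, MemLp (G i) 2 μ)
    (h : Tendsto (fun i => ∫ x, (G i x - F x) ^ 2 ∂μ) l (𝓝 0)) :
    Tendsto (fun i => ∫ x, G i x ^ 2 ∂μ) l (𝓝 (∫ x, F x ^ 2 ∂μ)) := by
  have h1 := tendsto_integral_mul_of_L2 hF hF hG h
  have h2 := (h.add (h1.const_mul 2)).sub_const (∫ x, F x * F x ∂μ)
  have e : (0 + 2 * ∫ x, F x * F x ∂μ) - ∫ x, F x * F x ∂μ = ∫ x, F x ^ 2 ∂μ := by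
    simp_rw [pow_two]; ring
  rw [e] at h2
  refine h2.congr' ?_
  filter_upwards [hG] with i hi
  have i1 : Integrable (fun x => F x * G i x) μ := hF.integrable_mul hi
  have i2 : Integrable (fun x => F x * F x) μ := hF.integrable_mul hF
  have i4 : Integrable (fun x => (G i x - F x) ^ 2) μ := (hi.sub hF).integrable_sq
  have := integral_lin3 i4 i1 i2 1 2 (-1)
  have e2 : (fun x => 1 * (G i x - F x) ^ 2 + 2 * (F x * G i x) + -1 * (F x * F x))
      = fun x => G i x ^ 2 := by funext x; ring
  rw [e2] at this
  rw [this]; ring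

/-! ### Functions of `u`, boxes, test functions -/

lemma comp_meas {g : ℝ → ℝ} (hg : ContinuousOn g (Icc 0 1)) {u : ℝ × ℝ → ℝ} (hu : Measurable u)
    (h0 : ∀ p, u p ∈ Icc (0:ℝ) 1) : Measurable fun p => g (u p) := by
  have h1 : Continuous (IccExtend (zero_le_one (α := ℝ)) ((Icc (0:ℝ) 1).domRestrict g)) :=
    (continuousOn_iff_continuous_domRestrict.1 hg).Icc_extend'
  have : (fun p => g (u p)) =
      fun p => IccExtend (zero_le_one (α := ℝ)) ((Icc (0:ℝ) 1).domRestrict g) (u p) := by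
    funext p
    rw [IccExtend_of_mem _ _ (h0 p)]; rfl
  rw [this]
  exact h1.measurable.comp hu

lemma bdd01 {g : ℝ → ℝ} (hg : ContinuousOn g (Icc 0 1)) :
    ∃ C > 0, ∀ v ∈ Icc (0:ℝ) 1, |g v| ≤ C := by
  obtain ⟨C, hC⟩ := isCompact_Icc.exists_bound_of_continuousOn hg
  exact ⟨|C| + 1, by positivity, fun v hv => (hC v hv).trans (by linarith [le_abs_self C])⟩

/-- The space-time box `[0,T] × [-R,R]`. -/
def Kb (T R : ℝ) : Set (ℝ × ℝ) := Icc (0:ℝ) T ×ˢ Icc (-R) R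

lemma Kb_cpt (T R : ℝ) : IsCompact (Kb T R) := isCompact_Icc.prod isCompact_Icc
lemma Kb_meas (T R : ℝ) : MeasurableSet (Kb T R) := (Kb_cpt T R).measurableSet
lemma Kb_fin (T R : ℝ) : volume (Kb T R) ≠ ⊤ := (Kb_cpt T R).measure_lt_top.ne

lemma indK_memLp {T R : ℝ} (hR : 0 < R) {w : ℝ × ℝ → ℝ} (hw : L2loc T w) :
    MemLp ((Kb T R).indicator w) 2 := by
  rw [memLp_indicator_iff_restrict (Kb_meas T R),
    memLp_two_iff_integrable_sq hw.1.aestronglyMeasurable]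
  exact hw.2 R hR

lemma indK_memLp_bdd {T R : ℝ} {w : ℝ × ℝ → ℝ} (hw : Measurable w) {C : ℝ}
    (hC : ∀ p, |w p| ≤ C) : MemLp ((Kb T R).indicator w) 2 := by
  rw [memLp_indicator_iff_restrict (Kb_meas T R)]
  have : IsFiniteMeasure (volume.restrict (Kb T R)) :=
    isFiniteMeasure_restrict.2 (Kb_fin T R)
  exact MemLp.of_bound hw.aestronglyMeasurable C (Eventually.of_forall hC)

lemma pair_eq {T : ℝ} {g h : ℝ × ℝ → ℝ} (H : ∀ p : ℝ × ℝ, p.1 ∉ Icc (0:ℝ) T → h p = 0) :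
    pair T g h = ∫ p, g p * h p := by
  unfold pair
  refine setIntegral_eq_integral_of_forall_compl_eq_zero fun p hp => ?_
  rw [H p (fun h' => hp ⟨h', mem_univ _⟩), mul_zero]

lemma TTest.zero_off {T : ℝ} (φ : TTest T) (p : ℝ × ℝ) (hp : p.1 ∉ Icc (0:ℝ) T) :
    φ.toFun p = 0 ∧ fderiv ℝ φ.toFun p = 0 := by
  have hcl : tsupport φ.toFun ⊆ Icc (0:ℝ) T ×ˢ (univ : Set ℝ) := by
    refine closure_minimal (φ.supp.trans ?_) (isClosed_Icc.prod isClosed_univ)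
    exact prod_mono Ioo_subset_Icc_self le_rfl
  have hn : p ∉ tsupport φ.toFun := fun h => hp (hcl h).1
  exact ⟨image_eq_zero_of_notMem_tsupport hn, fderiv_of_notMem_tsupport ℝ hn⟩

lemma TTest.exists_box {T : ℝ} (φ : TTest T) : ∃ R > 0, ∀ p ∉ Kb T R,
    φ.toFun p = 0 ∧ fderiv ℝ φ.toFun p = 0 := by
  obtain ⟨R, hR⟩ := φ.cpt.isBounded.subset_closedBall (0 : ℝ × ℝ)
  refine ⟨|R| + 1, by positivity, fun p hp => ?_⟩
  by_cases h1 : p.1 ∈ Icc (0:ℝ) T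
  · have hn : p ∉ tsupport φ.toFun := by
      intro h
      have h2 := hR h
      rw [mem_closedBall_zero_iff] at h2
      have h3 : |p.2| ≤ R := (norm_snd_le p).trans h2
      apply hp
      refine ⟨h1, abs_le.1 (h3.trans ?_)⟩
      linarith [le_abs_self R]
    exact ⟨image_eq_zero_of_notMem_tsupport hn, fderiv_of_notMem_tsupport ℝ hn⟩
  · exact φ.zero_off p h1

lemma pair_px {T : ℝ} (φ : TTest T) (g : ℝ × ℝ → ℝ) :
    pair T g (pxF φ.toFun) = ∫ p, g p * pxF φ.toFun p :=
  pair_eq fun p hp => by simp [pxF, (φ.zero_off p hp).2]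

lemma pair_pt {T : ℝ} (φ : TTest T) (g : ℝ × ℝ → ℝ) :
    pair T g (ptF φ.toFun) = ∫ p, g p * ptF φ.toFun p :=
  pair_eq fun p hp => by simp [ptF, (φ.zero_off p hp).2]

lemma pair_id {T : ℝ} (φ : TTest T) (g : ℝ × ℝ → ℝ) :
    pair T g φ.toFun = ∫ p, g p * φ.toFun p :=
  pair_eq fun p hp => (φ.zero_off p hp).1

lemma px_cont {G : ℝ × ℝ → ℝ} (hG : ContDiff ℝ 1 G) : Continuous (pxF G) :=
  (hG.continuous_fderiv one_ne_zero).clm_apply continuous_const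

lemma pt_cont {G : ℝ × ℝ → ℝ} (hG : ContDiff ℝ 1 G) : Continuous (ptF G) :=
  (hG.continuous_fderiv one_ne_zero).clm_apply continuous_const

lemma px_cpt {G : ℝ × ℝ → ℝ} (hG : HasCompactSupport G) : HasCompactSupport (pxF G) :=
  hG.fderiv_apply (𝕜 := ℝ) (0, 1)

lemma pt_cpt {G : ℝ × ℝ → ℝ} (hG : HasCompactSupport G) : HasCompactSupport (ptF G) :=
  hG.fderiv_apply (𝕜 := ℝ) (1, 0)

/-- Away from the time boundary, the mollification of `u` is differentiable in `x` with derivative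
the mollification of the weak derivative. -/
lemma J_weak {T R : ℝ} {u w : ℝ × ℝ → ℝ} (hu : LocallyIntegrable u)
    (h : HasWeakDx T u w) (n : ℕ) {p : ℝ × ℝ} (h1 : 1 / ((n : ℝ) + 1) ≤ p.1)
    (h2 : p.1 ≤ T - 1 / ((n : ℝ) + 1)) (h3 : |p.2| ≤ R) :
    pxF (J n u) p = J n ((Kb T (R + 1)).indicator w) p := by
  have hd : ∀ q, ker n (p - q) ≠ 0 → |p.1 - q.1| < 1 / ((n : ℝ) + 1) ∧
      |p.2 - q.2| < 1 / ((n : ℝ) + 1) := by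
    intro q hq
    have : p - q ∈ Function.support (ker n) := hq
    rw [ker_supp, mem_ball_zero_iff] at this
    exact ⟨(norm_fst_le (p - q)).trans_lt this, (norm_snd_le (p - q)).trans_lt this⟩
  let φ : TTest T :=
    { toFun := fun q => ker n (p - q)
      smooth := (ker_contDiff n).comp (contDiff_const.sub contDiff_id)
      cpt := (ker_cpt n).comp_homeomorph (Homeomorph.subLeft p)
      supp := by
        intro q hq
        have := (hd q hq).1
        rw [abs_lt] at this
        exact ⟨⟨by linarith, by linarith⟩, mem_univ _⟩ }
  have hpx : ∀ q, pxF φ.toFun q = - fderiv ℝ (ker n) (p - q) (0, 1) := by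
    intro q
    have hk : HasFDerivAt (ker n) (fderiv ℝ (ker n) (p - q)) (p - q) :=
      ((ker_contDiff n (m := 1)).differentiable one_ne_zero _).hasFDerivAt
    have := hk.comp q ((hasFDerivAt_id q).const_sub p)
    have e : fderiv ℝ φ.toFun q = _ := this.fderiv
    simp only [pxF, e]
    simp
  have key := h φ
  rw [pair_px, pair_id] at key
  have e1 : pxF (J n u) p = - ∫ q, u q * pxF φ.toFun q := by
    rw [pxF, J_fderiv n hu, ← integral_neg]
    refine integral_congr_ae (Eventually.of_forall fun q => ?_)
    simp only [hpx]; ring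
  rw [e1, key, neg_neg, J_swap]
  refine integral_congr_ae (Eventually.of_forall fun q => ?_)
  change w q * ker n (p - q) = ker n (p - q) * _
  by_cases hq : ker n (p - q) = 0
  · simp [hq]
  · have hq' := hd q hq
    have hn : 1 / ((n : ℝ) + 1) ≤ 1 := by
      rw [div_le_one (by positivity)]
      linarith [(Nat.cast_nonneg n : (0:ℝ) ≤ n)]
    rw [abs_lt, abs_lt] at hq'
    rw [abs_le] at h3
    have hm : q ∈ Kb T (R + 1) :=
      ⟨⟨by linarith, by linarith⟩, ⟨by linarith, by linarith⟩⟩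
    rw [indicator_of_mem hm, mul_comm]

/-! ### Testing with the function itself -/

lemma fderiv_mul_dir {a b : ℝ × ℝ → ℝ} (ha : ContDiff ℝ 1 a) (hb : ContDiff ℝ 1 b)
    (p v : ℝ × ℝ) : fderiv ℝ (fun q => a q * b q) p v
      = fderiv ℝ a p v * b p + a p * fderiv ℝ b p v := by
  have h1 := (ha.differentiable one_ne_zero p).hasFDerivAt
  have h2 := (hb.differentiable one_ne_zero p).hasFDerivAt
  have h3 : HasFDerivAt (fun q => a q * b q) _ p := h1.mul h2
  rw [h3.fderiv]
  simp; ring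

lemma cU.locInt {T : ℝ} (u : cU T) : LocallyIntegrable u.toFun := by
  refine (locallyIntegrable_const (1:ℝ)).mono u.meas.aestronglyMeasurable
    (Eventually.of_forall fun p => ?_)
  rw [Real.norm_eq_abs, abs_of_nonneg (u.mem01 p).1]
  simpa using (u.mem01 p).2

lemma cU.abs_le {T : ℝ} (u : cU T) (p : ℝ × ℝ) : |u.toFun p| ≤ 1 := by
  rw [abs_of_nonneg (u.mem01 p).1]; exact (u.mem01 p).2

lemma memLp_locInt {g : ℝ × ℝ → ℝ} (hg : MemLp g 2) : LocallyIntegrable g :=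
  hg.locallyIntegrable (by norm_num)

lemma integral_ind {s : Set (ℝ × ℝ)} {g h : ℝ × ℝ → ℝ} (H : ∀ p ∉ s, h p = 0) :
    ∫ p, g p * h p = ∫ p, s.indicator g p * h p := by
  congr 1; funext p
  by_cases hp : p ∈ s
  · simp [hp]
  · simp [H p hp]

lemma bdd_of_cpt {a : ℝ × ℝ → ℝ} (ha : Continuous a) (hc : HasCompactSupport a) :
    ∃ C > 0, ∀ p, |a p| ≤ C := by
  obtain ⟨C, hC⟩ := ha.bounded_above_of_compact_support hc
  exact ⟨|C| + 1, by positivity, fun v => (hC v).trans (by linarith [le_abs_self C])⟩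

/-- Dominated convergence: a bounded sequence converging a.e. converges in `L²` with a
compactly supported continuous weight. -/
lemma weighted_L2 {ι : Type*} {l : Filter ι} [l.IsCountablyGenerated] {a : ℝ × ℝ → ℝ}
    (ha : Continuous a) (hc : HasCompactSupport a)
    {g : ι → ℝ × ℝ → ℝ} {g₀ : ℝ × ℝ → ℝ} {C : ℝ} (hgm : ∀ i, Measurable (g i))
    (hg0 : Measurable g₀)
    (hb : ∀ i p, |g i p| ≤ C) (hb0 : ∀ p, |g₀ p| ≤ C)
    (hlim : ∀ᵐ p, Tendsto (fun i => g i p) l (𝓝 (g₀ p))) :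
    Tendsto (fun i => ∫ p, (a p * (g i p - g₀ p)) ^ 2) l (𝓝 0) := by
  have hi : Integrable fun p => a p ^ 2 * (2 * C) ^ 2 := by
    apply Integrable.mul_const
    exact (ha.pow 2).integrable_of_hasCompactSupport (by
      simpa only [pow_two] using hc.mul_right (f' := a))
  have := tendsto_integral_filter_of_dominated_convergence (l := l) (μ := volume)
    (F := fun i p => (a p * (g i p - g₀ p)) ^ 2) (f := fun _ => (0:ℝ)) _
    (Eventually.of_forall fun i => ((ha.measurable.mul
      ((hgm i).sub hg0)).pow_const 2).aestronglyMeasurable)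
    (Eventually.of_forall fun i => Eventually.of_forall fun p => ?_) hi ?_
  · simpa using this
  · rw [Real.norm_eq_abs, abs_of_nonneg (sq_nonneg _), mul_pow]
    gcongr ?_ * ?_
    apply sq_le_sq'
    · linarith [abs_le.1 (hb i p), abs_le.1 (hb0 p), (abs_le.1 (hb i p)).1, (abs_le.1 (hb0 p)).2]
    · linarith [(abs_le.1 (hb i p)).2, (abs_le.1 (hb0 p)).1]
  · filter_upwards [hlim] with p hp
    have := ((hp.sub_const (g₀ p)).const_mul (a p)).pow 2
    simpa using this

lemma J_meas (n : ℕ) {g : ℝ × ℝ → ℝ} (hg : LocallyIntegrable g) : Measurable (J n g) :=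
  ((J_contDiff n hg (m := 0)).continuous).measurable

lemma integral_sq_add_le {a b : ℝ × ℝ → ℝ} (ha : MemLp a 2) (hb : MemLp b 2) :
    ∫ p, (a p + b p) ^ 2 ≤ 2 * (∫ p, a p ^ 2) + 2 * ∫ p, b p ^ 2 := by
  rw [← integral_const_mul, ← integral_const_mul, ← integral_add (ha.integrable_sq.const_mul _)
    (hb.integrable_sq.const_mul _)]
  refine integral_mono (ha.add hb).integrable_sq
    ((ha.integrable_sq.const_mul _).add (hb.integrable_sq.const_mul _)) fun p => ?_
  simp only
  nlinarith [sq_nonneg (a p - b p)]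

lemma memLp_cpt_mul {a : ℝ × ℝ → ℝ} (ha : Continuous a) (hc : HasCompactSupport a)
    {g : ℝ × ℝ → ℝ} (hg : MemLp g 2) : MemLp (fun p => a p * g p) 2 := by
  obtain ⟨C, hC, h⟩ := bdd_of_cpt ha hc
  refine MemLp.of_le_mul (c := C) hg
    (ha.aestronglyMeasurable.mul hg.aestronglyMeasurable) (Eventually.of_forall fun p => ?_)
  rw [norm_mul]
  gcongr
  exact h p

lemma memLp_cpt_mul_bdd {a : ℝ × ℝ → ℝ} (ha : Continuous a) (hc : HasCompactSupport a)
    {g : ℝ × ℝ → ℝ} (hg : Measurable g) {C : ℝ} (hC : ∀ p, |g p| ≤ C) :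
    MemLp (fun p => a p * g p) 2 := by
  have h2 : MemLp a 2 := ha.memLp_of_hasCompactSupport hc
  refine MemLp.of_le_mul (c := C) h2
    (ha.aestronglyMeasurable.mul hg.aestronglyMeasurable) (Eventually.of_forall fun p => ?_)
  rw [norm_mul, mul_comm]
  gcongr
  exact hC p

/-- Support condition for space-time cutoffs: `χ` lives in
`(1/(m+1), T - 1/(m+1)) × [-R, R]`. -/
def CutSupp (T R : ℝ) (m : ℕ) (χ : ℝ × ℝ → ℝ) : Prop :=
  ∀ p, χ p ≠ 0 → 1 / ((m:ℝ) + 1) < p.1 ∧ p.1 < T - 1 / ((m:ℝ) + 1) ∧ |p.2| ≤ R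

lemma CutSupp.fderiv_zero {T R : ℝ} {m : ℕ} {χ : ℝ × ℝ → ℝ} (hs : CutSupp T R m χ)
    {p : ℝ × ℝ} (hp : p ∉ Kb T R) : fderiv ℝ χ p = 0 := by
  have hcl : tsupport χ ⊆ Kb T R := by
    refine closure_minimal (fun q hq => ?_) (Kb_cpt T R).isClosed
    obtain ⟨h1, h2, h3⟩ := hs q hq
    have : (0:ℝ) < 1 / ((m:ℝ) + 1) := by positivity
    exact ⟨⟨by linarith, by linarith⟩, abs_le.1 h3⟩
  exact fderiv_of_notMem_tsupport ℝ fun h => hp (hcl h)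

lemma CutSupp.zero {T R : ℝ} {m : ℕ} {χ : ℝ × ℝ → ℝ} (hs : CutSupp T R m χ)
    {p : ℝ × ℝ} (hp : p ∉ Kb T R) : χ p = 0 := by
  by_contra hq
  obtain ⟨h1, h2, h3⟩ := hs p hq
  have : (0:ℝ) < 1 / ((m:ℝ) + 1) := by positivity
  exact hp ⟨⟨by linarith, by linarith⟩, abs_le.1 h3⟩

lemma Kb_mono {T R R' : ℝ} (h : R ≤ R') : Kb T R ⊆ Kb T R' :=
  prod_mono le_rfl (Icc_subset_Icc (neg_le_neg h) h)

/-- The test function `J_n (χ v)`, for `n ≥ m`. -/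
def mollTest {T R : ℝ} {m : ℕ} {χ : ℝ × ℝ → ℝ} (hs : CutSupp T R m χ)
    (hχ : ContDiff ℝ (⊤ : ℕ∞) χ) (hχc : HasCompactSupport χ) {v : ℝ × ℝ → ℝ}
    (hv : ContDiff ℝ (⊤ : ℕ∞) v) (n : ℕ) (hn : m ≤ n) : TTest T where
  toFun := J n fun p => χ p * v p
  smooth := J_contDiff n (hχ.continuous.mul hv.continuous).locallyIntegrable
  cpt := J_cpt n hχc.mul_right
  supp := by
    intro p hp
    obtain ⟨q, hq, hG⟩ := J_supp n hp
    obtain ⟨h1, h2, h3⟩ := hs q (left_ne_zero_of_mul hG)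
    have h4 : 1 / ((n:ℝ) + 1) ≤ 1 / ((m:ℝ) + 1) := by gcongr
    have h5 : |p.1 - q.1| < 1 / ((n:ℝ) + 1) :=
      lt_of_le_of_lt (by rw [← Real.dist_eq, Prod.dist_eq]; exact le_max_left _ _) hq
    rw [abs_lt] at h5
    exact ⟨⟨by linarith [h5.1], by linarith [h5.2]⟩, mem_univ _⟩

lemma J_time {T : ℝ} (u : cU T) {χ : ℝ × ℝ → ℝ} (hχ : ContDiff ℝ (⊤ : ℕ∞) χ)
    (hχc : HasCompactSupport χ) (n : ℕ) :
    ∫ p, u.toFun p * ptF (J n fun q => χ q * J n u.toFun q) p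
      = 1 / 2 * ∫ p, ptF χ p * J n u.toFun p ^ 2 := by
  have hv : ContDiff ℝ 1 (J n u.toFun) := J_contDiff n u.locInt (m := 1)
  have hχ1 : ContDiff ℝ 1 χ := hχ.of_le (by exact_mod_cast le_top)
  set v := J n u.toFun
  have hG : ContDiff ℝ 1 (fun q => χ q * v q) := hχ1.mul hv
  have hGc : HasCompactSupport (fun q => χ q * v q) := hχc.mul_right
  have e1 : ∀ p, ptF (J n fun q => χ q * v q) p = J n (ptF fun q => χ q * v q) p :=
    fun p => J_fderiv_smooth n hG hGc p (1, 0)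
  simp_rw [e1]
  rw [J_adj n u.meas u.abs_le ((pt_cont hG).integrable_of_hasCompactSupport (pt_cpt hGc))]
  change ∫ p, v p * ptF (fun q => χ q * v q) p = _
  have i1 : Integrable (fun p => ptF χ p * v p ^ 2) :=
    ((pt_cont hχ1).mul (hv.continuous.pow 2)).integrable_of_hasCompactSupport
      (pt_cpt hχc).mul_right
  have i2 : Integrable (fun p => (χ p * v p) * ptF v p) :=
    ((hχ1.continuous.mul hv.continuous).mul (pt_cont hv)).integrable_of_hasCompactSupport
      hGc.mul_right
  have i3 : Integrable (fun p => ptF (fun q => χ q * v q) p * v p) :=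
    ((pt_cont hG).mul hv.continuous).integrable_of_hasCompactSupport
      (pt_cpt hGc).mul_right
  have i4 : Integrable (fun p => (χ p * v p) * v p) :=
    (hG.continuous.mul hv.continuous).integrable_of_hasCompactSupport hGc.mul_right
  have ibp : ∫ p, (χ p * v p) * ptF v p = - ∫ p, ptF (fun q => χ q * v q) p * v p :=
    integral_mul_fderiv_eq_neg_fderiv_mul_of_integrable i3 i2 i4
      (fun p _ => hG.differentiable one_ne_zero p) (fun p _ => hv.differentiable one_ne_zero p)
  have e2 : ∫ p, ptF (fun q => χ q * v q) p * v p
      = (∫ p, ptF χ p * v p ^ 2) + ∫ p, (χ p * v p) * ptF v p := by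
    rw [← integral_add i1 i2]
    congr 1; funext p
    rw [ptF, fderiv_mul_dir hχ1 hv]
    simp only [ptF]; ring
  have e3 : ∫ p, v p * ptF (fun q => χ q * v q) p = ∫ p, ptF (fun q => χ q * v q) p * v p := by
    congr 1; funext p; ring
  rw [e3]; linarith

lemma J_px {T R : ℝ} {m : ℕ} {χ : ℝ × ℝ → ℝ} (hs : CutSupp T R m χ)
    (hχ : ContDiff ℝ (⊤ : ℕ∞) χ) {u w : ℝ × ℝ → ℝ} (hu : LocallyIntegrable u)
    (hwd : HasWeakDx T u w) (n : ℕ) (hn : m ≤ n) (p : ℝ × ℝ) :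
    pxF (fun q => χ q * J n u q) p
      = pxF χ p * J n u p + χ p * J n ((Kb T (R + 1)).indicator w) p := by
  have hv : ContDiff ℝ 1 (J n u) := J_contDiff n hu (m := 1)
  have hχ1 : ContDiff ℝ 1 χ := hχ.of_le (by exact_mod_cast le_top)
  rw [pxF, fderiv_mul_dir hχ1 hv]
  by_cases hp : χ p = 0
  · simp [hp, pxF]
  · obtain ⟨h1, h2, h3⟩ := hs p hp
    have h4 : 1 / ((n:ℝ) + 1) ≤ 1 / ((m:ℝ) + 1) := by gcongr
    rw [← J_weak hu hwd n (by linarith) (by linarith) h3]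
    rfl

/-- Energy inequality: the value of the functional on `χ u`, obtained as the limit of its values on
`J_n (χ J_n u)`, with `σ` replaced by its bound `Cs`. -/
lemma energy {f D σ : ℝ → ℝ} {T ε : ℝ} (hf : ContinuousOn f (Icc 0 1))
    (hD : ContinuousOn D (Icc 0 1)) (hσ : ContinuousOn σ (Icc 0 1)) {Cs : ℝ}
    (hCs : ∀ v ∈ Icc (0:ℝ) 1, |σ v| ≤ Cs) (u : cU T) {w : ℝ × ℝ → ℝ} (hw : L2loc T w)
    (hwd : HasWeakDx T u.toFun w) {M : ℝ} (hM : ∀ φ, IexprW f D σ T ε u.toFun w φ ≤ M)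
    {χ : ℝ × ℝ → ℝ} (hχ : ContDiff ℝ (⊤ : ℕ∞) χ) (hχc : HasCompactSupport χ) {m : ℕ} {R : ℝ}
    (hR : 0 < R) (hs : CutSupp T R m χ) :
    Integrable (fun p => ptF χ p * u.toFun p ^ 2) ∧
    Integrable (fun p => f (u.toFun p) * (pxF χ p * u.toFun p + χ p * w p)) ∧
    Integrable (fun p => D (u.toFun p) * w p * (pxF χ p * u.toFun p + χ p * w p)) ∧
    Integrable (fun p => (pxF χ p * u.toFun p + χ p * w p) ^ 2) ∧
    -(1 / 2 * ∫ p, ptF χ p * u.toFun p ^ 2)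
      - (∫ p, f (u.toFun p) * (pxF χ p * u.toFun p + χ p * w p))
      + ε / 2 * (∫ p, D (u.toFun p) * w p * (pxF χ p * u.toFun p + χ p * w p))
      - 1 / 2 * (Cs * ∫ p, (pxF χ p * u.toFun p + χ p * w p) ^ 2) ≤ M := by
  have hχ1 : ContDiff ℝ 1 χ := hχ.of_le (by exact_mod_cast le_top)
  set K := Kb T (R + 1)
  have hKK : Kb T R ⊆ K := Kb_mono (by linarith)
  set w' := K.indicator w
  have hw' : MemLp w' 2 := indK_memLp (by linarith) hw
  set h : ℝ × ℝ → ℝ := fun p => pxF χ p * u.toFun p + χ p * w' p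
  have hh : ∀ p, pxF χ p * u.toFun p + χ p * w p = h p := by
    intro p
    by_cases hp : p ∈ K
    · simp [h, w', hp]
    · simp [h, w', hp, hs.zero (fun h' => hp (hKK h'))]
  simp_rw [hh]
  have h0 : ∀ p ∉ K, h p = 0 := by
    intro p hp
    have hp' : p ∉ Kb T R := fun h' => hp (hKK h')
    simp [h, hs.zero hp', pxF, hs.fderiv_zero hp']
  have mh1 : MemLp (fun p => pxF χ p * u.toFun p) 2 :=
    memLp_cpt_mul_bdd (px_cont hχ1) (px_cpt hχc) u.meas u.abs_le
  have mh2 : MemLp (fun p => χ p * w' p) 2 := memLp_cpt_mul hχ.continuous hχc hw'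
  have mh : MemLp h 2 := mh1.add mh2
  -- the functions `∂ₓ (χ J_n u)`
  set hn : ℕ → ℝ × ℝ → ℝ := fun n p => pxF χ p * J n u.toFun p + χ p * J n w' p
  have Jab : ∀ n p, |J n u.toFun p| ≤ 1 := fun n p => J_abs_le n fun q _ => u.abs_le q
  have Jm : ∀ n, Measurable (J n u.toFun) := fun n => J_meas n u.locInt
  have mhn : ∀ n, MemLp (hn n) 2 := fun n =>
    (memLp_cpt_mul_bdd (px_cont hχ1) (px_cpt hχc) (Jm n) (Jab n)).add
      (memLp_cpt_mul hχ.continuous hχc (J_memLp_sq n hw').1)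
  obtain ⟨C, hC, hχC⟩ := bdd_of_cpt hχ.continuous hχc
  have lim1 : Tendsto (fun n => ∫ p, (pxF χ p * (J n u.toFun p - u.toFun p)) ^ 2) atTop (𝓝 0) :=
    weighted_L2 (px_cont hχ1) (px_cpt hχc) Jm u.meas Jab u.abs_le (J_ae_tendsto u.locInt)
  have lim2 := J_tendsto_L2 hw'
  have lim3 : Tendsto (fun n => ∫ p, (hn n p - h p) ^ 2) atTop (𝓝 0) := by
    have hlim : Tendsto (fun n => 2 * (∫ p, (pxF χ p * (J n u.toFun p - u.toFun p)) ^ 2)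
        + 2 * (C ^ 2 * ∫ p, (J n w' p - w' p) ^ 2)) atTop (𝓝 0) := by
      simpa using (lim1.const_mul 2).add ((lim2.const_mul (C ^ 2)).const_mul 2)
    refine squeeze_zero (fun n => integral_nonneg fun p => sq_nonneg _) (fun n => ?_) hlim
    have m1 : MemLp (fun p => pxF χ p * (J n u.toFun p - u.toFun p)) 2 :=
      memLp_cpt_mul_bdd (px_cont hχ1) (px_cpt hχc) ((Jm n).sub u.meas) (C := 2) fun p =>
        (abs_sub _ _).trans (by linarith [Jab n p, u.abs_le p])
    have m0 : MemLp (fun p => J n w' p - w' p) 2 := (J_memLp_sq n hw').1.sub hw'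
    have m2 : MemLp (fun p => χ p * (J n w' p - w' p)) 2 :=
      memLp_cpt_mul hχ.continuous hχc m0
    have := integral_sq_add_le m1 m2
    have e : ∀ p, pxF χ p * (J n u.toFun p - u.toFun p) + χ p * (J n w' p - w' p)
        = hn n p - h p := fun p => by simp only [hn, h]; ring
    simp_rw [e] at this
    refine this.trans ?_
    gcongr
    rw [← integral_const_mul]
    refine integral_mono m2.integrable_sq (m0.integrable_sq.const_mul _) fun p => ?_
    simp only [mul_pow]
    gcongr ?_ * _
    exact sq_le_sq' (by linarith [(abs_le.1 (hχC p)).1]) (abs_le.1 (hχC p)).2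
  have lim4 : Tendsto (fun n => ∫ p, (J n (hn n) p - h p) ^ 2) atTop (𝓝 0) := by
    have hlim : Tendsto (fun n => 2 * (∫ p, (hn n p - h p) ^ 2)
        + 2 * (∫ p, (J n h p - h p) ^ 2)) atTop (𝓝 0) := by
      simpa using (lim3.const_mul 2).add ((J_tendsto_L2 mh).const_mul 2)
    refine squeeze_zero (fun n => integral_nonneg fun p => sq_nonneg _) (fun n => ?_) hlim
    have m0 : MemLp (fun p => hn n p - h p) 2 := (mhn n).sub mh
    have m1 := J_memLp_sq n m0
    have m2 : MemLp (fun p => J n h p - h p) 2 := (J_memLp_sq n mh).1.sub mh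
    have := integral_sq_add_le m1.1 m2
    have e : ∀ p, J n (fun p => hn n p - h p) p + (J n h p - h p) = J n (hn n) p - h p := by
      intro p
      rw [J_sub n (memLp_locInt (mhn n)) (memLp_locInt mh)]; ring
    simp_rw [e] at this
    linarith [m1.2]
  have mJ : ∀ n, MemLp (J n (hn n)) 2 := fun n => (J_memLp_sq n (mhn n)).1
  have mJ' : ∀ᶠ n in atTop, MemLp (J n (hn n)) 2 := Eventually.of_forall mJ
  have mf : MemLp (K.indicator fun p => f (u.toFun p)) 2 := by
    obtain ⟨Cf, _, hCf⟩ := bdd01 hf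
    exact indK_memLp_bdd (comp_meas hf u.meas u.mem01) fun p => hCf _ (u.mem01 p)
  have mD : MemLp (K.indicator fun p => D (u.toFun p) * w p) 2 := by
    obtain ⟨CD, _, hCD⟩ := bdd01 hD
    refine MemLp.of_le_mul (c := CD) hw' ?_ (Eventually.of_forall fun p => ?_)
    · exact (((comp_meas hD u.meas u.mem01).mul hw.1).indicator (Kb_meas _ _)).aestronglyMeasurable
    · by_cases hp : p ∈ K
      · simp only [hp, indicator_of_mem, w', norm_mul]
        gcongr
        exact hCD _ (u.mem01 p)
      · simp [hp, w']
  have limf := tendsto_integral_mul_of_L2 mf mh mJ' lim4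
  have limD := tendsto_integral_mul_of_L2 mD mh mJ' lim4
  have limσ := tendsto_integral_sq_of_L2 mh mJ' lim4
  have limt : Tendsto (fun n => ∫ p, ptF χ p * J n u.toFun p ^ 2) atTop
      (𝓝 (∫ p, ptF χ p * u.toFun p ^ 2)) := by
    refine tendsto_integral_of_dominated_convergence (fun p => |ptF χ p|)
      (fun n => ((pt_cont hχ1).measurable.mul ((Jm n).pow_const 2)).aestronglyMeasurable)
      ((pt_cont hχ1).integrable_of_hasCompactSupport (pt_cpt hχc)).abs
      (fun n => Eventually.of_forall fun p => ?_) ?_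
    · rw [norm_mul, Real.norm_eq_abs, norm_pow, Real.norm_eq_abs]
      exact mul_le_of_le_one_right (abs_nonneg _) (pow_le_one₀ (abs_nonneg _) (Jab n p))
    · filter_upwards [J_ae_tendsto u.locInt] with p hp
      exact (hp.pow 2).const_mul _
  have hind : ∀ g : ℝ × ℝ → ℝ, (fun p => g p * h p) = fun p => K.indicator g p * h p := by
    intro g; funext p
    by_cases hp : p ∈ K
    · simp [hp]
    · simp [h0 p hp]
  refine ⟨?_, ?_, ?_, mh.integrable_sq, ?_⟩
  · have := (memLp_cpt_mul_bdd (pt_cont hχ1) (pt_cpt hχc) u.meas u.abs_le)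
    refine ((pt_cont hχ1).integrable_of_hasCompactSupport (pt_cpt hχc)).mono
      ((pt_cont hχ1).measurable.mul (u.meas.pow_const 2)).aestronglyMeasurable
      (Eventually.of_forall fun p => ?_)
    rw [norm_mul, norm_pow]
    exact mul_le_of_le_one_right (norm_nonneg _) (pow_le_one₀ (norm_nonneg _) (u.abs_le p))
  · rw [hind fun p => f (u.toFun p)]
    exact mf.integrable_mul mh
  · rw [hind fun p => D (u.toFun p) * w p]
    exact mD.integrable_mul mh
  rw [integral_ind h0, integral_ind (g := fun p => D (u.toFun p) * w p) h0]
  have limtot := (((limt.const_mul (1/2)).neg.sub limf).add (limD.const_mul (ε/2))).sub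
    ((limσ.const_mul Cs).const_mul (1/2))
  refine le_of_tendsto limtot ?_
  filter_upwards [eventually_ge_atTop m] with n hnm
  set φ := mollTest hs hχ hχc (J_contDiff n u.locInt (m := ⊤)) n hnm
  have hpx : pxF φ.toFun = J n (hn n) := by
    have hv : ContDiff ℝ 1 (J n u.toFun) := J_contDiff n u.locInt (m := 1)
    funext p
    refine (J_fderiv_smooth n (hχ1.mul hv) hχc.mul_right p (0,1)).trans ?_
    congr 1; funext q
    exact J_px hs hχ u.locInt hwd n hnm q
  have hz : ∀ p ∉ K, J n (hn n) p = 0 := by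
    intro p hp
    by_contra hne
    obtain ⟨q, hq, hG⟩ := J_supp n hne
    rw [← hpx] at hne
    have h1 : p.1 ∈ Icc (0:ℝ) T := by
      by_contra h1
      exact hne (by simp [pxF, (φ.zero_off p h1).2])
    have hqR : q ∈ Kb T R := by
      by_contra hq'
      exact hG (by simp [hn, hs.zero hq', pxF, hs.fderiv_zero hq'])
    have h5 : |p.2 - q.2| < 1 / ((n:ℝ) + 1) :=
      lt_of_le_of_lt (by rw [← Real.dist_eq, Prod.dist_eq]; exact le_max_right _ _) hq
    have h6 : 1 / ((n:ℝ) + 1) ≤ 1 := by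
      rw [div_le_one (by positivity)]; linarith [Nat.cast_nonneg (α := ℝ) n]
    rw [abs_lt] at h5
    exact hp ⟨h1, ⟨by linarith [hqR.2.1], by linarith [hqR.2.2]⟩⟩
  refine le_trans ?_ (hM φ)
  rw [IexprW, pair_pt, pair_px, pair_px, pair_px, hpx]
  have et : ∫ p, u.toFun p * ptF φ.toFun p = 1 / 2 * ∫ p, ptF χ p * J n u.toFun p ^ 2 :=
    J_time u hχ hχc n
  rw [et, integral_ind (g := fun p => f (u.toFun p)) hz,
    integral_ind (g := fun p => D (u.toFun p) * w p) hz]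
  have hσb : ∫ p, σ (u.toFun p) * J n (hn n) p * J n (hn n) p ≤ Cs * ∫ p, J n (hn n) p ^ 2 := by
    rw [← integral_const_mul]
    have i2 := (mJ n).integrable_sq.const_mul Cs
    have i1 : Integrable fun p => σ (u.toFun p) * J n (hn n) p * J n (hn n) p := by
      refine i2.mono' (((comp_meas hσ u.meas u.mem01).mul
        (J_meas n (memLp_locInt (mhn n)))).mul
        (J_meas n (memLp_locInt (mhn n)))).aestronglyMeasurable (Eventually.of_forall fun p => ?_)
      rw [norm_mul, norm_mul, Real.norm_eq_abs, Real.norm_eq_abs, mul_assoc, ← pow_two, sq_abs]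
      gcongr
      exact hCs _ (u.mem01 p)
    refine integral_mono i1 i2 fun p => ?_
    have := (abs_le.1 (hCs _ (u.mem01 p))).2
    simp only
    nlinarith [sq_nonneg (J n (hn n) p)]
  linarith

/-! ### Space-time cutoffs -/

/-- Increasing time cutoff: `0` for `t ≤ 1/(m+1)`, `1` for `t ≥ 2/(m+1)`. -/
def rampUp (m : ℕ) (t : ℝ) : ℝ := Real.smoothTransition (((m:ℝ) + 1) * t - 1)

/-- Smooth time cutoff supported in `[1/(m+1), T - 1/(m+1)]`. -/
def tcut (T : ℝ) (m : ℕ) (t : ℝ) : ℝ := rampUp m t * rampUp m (T - t)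

/-- The standard spatial bump equal to `1` on `[-R,R]`, supported in `[-R-1,R+1]`. -/
def xbump (R : ℝ) (hR : 0 < R) : ContDiffBump (0:ℝ) where
  rIn := R
  rOut := R + 1
  rIn_pos := hR
  rIn_lt_rOut := by linarith

/-- The space-time cutoff `a(t) θ(x)²`. -/
def scut (T R : ℝ) (hR : 0 < R) (m : ℕ) (p : ℝ × ℝ) : ℝ :=
  tcut T m p.1 * xbump R hR p.2 ^ 2

lemma rampUp_contDiff (m : ℕ) : ContDiff ℝ (⊤ : ℕ∞) (rampUp m) :=
  Real.smoothTransition.contDiff.comp ((contDiff_const.mul contDiff_id).sub contDiff_const)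

lemma rampUp_mem (m : ℕ) (t : ℝ) : rampUp m t ∈ Icc (0:ℝ) 1 :=
  ⟨Real.smoothTransition.nonneg _, Real.smoothTransition.le_one _⟩

lemma rampUp_mono (m : ℕ) : Monotone (rampUp m) := by
  intro s t h
  apply Real.smoothTransition.monotone
  gcongr

lemma rampUp_zero {m : ℕ} {t : ℝ} (h : t ≤ 1 / ((m:ℝ) + 1)) : rampUp m t = 0 := by
  apply Real.smoothTransition.zero_of_nonpos
  rw [le_div_iff₀ (by positivity)] at h
  linarith

lemma rampUp_one {m : ℕ} {t : ℝ} (h : 2 / ((m:ℝ) + 1) ≤ t) : rampUp m t = 1 := by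
  apply Real.smoothTransition.one_of_one_le
  rw [div_le_iff₀ (by positivity)] at h
  linarith

lemma tcut_contDiff (T : ℝ) (m : ℕ) : ContDiff ℝ (⊤ : ℕ∞) (tcut T m) :=
  (rampUp_contDiff m).mul ((rampUp_contDiff m).comp (contDiff_const.sub contDiff_id))

lemma tcut_mem (T : ℝ) (m : ℕ) (t : ℝ) : tcut T m t ∈ Icc (0:ℝ) 1 :=
  ⟨mul_nonneg (rampUp_mem _ _).1 (rampUp_mem _ _).1,
    mul_le_one₀ (rampUp_mem _ _).2 (rampUp_mem _ _).1 (rampUp_mem _ _).2⟩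

lemma tcut_supp {T : ℝ} {m : ℕ} {t : ℝ} (h : tcut T m t ≠ 0) :
    1 / ((m:ℝ) + 1) < t ∧ t < T - 1 / ((m:ℝ) + 1) := by
  constructor
  · by_contra h1
    exact h (by rw [tcut, rampUp_zero (not_lt.1 h1), zero_mul])
  · by_contra h1
    exact h (by rw [tcut, rampUp_zero (t := T - t) (by linarith [not_lt.1 h1]), mul_zero])

lemma tcut_tendsto {T t : ℝ} (h0 : 0 < t) (hT : t < T) :
    Tendsto (fun m => tcut T m t) atTop (𝓝 1) := by
  have hlim : Tendsto (fun m : ℕ => 2 / ((m:ℝ) + 1)) atTop (𝓝 0) := by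
    have := (tendsto_one_div_add_atTop_nhds_zero_nat (𝕜 := ℝ)).const_mul 2
    simpa [div_eq_mul_inv] using this
  refine tendsto_const_nhds.congr' ?_
  filter_upwards [hlim.eventually_le_const h0, hlim.eventually_le_const (sub_pos.2 hT)] with m h1 h2
  rw [tcut, rampUp_one h1, rampUp_one h2, mul_one]

lemma xbump_eq_one {R : ℝ} (hR : 0 < R) {x : ℝ} (hx : x ∈ Icc (-R) R) : xbump R hR x = 1 :=
  (xbump R hR).one_of_mem_closedBall (by
    rw [mem_closedBall_zero_iff, Real.norm_eq_abs]; exact abs_le.2 hx)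

lemma xbump_contDiff {R : ℝ} (hR : 0 < R) : ContDiff ℝ (⊤ : ℕ∞) (xbump R hR) :=
  (xbump R hR).contDiff

lemma xbump_supp {R : ℝ} (hR : 0 < R) {x : ℝ} (hx : xbump R hR x ≠ 0) : |x| ≤ R + 1 := by
  have : x ∈ Function.support (xbump R hR) := hx
  rw [(xbump R hR).support_eq, mem_ball_zero_iff] at this
  exact this.le

lemma scut_contDiff (T R : ℝ) (hR : 0 < R) (m : ℕ) : ContDiff ℝ (⊤ : ℕ∞) (scut T R hR m) :=
  ((tcut_contDiff T m).comp contDiff_fst).mul (((xbump_contDiff hR).comp contDiff_snd).pow 2)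

lemma scut_supp (T R : ℝ) (hR : 0 < R) (m : ℕ) : CutSupp T (R + 1) m (scut T R hR m) := by
  intro p hp
  have h1 := tcut_supp (left_ne_zero_of_mul hp)
  exact ⟨h1.1, h1.2, xbump_supp hR (pow_ne_zero_iff two_ne_zero |>.1 (right_ne_zero_of_mul hp))⟩

lemma CutSupp.cpt {T R : ℝ} {m : ℕ} {χ : ℝ × ℝ → ℝ} (hs : CutSupp T R m χ) :
    HasCompactSupport χ :=
  HasCompactSupport.intro (Kb_cpt T R) fun _ hp => hs.zero hp

lemma scut_cpt (T R : ℝ) (hR : 0 < R) (m : ℕ) : HasCompactSupport (scut T R hR m) :=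
  (scut_supp T R hR m).cpt

lemma scut_mem (T R : ℝ) (hR : 0 < R) (m : ℕ) (p : ℝ × ℝ) : scut T R hR m p ∈ Icc (0:ℝ) 1 :=
  ⟨mul_nonneg (tcut_mem _ _ _).1 (sq_nonneg _),
    mul_le_one₀ (tcut_mem _ _ _).2 (sq_nonneg _)
      (pow_le_one₀ (xbump R hR).nonneg (xbump R hR).le_one)⟩

lemma hasFDerivAt_fst_comp {a : ℝ → ℝ} (ha : ContDiff ℝ (⊤ : ℕ∞) a) (p v : ℝ × ℝ) :
    fderiv ℝ (fun q : ℝ × ℝ => a q.1) p v = deriv a p.1 * v.1 := by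
  have h1 : HasDerivAt a (deriv a p.1) p.1 :=
    (ha.differentiable (by simp) p.1).hasDerivAt
  have := h1.comp_hasFDerivAt p (hasFDerivAt_fst (𝕜 := ℝ) (E := ℝ) (F := ℝ) (p := p))
  have h2 : HasFDerivAt (fun q : ℝ × ℝ => a q.1) _ p := this
  rw [h2.fderiv]; simp

lemma hasFDerivAt_snd_comp {a : ℝ → ℝ} (ha : ContDiff ℝ (⊤ : ℕ∞) a) (p v : ℝ × ℝ) :
    fderiv ℝ (fun q : ℝ × ℝ => a q.2) p v = deriv a p.2 * v.2 := by
  have h1 : HasDerivAt a (deriv a p.2) p.2 :=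
    (ha.differentiable (by simp) p.2).hasDerivAt
  have := h1.comp_hasFDerivAt p (hasFDerivAt_snd (𝕜 := ℝ) (E := ℝ) (F := ℝ) (p := p))
  have h2 : HasFDerivAt (fun q : ℝ × ℝ => a q.2) _ p := this
  rw [h2.fderiv]; simp

lemma le1 : (1 : WithTop ℕ∞) ≤ ((⊤ : ℕ∞) : WithTop ℕ∞) := by exact_mod_cast le_top

lemma scut_fderiv (T R : ℝ) (hR : 0 < R) (m : ℕ) (p v : ℝ × ℝ) :
    fderiv ℝ (scut T R hR m) p v = deriv (tcut T m) p.1 * v.1 * xbump R hR p.2 ^ 2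
      + tcut T m p.1 * (2 * xbump R hR p.2 * deriv (xbump R hR) p.2 * v.2) := by
  have h1 : ContDiff ℝ (⊤ : ℕ∞) fun x => xbump R hR x ^ 2 := (xbump_contDiff hR).pow 2
  have := fderiv_mul_dir (a := fun q : ℝ × ℝ => tcut T m q.1)
    (b := fun q => xbump R hR q.2 ^ 2)
    (((tcut_contDiff T m).comp contDiff_fst).of_le le1) ((h1.comp contDiff_snd).of_le le1) p v
  refine this.trans ?_
  rw [hasFDerivAt_fst_comp (tcut_contDiff T m), hasFDerivAt_snd_comp h1]
  have h2 : HasDerivAt (xbump R hR) (deriv (xbump R hR) p.2) p.2 :=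
    ((xbump_contDiff hR).differentiable (by simp) p.2).hasDerivAt
  have h3 : HasDerivAt (fun x => xbump R hR x ^ 2) _ p.2 := h2.pow 2
  rw [h3.deriv]
  simp

lemma rampUp_deriv_nonneg (m : ℕ) (t : ℝ) : 0 ≤ deriv (rampUp m) t :=
  (rampUp_mono m).deriv_nonneg

lemma tcut_deriv_le (T : ℝ) (m : ℕ) (t : ℝ) : deriv (tcut T m) t ≤ deriv (rampUp m) t := by
  have h1 : HasDerivAt (rampUp m) (deriv (rampUp m) t) t :=
    ((rampUp_contDiff m).differentiable (by simp) t).hasDerivAt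
  have h2 : HasDerivAt (rampUp m) (deriv (rampUp m) (T - t)) (T - t) :=
    ((rampUp_contDiff m).differentiable (by simp) (T - t)).hasDerivAt
  have h3 : HasDerivAt (tcut T m) _ t := h1.mul (h2.comp t ((hasDerivAt_id t).const_sub T))
  rw [h3.deriv]
  have p1 := rampUp_deriv_nonneg m t
  have p2 := rampUp_deriv_nonneg m (T - t)
  have q1 := rampUp_mem m t
  have q2 := rampUp_mem m (T - t)
  nlinarith [mul_nonneg q1.1 p2, mul_le_of_le_one_right p1 q2.2]

lemma rampUp_deriv_integral (m : ℕ) :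
    Integrable (deriv (rampUp m)) ∧ ∫ t, deriv (rampUp m) t = 1 := by
  have hc : Continuous (deriv (rampUp m)) :=
    (rampUp_contDiff m).continuous_deriv le1
  have hi : Integrable (deriv (rampUp m)) := by
    refine hc.integrable_of_hasCompactSupport
      (HasCompactSupport.intro (isCompact_Icc (a := 0) (b := 2 / ((m:ℝ) + 1))) fun t ht => ?_)
    have : t < 0 ∨ 2 / ((m:ℝ) + 1) < t := by
      by_contra hcon
      push Not at hcon
      exact ht hcon
    rcases this with h | h
    · have : rampUp m =ᶠ[𝓝 t] fun _ => 0 := by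
        filter_upwards [eventually_lt_nhds h] with s hs
        exact rampUp_zero (hs.le.trans (by positivity))
      rw [this.deriv_eq]; simp
    · have : rampUp m =ᶠ[𝓝 t] fun _ => 1 := by
        filter_upwards [eventually_gt_nhds h] with s hs
        exact rampUp_one hs.le
      rw [this.deriv_eq]; simp
  refine ⟨hi, ?_⟩
  have := integral_of_hasDerivAt_of_tendsto (f := rampUp m) (m := 0) (n := 1)
    (fun t => ((rampUp_contDiff m).differentiable (by simp) t).hasDerivAt) hi ?_ ?_
  · simpa using this
  · refine tendsto_const_nhds.congr' ?_
    filter_upwards [eventually_le_atBot 0] with t ht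
    exact (rampUp_zero (ht.trans (by positivity))).symm
  · refine tendsto_const_nhds.congr' ?_
    filter_upwards [eventually_ge_atTop (2 / ((m:ℝ) + 1))] with t ht
    exact (rampUp_one ht).symm

/-! ### The a priori bound on the weak derivative -/

/-- Pointwise coercivity of the energy density; `a`, `θ` and `e` are the values of the time cutoff,
the space cutoff and its derivative. The multiplier `l` is so small that the quadratic term coming
from `σ` is absorbed by part of the `D`-term. -/
lemma coercive_pt {ε c Cf CD Cs : ℝ} (hε : 0 < ε) (hc : 0 < c) (hCs : 0 < Cs) (hCf : 0 < Cf)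
    {a θ e u w F d : ℝ} (ha : a ∈ Icc (0:ℝ) 1) (hθ : θ ∈ Icc (0:ℝ) 1) (hu : u ∈ Icc (0:ℝ) 1)
    (hF : |F| ≤ Cf) (hd : c ≤ d) (hd' : |d| ≤ CD) :
    let l := ε * c / (8 * Cs)
    let B := Cf + Cf ^ 2 * (4 / (ε * c)) + ε ^ 2 * CD ^ 2 * (4 / (ε * c)) + 4 * Cs * l
    l * (ε * c / 4) * (a * θ ^ 2 * w ^ 2) - l * B * (a * (θ ^ 2 + e ^ 2)) ≤
      - (F * (l * (a * (2 * θ * e)) * u + l * (a * θ ^ 2) * w))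
      + ε / 2 * (d * w * (l * (a * (2 * θ * e)) * u + l * (a * θ ^ 2) * w))
      - 1 / 2 * (Cs * (l * (a * (2 * θ * e)) * u + l * (a * θ ^ 2) * w) ^ 2) := by
  intro l B
  have hl : 0 < l := by positivity
  obtain ⟨ha0, ha1⟩ := ha
  obtain ⟨hθ0, hθ1⟩ := hθ
  obtain ⟨hu0, hu1⟩ := hu
  obtain ⟨hF1, hF2⟩ := abs_le.1 hF
  obtain ⟨hd1, hd2⟩ := abs_le.1 hd'
  have hec : 0 < ε * c := by positivity
  set y := θ * w with hy
  have hθu : (θ * u) ^ 2 ≤ θ ^ 2 := by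
    rw [mul_pow]; exact mul_le_of_le_one_right (sq_nonneg _) (pow_le_one₀ hu0 hu1)
  -- the four Young-type estimates, divided by `l * a`
  have t1 : F * (2 * θ * e * u) ≤ Cf * (θ ^ 2 + e ^ 2) := by
    have h1 : |2 * (θ * u) * e| ≤ θ ^ 2 + e ^ 2 := by
      rw [abs_le]; constructor <;> nlinarith [sq_nonneg (θ * u - e), sq_nonneg (θ * u + e)]
    calc F * (2 * θ * e * u) ≤ |F * (2 * (θ * u) * e)| := by
          rw [show F * (2 * θ * e * u) = F * (2 * (θ * u) * e) by ring]; exact le_abs_self _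
      _ = |F| * |2 * (θ * u) * e| := abs_mul _ _
      _ ≤ Cf * (θ ^ 2 + e ^ 2) := by gcongr
  have hF2' : F ^ 2 ≤ Cf ^ 2 := sq_le_sq' hF1 hF2
  have hd2' : d ^ 2 ≤ CD ^ 2 := sq_le_sq' hd1 hd2
  have t2 : F * θ * y ≤ ε * c / 16 * y ^ 2 + Cf ^ 2 * (4 / (ε * c)) * θ ^ 2 := by
    have e1 : ε * c / 16 * y ^ 2 + F ^ 2 * (4 / (ε * c)) * θ ^ 2 - F * θ * y
        = ε * c / 16 * (y - 8 / (ε * c) * (F * θ)) ^ 2 := by field_simp; ring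
    have e2 : 0 ≤ ε * c / 16 * (y - 8 / (ε * c) * (F * θ)) ^ 2 := by positivity
    have e3 : F ^ 2 * (4 / (ε * c)) * θ ^ 2 ≤ Cf ^ 2 * (4 / (ε * c)) * θ ^ 2 := by gcongr
    linarith
  have t3 : -(ε * d * e * u * y) ≤ ε * c / 16 * y ^ 2 + ε ^ 2 * CD ^ 2 * (4 / (ε * c)) * e ^ 2 := by
    have e1 : ε * c / 16 * y ^ 2 + ε ^ 2 * d ^ 2 * (4 / (ε * c)) * (e * u) ^ 2 + ε * d * e * u * y
        = ε * c / 16 * (y + 8 / (ε * c) * (ε * d * e * u)) ^ 2 := by field_simp; ring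
    have e2 : 0 ≤ ε * c / 16 * (y + 8 / (ε * c) * (ε * d * e * u)) ^ 2 := by positivity
    have e4 : (e * u) ^ 2 ≤ e ^ 2 := by
      rw [mul_pow]; exact mul_le_of_le_one_right (sq_nonneg _) (pow_le_one₀ hu0 hu1)
    have e3 : ε ^ 2 * d ^ 2 * (4 / (ε * c)) * (e * u) ^ 2
        ≤ ε ^ 2 * CD ^ 2 * (4 / (ε * c)) * e ^ 2 := by gcongr
    linarith
  have t4 : ε / 2 * c * y ^ 2 ≤ ε / 2 * d * y ^ 2 := by gcongr
  have t5 : 1 / 2 * (Cs * (l * (a * (2 * θ * e * u + θ * y) ^ 2)))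
      ≤ Cs * l * (4 * e ^ 2 + y ^ 2) := by
    have h1 : (2 * θ * e * u + θ * y) ^ 2 ≤ 2 * (4 * e ^ 2 + y ^ 2) := by
      have h2 : (2 * θ * e * u + θ * y) ^ 2 = θ ^ 2 * (2 * (e * u) + y) ^ 2 := by ring
      have h3 : θ ^ 2 * (2 * (e * u) + y) ^ 2 ≤ (2 * (e * u) + y) ^ 2 :=
        mul_le_of_le_one_left (sq_nonneg _) (pow_le_one₀ hθ0 hθ1)
      have e4 : (e * u) ^ 2 ≤ e ^ 2 := by
        rw [mul_pow]; exact mul_le_of_le_one_right (sq_nonneg _) (pow_le_one₀ hu0 hu1)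
      nlinarith [sq_nonneg (2 * (e * u) - y)]
    have h2 : a * (2 * θ * e * u + θ * y) ^ 2 ≤ 2 * (4 * e ^ 2 + y ^ 2) :=
      (mul_le_of_le_one_left (sq_nonneg _) ha1).trans h1
    have : 0 < Cs * l := by positivity
    nlinarith
  have hCl : Cs * l = ε * c / 8 := by simp only [l]; field_simp
  have key : ε * c / 4 * y ^ 2 - B * (θ ^ 2 + e ^ 2) ≤
      -(F * (2 * θ * e * u)) - F * θ * y + ε * d * e * u * y + ε / 2 * d * y ^ 2
        - 1 / 2 * (Cs * (l * (a * (2 * θ * e * u + θ * y) ^ 2))) := by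
    have n1 : 0 ≤ Cf ^ 2 * (4 / (ε * c)) * e ^ 2 := by positivity
    have n2 : 0 ≤ ε ^ 2 * CD ^ 2 * (4 / (ε * c)) * θ ^ 2 := by positivity
    have n3 : 0 ≤ 4 * Cs * l * θ ^ 2 := by positivity
    have hB : B * (θ ^ 2 + e ^ 2) = Cf * (θ ^ 2 + e ^ 2) + Cf ^ 2 * (4 / (ε * c)) * θ ^ 2
      + Cf ^ 2 * (4 / (ε * c)) * e ^ 2 + ε ^ 2 * CD ^ 2 * (4 / (ε * c)) * θ ^ 2
      + ε ^ 2 * CD ^ 2 * (4 / (ε * c)) * e ^ 2 + 4 * Cs * l * θ ^ 2 + 4 * (Cs * l) * e ^ 2 := by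
      simp only [B]; ring
    have h6 : Cs * l * (4 * e ^ 2 + y ^ 2) = 4 * (Cs * l) * e ^ 2 + ε * c / 8 * y ^ 2 := by
      rw [mul_add, hCl]; ring
    rw [hB]
    linarith
  have := mul_le_mul_of_nonneg_left key (mul_nonneg hl.le ha0)
  calc _ = l * a * (ε * c / 4 * y ^ 2 - B * (θ ^ 2 + e ^ 2)) := by rw [hy]; ring
    _ ≤ _ := this
    _ = _ := by rw [hy]; ring

lemma ae_Ioo_of_Icc (T : ℝ) : ∀ᵐ p : ℝ × ℝ, p.1 ≠ 0 ∧ p.1 ≠ T := by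
  have h : ∀ a : ℝ, ∀ᵐ p : ℝ × ℝ, p.1 ≠ a := fun a =>
    (Measure.quasiMeasurePreserving_fst (μ := (volume : Measure ℝ)) (ν := (volume : Measure ℝ))).ae
      (p := fun t => t ≠ a) (Measure.ae_ne volume a)
  exact (h 0).and (h T)

lemma scut_le_px (T R : ℝ) (hR : 0 < R) (m : ℕ) {w : ℝ × ℝ → ℝ} (hw : L2loc T w) :
    Integrable fun p => scut T R hR m p * w p ^ 2 := by
  have hw' : MemLp ((Kb T (R + 1)).indicator w) 2 := indK_memLp (by linarith) hw
  refine hw'.integrable_sq.mono' (((scut_contDiff T R hR m).continuous.measurable.mul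
    (hw.1.pow_const 2)).aestronglyMeasurable) (Eventually.of_forall fun p => ?_)
  have hm := scut_mem T R hR m p
  by_cases hp : p ∈ Kb T (R + 1)
  · simp only [hp, indicator_of_mem, norm_mul, Real.norm_eq_abs]
    rw [abs_of_nonneg hm.1, abs_of_nonneg (sq_nonneg _)]
    exact mul_le_of_le_one_left (sq_nonneg _) hm.2
  · simp [hp, (scut_supp T R hR m).zero hp]

/-- A bound on the integrals of `g ≥ 0` against the cutoffs `scut`, uniform in the time cutoff,
bounds the integral of `g` over the box. -/
lemma setIntegral_le_of_scut {T R : ℝ} (hR : 0 < R) {g : ℝ × ℝ → ℝ} (hg : ∀ p, 0 ≤ g p)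
    (hgm : Measurable g)
    (hgi : IntegrableOn g (Kb T R)) (hi : ∀ m, Integrable fun p => scut T R hR m p * g p) {C : ℝ}
    (h : ∀ m, ∫ p, scut T R hR m p * g p ≤ C) : ∫ p in Kb T R, g p ≤ C := by
  have hlim : Tendsto (fun m => ∫ p in Kb T R, scut T R hR m p * g p) atTop
      (𝓝 (∫ p in Kb T R, g p)) := by
    refine tendsto_integral_of_dominated_convergence g
      (fun m => ((scut_contDiff T R hR m).continuous.measurable.mul hgm).aestronglyMeasurable)
      hgi (fun m => Eventually.of_forall fun p => ?_) ?_
    · rw [Real.norm_eq_abs, abs_of_nonneg (mul_nonneg (scut_mem T R hR m p).1 (hg p))]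
      exact mul_le_of_le_one_left (hg p) (scut_mem T R hR m p).2
    · filter_upwards [ae_restrict_of_ae (ae_Ioo_of_Icc T), ae_restrict_mem (Kb_meas T R)]
        with p hp hpK
      have h1 := tcut_tendsto (lt_of_le_of_ne hpK.1.1 hp.1.symm) (lt_of_le_of_ne hpK.1.2 hp.2)
      have e : ∀ m, scut T R hR m p * g p = tcut T m p.1 * g p := fun m => by
        rw [scut, xbump_eq_one hR hpK.2]; ring
      simp_rw [e]
      simpa using h1.mul_const (g p)
  refine le_of_tendsto hlim (Eventually.of_forall fun m => le_trans ?_ (h m))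
  exact setIntegral_le_integral (hi m)
    (Eventually.of_forall fun p => mul_nonneg (scut_mem T R hR m p).1 (hg p))

/-- A bound on the functional yields an `L²_loc` bound on the weak derivative which does not
depend on `u`: `energy` is applied to `χ = l a(t) θ(x)²` with the multiplier `l` of
`coercive_pt`. -/
lemma apriori {f D σ : ℝ → ℝ} {T ε : ℝ} (hf : ContinuousOn f (Icc 0 1))
    (hD : ContinuousOn D (Icc 0 1)) (hσ : ContinuousOn σ (Icc 0 1)) {c : ℝ} (hc : 0 < c)
    (hDc : ∀ v ∈ Icc (0:ℝ) 1, c ≤ D v) (hε : 0 < ε) (M : ℝ) {R : ℝ} (hR : 0 < R) :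
    ∃ C : ℝ, ∀ (u : cU T) (w : ℝ × ℝ → ℝ), L2loc T w → HasWeakDx T u.toFun w →
      (∀ φ, IexprW f D σ T ε u.toFun w φ ≤ M) → ∫ p in Kb T R, w p ^ 2 ≤ C := by
  obtain ⟨Cf, hCf, hfb⟩ := bdd01 hf
  obtain ⟨CD, hCD, hDb⟩ := bdd01 hD
  obtain ⟨Cs, hCs, hσb⟩ := bdd01 hσ
  set l := ε * c / (8 * Cs) with hl
  set B := Cf + Cf ^ 2 * (4 / (ε * c)) + ε ^ 2 * CD ^ 2 * (4 / (ε * c)) + 4 * Cs * l with hB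
  have hl0 : 0 < l := by positivity
  have hB0 : 0 < B := by positivity
  set θ := xbump R hR
  have hθc : HasCompactSupport θ := (xbump R hR).hasCompactSupport
  have hθ'c : Continuous (deriv θ) := (xbump_contDiff hR).continuous_deriv le1
  have iθ : Integrable fun x => θ x ^ 2 :=
    ((xbump R hR).continuous.pow 2).integrable_of_hasCompactSupport (by
      simpa only [pow_two] using hθc.mul_right (f' := θ))
  have iθ' : Integrable fun x => deriv θ x ^ 2 :=
    (hθ'c.pow 2).integrable_of_hasCompactSupport (by
      simpa only [pow_two] using hθc.deriv.mul_right (f' := deriv θ))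
  set q : ℝ × ℝ → ℝ := fun p => (Icc (0:ℝ) T).indicator (fun _ => (1:ℝ)) p.1 *
    (θ p.2 ^ 2 + deriv θ p.2 ^ 2) with hq
  have iq : Integrable q :=
    Integrable.mul_prod (f := (Icc (0:ℝ) T).indicator (fun _ => (1:ℝ)))
      (g := fun x => θ x ^ 2 + deriv θ x ^ 2)
      ((integrable_indicator_iff measurableSet_Icc).2
        (integrableOn_const (isCompact_Icc.measure_lt_top.ne))) (iθ.add iθ')
  set A := ∫ x, θ x ^ 2
  refine ⟨(M + l * (1 / 2) * A + l * B * ∫ p, q p) / (l * (ε * c / 4)), fun u w hw hwd hM => ?_⟩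
  refine setIntegral_le_of_scut hR (fun p => sq_nonneg _) (hw.1.pow_const 2) (hw.2 R hR)
    (fun m => scut_le_px T R hR m hw) fun m => ?_
  rw [le_div_iff₀ (by positivity)]
  have isc := scut_le_px T R hR m hw
  set χ : ℝ × ℝ → ℝ := fun p => l * scut T R hR m p
  have hχ : ContDiff ℝ (⊤ : ℕ∞) χ := contDiff_const.mul (scut_contDiff T R hR m)
  have hχs : CutSupp T (R + 1) m χ := fun p hp =>
    scut_supp T R hR m p (right_ne_zero_of_mul hp)
  obtain ⟨i1, i2, i3, i4, E⟩ := energy hf hD hσ hσb u hw hwd hM hχ hχs.cpt (by linarith) hχs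
  have hfd : ∀ p v, fderiv ℝ χ p v = l * fderiv ℝ (scut T R hR m) p v := by
    intro p v
    have := ((scut_contDiff T R hR m).differentiable (by simp) p).hasFDerivAt.const_mul l
    have h2 : HasFDerivAt χ _ p := this
    rw [h2.fderiv]; simp
  obtain ⟨ir, er⟩ := rampUp_deriv_integral m
  set s : ℝ × ℝ → ℝ := fun p => deriv (rampUp m) p.1 * θ p.2 ^ 2
  have is : Integrable s := Integrable.mul_prod ir iθ
  have es : ∫ p, s p = A := by
    have := integral_prod_mul (μ := (volume : Measure ℝ)) (ν := (volume : Measure ℝ))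
      (deriv (rampUp m)) (fun x => θ x ^ 2)
    rw [er, one_mul] at this
    exact this
  have hlow := integral_lin3 isc iq is (l * (ε * c / 4)) (-(l * B)) (-(l * (1 / 2)))
  have hup := integral_lin3 i2 i3 i4 (-1) (ε / 2) (-(1 / 2 * Cs))
  have iup : Integrable fun p =>
      -1 * (f (u.toFun p) * (pxF χ p * u.toFun p + χ p * w p)) +
      ε / 2 * (D (u.toFun p) * w p * (pxF χ p * u.toFun p + χ p * w p)) +
      -(1 / 2 * Cs) * ((pxF χ p * u.toFun p + χ p * w p) ^ 2) :=
    ((i2.const_mul _).add (i3.const_mul _)).add (i4.const_mul _)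
  have ilow : Integrable fun p => l * (ε * c / 4) * (scut T R hR m p * w p ^ 2)
      + -(l * B) * q p + -(l * (1 / 2)) * s p :=
    ((isc.const_mul _).add (iq.const_mul _)).add (is.const_mul _)
  have hmono : ∫ p, (l * (ε * c / 4) * (scut T R hR m p * w p ^ 2)
      + -(l * B) * q p + -(l * (1 / 2)) * s p) ≤
      ∫ p, (-(1 / 2) * (ptF χ p * u.toFun p ^ 2) +
      (-1 * (f (u.toFun p) * (pxF χ p * u.toFun p + χ p * w p)) +
      ε / 2 * (D (u.toFun p) * w p * (pxF χ p * u.toFun p + χ p * w p)) +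
      -(1 / 2 * Cs) * ((pxF χ p * u.toFun p + χ p * w p) ^ 2))) := by
    refine integral_mono ilow ((i1.const_mul _).add iup) fun p => ?_
    have ha := tcut_mem T m p.1
    have hθ01 : θ p.2 ∈ Icc (0:ℝ) 1 := ⟨(xbump R hR).nonneg, (xbump R hR).le_one⟩
    have hu := u.mem01 p
    have key := coercive_pt (w := w p) (e := deriv θ p.2) hε hc hCs hCf ha hθ01 hu (hfb _ hu)
      (hDc _ hu) (hDb _ hu)
    simp only [← hl, ← hB] at key
    have e1 : pxF χ p = l * (tcut T m p.1 * (2 * θ p.2 * deriv θ p.2)) := by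
      rw [pxF, hfd, scut_fderiv]; simp [θ]
    have e2 : ptF χ p = l * (deriv (tcut T m) p.1 * θ p.2 ^ 2) := by
      rw [ptF, hfd, scut_fderiv]; simp [θ]
    have e3 : χ p = l * (tcut T m p.1 * θ p.2 ^ 2) := rfl
    have e4 : scut T R hR m p = tcut T m p.1 * θ p.2 ^ 2 := rfl
    have b1 : ptF χ p * u.toFun p ^ 2 ≤ l * s p := by
      rw [e2]
      have hd := tcut_deriv_le T m p.1
      have hr := rampUp_deriv_nonneg m p.1
      have : deriv (tcut T m) p.1 * u.toFun p ^ 2 ≤ deriv (rampUp m) p.1 :=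
        (mul_le_mul_of_nonneg_right hd (sq_nonneg _)).trans
          (mul_le_of_le_one_right hr (pow_le_one₀ hu.1 hu.2))
      calc l * (deriv (tcut T m) p.1 * θ p.2 ^ 2) * u.toFun p ^ 2
          = l * ((deriv (tcut T m) p.1 * u.toFun p ^ 2) * θ p.2 ^ 2) := by ring
        _ ≤ l * (deriv (rampUp m) p.1 * θ p.2 ^ 2) := by gcongr
    have b2 : tcut T m p.1 * (θ p.2 ^ 2 + deriv θ p.2 ^ 2) ≤ q p := by
      simp only [hq]
      gcongr
      by_cases ht : p.1 ∈ Icc (0:ℝ) T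
      · simpa [ht] using ha.2
      · have : tcut T m p.1 = 0 := by
          by_contra hne
          have := tcut_supp hne
          have h0 : 0 < 1 / ((m:ℝ) + 1) := by positivity
          exact ht ⟨by linarith, by linarith⟩
        rw [this]; simp [ht]
    have b3 := mul_le_mul_of_nonneg_left b2 (mul_pos hl0 hB0).le
    simp only [e1, e3, e4] at key b1 ⊢
    linarith
  rw [integral_add (i1.const_mul _) iup, hup, hlow, integral_const_mul, es] at hmono
  linarith

/-! ### Convergence in the metric of `𝒰` and weak convergence of time slices -/

lemma STest.abs_le {N : ℝ} (hN : 0 < N) (φ : STest N) (x : ℝ) :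
    |φ.toFun x| ≤ N + 1 / 2 * ∫ y, deriv φ.toFun y ^ 2 := by
  have hd : Continuous (deriv φ.toFun) := φ.smooth.continuous_deriv le1
  have i2 : Integrable fun y => deriv φ.toFun y ^ 2 :=
    (hd.pow 2).integrable_of_hasCompactSupport (by
      simpa only [pow_two] using φ.cpt.deriv.mul_right (f' := deriv φ.toFun))
  have i2n : 0 ≤ ∫ y, deriv φ.toFun y ^ 2 := integral_nonneg fun _ => sq_nonneg _
  have hz : ∀ x, x ∉ Ioo (-N) N → φ.toFun x = 0 := fun x hx => by
    by_contra h; exact hx (φ.supp h)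
  by_cases hx : x ∈ Ioo (-N) N
  · have h1 : φ.toFun x = ∫ y in (-N)..x, deriv φ.toFun y := by
      rw [intervalIntegral.integral_deriv_eq_sub
        (fun y _ => φ.smooth.differentiable (by simp) y) (hd.intervalIntegrable _ _),
        hz (-N) (by simp), sub_zero]
    rw [h1, intervalIntegral.integral_of_le hx.1.le, ← Real.norm_eq_abs]
    have i0 : IntegrableOn (fun _ : ℝ => (1:ℝ) / 2) (Ioc (-N) x) := integrableOn_const (by simp)
    have i3 : IntegrableOn (fun y => 1 / 2 + 1 / 2 * deriv φ.toFun y ^ 2) (Ioc (-N) x) :=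
      i0.add (i2.const_mul _).integrableOn
    refine (norm_integral_le_of_norm_le i3 (Eventually.of_forall fun y => ?_)).trans ?_
    · rw [Real.norm_eq_abs]
      nlinarith [sq_nonneg (|deriv φ.toFun y| - 1), sq_abs (deriv φ.toFun y)]
    · rw [integral_add i0 (i2.const_mul _).integrableOn,
        integral_const_mul]
      have h3 := setIntegral_le_integral (s := Ioc (-N) x) i2
        (Eventually.of_forall fun y => sq_nonneg _)
      have h4 : ∫ _ in Ioc (-N) x, (1:ℝ) / 2 ≤ N := by
        rw [setIntegral_const, Real.volume_real_Ioc_of_le hx.1.le, smul_eq_mul]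
        linarith [hx.2]
      linarith
  · rw [hz x hx, abs_zero]
    positivity

/-- Measurable functions of modulus at most one, such as differences of time slices. -/
def Slice (w : ℝ → ℝ) : Prop := Measurable w ∧ ∀ x, |w x| ≤ 1

lemma cU.slice {T : ℝ} (u v : cU T) (t : ℝ) :
    Slice fun x => u.toFun (t, x) - v.toFun (t, x) := by
  refine ⟨(u.meas.comp measurable_prodMk_left).sub (v.meas.comp measurable_prodMk_left),
    fun x => ?_⟩
  have h1 := u.mem01 (t, x)
  have h2 := v.mem01 (t, x)
  rw [_root_.abs_le]
  constructor <;> linarith [h1.1, h1.2, h2.1, h2.2]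

lemma STest.integral_le {N : ℝ} (hN : 0 < N) (φ : STest N)
    (hφ : (∫ x, deriv φ.toFun x ^ 2) = 1) {w : ℝ → ℝ} (hw : Slice w) :
    |∫ x, w x * φ.toFun x| ≤ 2 * N * (N + 1 / 2) := by
  have hb : ∀ x, |φ.toFun x| ≤ N + 1 / 2 := fun x => by
    have := φ.abs_le hN x; rwa [hφ, mul_one] at this
  have e : ∫ x, w x * φ.toFun x = ∫ x in Ioo (-N) N, w x * φ.toFun x := by
    refine (setIntegral_eq_integral_of_forall_compl_eq_zero fun x hx => ?_).symm
    by_contra h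
    exact hx (φ.supp (right_ne_zero_of_mul h))
  rw [e, ← Real.norm_eq_abs]
  refine (norm_setIntegral_le_of_norm_le_const (C := N + 1 / 2) (by simp) fun x _ => ?_).trans ?_
  · rw [norm_mul]
    exact (mul_le_of_le_one_left (norm_nonneg _) (hw.2 x)).trans (hb x)
  · rw [Real.volume_real_Ioo_of_le (by linarith)]
    apply le_of_eq; ring

/-- The negative of a test function. -/
def STest.neg {N : ℝ} (φ : STest N) : STest N where
  toFun := fun x => - φ.toFun x
  smooth := φ.smooth.neg
  cpt := φ.cpt.comp_left (g := fun y : ℝ => -y) neg_zero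
  supp := by
    intro x hx
    exact φ.supp (neg_ne_zero.1 hx)

lemma STest.neg_energy {N : ℝ} (φ : STest N) (hφ : (∫ x, deriv φ.toFun x ^ 2) = 1) :
    (∫ x, deriv φ.neg.toFun x ^ 2) = 1 := by
  have : ∀ x, deriv φ.neg.toFun x = - deriv φ.toFun x := fun x => deriv.fun_neg
  simp_rw [this, neg_sq]; exact hφ

lemma negNorm_ge {N : ℝ} (hN : 0 < N) (φ : STest N)
    (hφ : (∫ x, deriv φ.toFun x ^ 2) = 1) {w : ℝ → ℝ} (hw : Slice w) :
    |∫ x, w x * φ.toFun x| ≤ negNorm N w := by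
  have hb : BddAbove { r : ℝ | ∃ φ : STest N, (∫ x, deriv φ.toFun x ^ 2) = 1 ∧
      r = ∫ x, w x * φ.toFun x } := by
    refine ⟨2 * N * (N + 1 / 2), ?_⟩
    rintro r ⟨ψ, hψ, rfl⟩
    exact (le_abs_self _).trans (ψ.integral_le hN hψ hw)
  rw [abs_le']
  refine ⟨le_csSup hb ⟨φ, hφ, rfl⟩, le_csSup hb ⟨φ.neg, φ.neg_energy hφ, ?_⟩⟩
  rw [← integral_neg]
  congr 1; funext x; simp [STest.neg]

lemma negNorm_nonneg {N : ℝ} (hN : 0 < N) {w : ℝ → ℝ} (hw : Slice w) : 0 ≤ negNorm N w := by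
  by_cases h : ∃ φ : STest N, (∫ x, deriv φ.toFun x ^ 2) = 1
  · obtain ⟨φ, hφ⟩ := h
    exact (abs_nonneg _).trans (negNorm_ge hN φ hφ hw)
  · have : { r : ℝ | ∃ φ : STest N, (∫ x, deriv φ.toFun x ^ 2) = 1 ∧
      r = ∫ x, w x * φ.toFun x } = ∅ := by
      ext r; simp only [mem_ofPred_eq, mem_empty_iff_false, iff_false]
      rintro ⟨φ, hφ, _⟩; exact h ⟨φ, hφ⟩
    rw [negNorm, this, Real.sSup_empty]

/-- The summands in the definition of `d_U`. -/
def dUterm (w : ℝ → ℝ) (n : ℕ) : ℝ :=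
  (2 : ℝ)⁻¹ ^ (n + 1) * (negNorm ((n : ℝ) + 1) w / (1 + negNorm ((n : ℝ) + 1) w))

lemma dUterm_mem {w : ℝ → ℝ} (hw : Slice w) (n : ℕ) :
    0 ≤ dUterm w n ∧ dUterm w n ≤ (2 : ℝ)⁻¹ ^ (n + 1) := by
  have h := negNorm_nonneg (N := (n:ℝ) + 1) (by positivity) hw
  refine ⟨by unfold dUterm; positivity, mul_le_of_le_one_right (by positivity) ?_⟩
  rw [div_le_one (by positivity)]; linarith

lemma summable_half : Summable fun n : ℕ => (2 : ℝ)⁻¹ ^ (n + 1) :=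
  (summable_nat_add_iff 1).2 (summable_geometric_of_lt_one (by norm_num) (by norm_num))

lemma dUterm_summable {w : ℝ → ℝ} (hw : Slice w) : Summable (dUterm w) :=
  Summable.of_nonneg_of_le (fun n => (dUterm_mem hw n).1) (fun n => (dUterm_mem hw n).2)
    summable_half

lemma dUterm_le_dcU {T : ℝ} (u v : cU T) {t : ℝ} (ht : t ∈ Icc (0:ℝ) T) (n : ℕ) :
    dUterm (fun x => u.toFun (t, x) - v.toFun (t, x)) n ≤ dcU T u v := by
  have h1 : dUterm (fun x => u.toFun (t, x) - v.toFun (t, x)) n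
      ≤ dU (fun x => u.toFun (t, x)) (fun x => v.toFun (t, x)) :=
    (dUterm_summable (u.slice v t)).le_tsum n fun k _ => (dUterm_mem (u.slice v t) k).1
  refine h1.trans (le_csSup ⟨∑' n : ℕ, (2 : ℝ)⁻¹ ^ (n + 1), ?_⟩ ⟨t, ht, rfl⟩)
  rintro r ⟨s, _, rfl⟩
  exact (dUterm_summable (u.slice v s)).tsum_le_tsum (fun k => (dUterm_mem (u.slice v s) k).2)
    summable_half

lemma negNorm_tendsto {T : ℝ} {u : cU T} {us : ℕ → cU T}
    (h : Tendsto (fun n => dcU T (us n) u) atTop (𝓝 0)) {t : ℝ} (ht : t ∈ Icc (0:ℝ) T) (k : ℕ) :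
    Tendsto (fun n => negNorm ((k:ℝ) + 1) fun x => (us n).toFun (t, x) - u.toFun (t, x))
      atTop (𝓝 0) := by
  set a : ℕ → ℝ := fun n => negNorm ((k:ℝ) + 1) fun x => (us n).toFun (t, x) - u.toFun (t, x)
  have ha : ∀ n, 0 ≤ a n := fun n => negNorm_nonneg (by positivity) ((us n).slice u t)
  have h1 : Tendsto (fun n => dUterm (fun x => (us n).toFun (t, x) - u.toFun (t, x)) k)
      atTop (𝓝 0) :=
    squeeze_zero (fun n => (dUterm_mem ((us n).slice u t) k).1)
      (fun n => dUterm_le_dcU (us n) u ht k) h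
  have h2 : Tendsto (fun n => a n / (1 + a n)) atTop (𝓝 0) := by
    have := h1.const_mul ((2:ℝ) ^ (k + 1))
    rw [mul_zero] at this
    refine this.congr fun n => ?_
    simp only [dUterm, a]
    rw [← mul_assoc, ← mul_pow, mul_inv_cancel₀ two_ne_zero, one_pow, one_mul]
  have h3 : Tendsto (fun n => (a n / (1 + a n)) / (1 - a n / (1 + a n))) atTop
      (𝓝 (0 / (1 - 0))) := h2.div (h2.const_sub 1) (by norm_num)
  rw [zero_div] at h3
  refine h3.congr fun n => ?_
  have : 0 < 1 + a n := by linarith [ha n]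
  field_simp
  ring

/-- Convergence in `𝒰` implies weak convergence of every time slice. -/
lemma slice_tendsto {T : ℝ} {u : cU T} {us : ℕ → cU T}
    (h : Tendsto (fun n => dcU T (us n) u) atTop (𝓝 0)) {t : ℝ} (ht : t ∈ Icc (0:ℝ) T)
    {φ : ℝ → ℝ} (hφ : ContDiff ℝ (⊤ : ℕ∞) φ) (hc : HasCompactSupport φ) :
    Tendsto (fun n => ∫ x, ((us n).toFun (t, x) - u.toFun (t, x)) * φ x) atTop (𝓝 0) := by
  obtain ⟨r, hr⟩ := hc.isBounded.subset_closedBall (0 : ℝ)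
  obtain ⟨k, hk⟩ := exists_nat_gt r
  have hsupp : Function.support φ ⊆ Ioo (-((k:ℝ) + 1)) ((k:ℝ) + 1) := by
    intro x hx
    have := hr (subset_tsupport _ hx)
    rw [mem_closedBall_zero_iff, Real.norm_eq_abs, abs_le] at this
    exact ⟨by linarith [this.1], by linarith [this.2]⟩
  have hd : Continuous (deriv φ) := hφ.continuous_deriv le1
  by_cases h0 : ∀ x, deriv φ x = 0
  · have hz : ∀ x, φ x = 0 := by
      intro x
      rw [is_const_of_deriv_eq_zero (hφ.differentiable (by simp)) h0 x ((k:ℝ) + 1)]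
      by_contra hne
      exact lt_irrefl _ (hsupp hne).2
    simp [hz]
  · push Not at h0
    obtain ⟨x₀, hx₀⟩ := h0
    have hA : 0 < ∫ x, deriv φ x ^ 2 :=
      (hd.pow 2).integral_pos_of_hasCompactSupport_nonneg_nonzero (by
        simpa only [pow_two] using hc.deriv.mul_right (f' := deriv φ)) (fun x => sq_nonneg _)
        (pow_ne_zero 2 hx₀)
    set A := ∫ x, deriv φ x ^ 2
    set s := Real.sqrt A
    have hs : 0 < s := Real.sqrt_pos.2 hA
    have hss : s ^ 2 = A := Real.sq_sqrt hA.le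
    set ψ : STest ((k:ℝ) + 1) :=
      { toFun := fun x => s⁻¹ * φ x
        smooth := contDiff_const.mul hφ
        cpt := hc.mul_left
        supp := fun x hx => hsupp (right_ne_zero_of_mul hx) }
    have hψ : (∫ x, deriv ψ.toFun x ^ 2) = 1 := by
      have : ∀ x, deriv ψ.toFun x = s⁻¹ * deriv φ x := fun x =>
        deriv_const_mul _ (hφ.differentiable (by simp) x)
      simp_rw [this, mul_pow]
      rw [integral_const_mul]
      change (s⁻¹) ^ 2 * A = 1
      rw [← hss]; field_simp
    have hlim := (negNorm_tendsto h ht k).const_mul s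
    rw [mul_zero] at hlim
    refine squeeze_zero_norm (fun n => ?_) hlim
    have := negNorm_ge (by positivity) ψ hψ ((us n).slice u t)
    have e : ∫ x, ((us n).toFun (t, x) - u.toFun (t, x)) * φ x
        = s * ∫ x, ((us n).toFun (t, x) - u.toFun (t, x)) * ψ.toFun x := by
      rw [← integral_const_mul]
      congr 1; funext x
      simp only [ψ]; field_simp
    rw [e, norm_mul, Real.norm_eq_abs s, abs_of_pos hs]
    gcongr
    exact this

/-- Weak convergence to zero of bounded functions implies convergence of integrals on
intervals. -/
lemma ball_tendsto {v : ℕ → ℝ → ℝ} (hv : ∀ n, Slice (v n))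
    (h : ∀ φ : ℝ → ℝ, ContDiff ℝ (⊤ : ℕ∞) φ → HasCompactSupport φ →
      Tendsto (fun n => ∫ x, v n x * φ x) atTop (𝓝 0)) (c : ℝ) {r : ℝ} (hr : 0 < r) :
    Tendsto (fun n => ∫ x in Metric.closedBall c r, v n x) atTop (𝓝 0) := by
  rw [Metric.tendsto_nhds]
  intro η hη
  let b : ContDiffBump c := ⟨r, r + η / 4, hr, by linarith⟩
  have hb := h b b.contDiff b.hasCompactSupport
  filter_upwards [Metric.tendsto_nhds.1 hb (η / 2) (by positivity)] with n hn
  rw [Real.dist_eq, sub_zero] at hn ⊢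
  have hbi : Integrable b := b.continuous.integrable_of_hasCompactSupport b.hasCompactSupport
  have i1 : Integrable fun x => v n x * b x :=
    hbi.mono ((hv n).1.aestronglyMeasurable.mul b.continuous.aestronglyMeasurable)
      (Eventually.of_forall fun x => by
        rw [norm_mul]; exact mul_le_of_le_one_left (norm_nonneg _) ((hv n).2 x))
  set B : ℝ → Set ℝ := fun s => Metric.closedBall c s
  have iB : ∀ s, Integrable ((B s).indicator fun _ => (1:ℝ)) := fun s =>
    (integrable_indicator_iff measurableSet_closedBall).2
      (integrableOn_const (measure_closedBall_lt_top.ne))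
  have eB : ∀ s, 0 ≤ s → ∫ x, (B s).indicator (fun _ => (1:ℝ)) x = 2 * s := by
    intro s hs
    rw [integral_indicator measurableSet_closedBall, setIntegral_const, smul_eq_mul, mul_one,
      Real.volume_real_closedBall hs]
  have i2 : Integrable ((B r).indicator (v n)) := by
    refine (iB r).mono ((hv n).1.indicator measurableSet_closedBall).aestronglyMeasurable
      (Eventually.of_forall fun x => ?_)
    by_cases hx : x ∈ B r
    · simpa [hx] using (hv n).2 x
    · simp [hx]
  rw [← integral_indicator measurableSet_closedBall]
  have hdiff : |(∫ x, (B r).indicator (v n) x) - ∫ x, v n x * b x| ≤ η / 2 := by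
    rw [← integral_sub i2 i1, ← Real.norm_eq_abs]
    refine (norm_integral_le_of_norm_le ((iB (r + η / 4)).sub (iB r))
      (Eventually.of_forall fun x => ?_)).trans ?_
    · have h01 : b x ∈ Icc (0:ℝ) 1 := ⟨b.nonneg, b.le_one⟩
      by_cases hx : x ∈ B r
      · have hx' : x ∈ B (r + η / 4) := Metric.closedBall_subset_closedBall (by linarith) hx
        have : b x = 1 := b.one_of_mem_closedBall hx
        simp [hx, hx', this]
      · by_cases hx' : x ∈ B (r + η / 4)
        · simp only [hx, hx', Pi.sub_apply, indicator_of_mem, indicator_of_notMem,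
            not_false_eq_true, zero_sub, norm_neg, sub_zero, norm_mul]
          exact mul_le_one₀ ((hv n).2 x) (norm_nonneg _)
            (by rw [Real.norm_eq_abs, abs_of_nonneg h01.1]; exact h01.2)
        · have : b x = 0 := b.zero_of_le_dist (not_le.1 hx').le
          simp [hx, hx', this]
    · apply le_of_eq
      have := integral_sub (iB (r + η / 4)) (iB r)
      rw [eB _ (by positivity), eB _ hr.le] at this
      exact this.trans (by ring)
  calc _ ≤ |(∫ x, (B r).indicator (v n) x) - ∫ x, v n x * b x| + |∫ x, v n x * b x| := by
        have := abs_add_le ((∫ x, (B r).indicator (v n) x) - ∫ x, v n x * b x) (∫ x, v n x * b x)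
        rwa [sub_add_cancel] at this
    _ < η := by linarith

/-! ### Spatial primitives and strong convergence -/

/-- Integration by parts against the primitive of an integrable function of one variable. -/
lemma prim_ibp {a ψ : ℝ → ℝ} (ha : Integrable a) (hψ : ContDiff ℝ 1 ψ)
    (hc : HasCompactSupport ψ) :
    ∫ x, (∫ y, if y ≤ x then a y else 0) * deriv ψ x = - ∫ y, a y * ψ y := by
  have hd : Continuous (deriv ψ) := hψ.continuous_deriv le_rfl
  have hdi : Integrable (deriv ψ) := hd.integrable_of_hasCompactSupport hc.deriv
  have hintg : Integrable (Function.uncurry fun x y : ℝ => (if y ≤ x then a y else 0) * deriv ψ x)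
      (volume.prod volume) := by
    have h0 := hdi.mul_prod ha
    have h1 : Integrable (({z : ℝ × ℝ | z.2 ≤ z.1}).indicator
        fun z : ℝ × ℝ => deriv ψ z.1 * a z.2) (volume.prod volume) :=
      h0.indicator (measurableSet_le measurable_snd measurable_fst)
    refine h1.congr (Eventually.of_forall fun z => ?_)
    simp only [indicator, Function.uncurry, mem_ofPred_eq]
    split_ifs <;> ring
  have e1 : ∀ x, (∫ y, if y ≤ x then a y else 0) * deriv ψ x
      = ∫ y, (if y ≤ x then a y else 0) * deriv ψ x := fun x => (integral_mul_const _ _).symm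
  simp_rw [e1]
  rw [integral_integral_swap hintg, ← integral_neg]
  congr 1
  ext y
  have e2 : ∀ x, (if y ≤ x then a y else 0) * deriv ψ x
      = a y * (Ici y).indicator (deriv ψ) x := by
    intro x
    simp only [indicator, mem_Ici]
    split_ifs <;> ring
  simp_rw [e2]
  rw [integral_const_mul, integral_indicator measurableSet_Ici, integral_Ici_eq_integral_Ioi,
    integral_Ioi_of_hasDerivAt_of_tendsto (f := ψ) (m := 0)
      hψ.continuous.continuousWithinAt
      (fun x _ => (hψ.differentiable one_ne_zero x).hasDerivAt) hdi.integrableOn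
      (hc.is_zero_at_infty.mono_left atTop_le_cocompact)]
  ring

/-- The spatial primitive of `v`, cut off to the box `[0,T] × [-L,L]`. -/
def prim (T L : ℝ) (v : ℝ × ℝ → ℝ) (p : ℝ × ℝ) : ℝ :=
  ∫ y, if y ≤ p.2 then (Kb T L).indicator v (p.1, y) else 0

lemma prim_meas (T L : ℝ) {v : ℝ × ℝ → ℝ} (hv : Measurable v) : Measurable (prim T L v) := by
  have h : Measurable fun z : (ℝ × ℝ) × ℝ =>
      if z.2 ≤ z.1.2 then (Kb T L).indicator v (z.1.1, z.2) else 0 := by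
    refine Measurable.ite (measurableSet_le (by fun_prop) (by fun_prop)) ?_ measurable_const
    exact (hv.indicator (Kb_meas T L)).comp (by fun_prop)
  exact (h.stronglyMeasurable.integral_prod_right' (ν := volume)).measurable

lemma indK_slice_int {T L : ℝ} {v : ℝ × ℝ → ℝ} (hv : Measurable v) (hb : ∀ p, |v p| ≤ 1) (t : ℝ) :
    Integrable fun y => (Kb T L).indicator v (t, y) := by
  have h1 : Integrable ((Icc (-L) L).indicator fun _ : ℝ => (1:ℝ)) :=
    (integrable_indicator_iff measurableSet_Icc).2 (integrableOn_const (by simp))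
  refine h1.mono ((hv.indicator (Kb_meas T L)).comp (by fun_prop)).aestronglyMeasurable
    (Eventually.of_forall fun y => ?_)
  simp only [indicator, Kb, mem_prod, Real.norm_eq_abs]
  have := hb (t, y)
  split_ifs <;> simp_all

lemma prim_abs_le {T L : ℝ} (hL : 0 ≤ L) {v : ℝ × ℝ → ℝ} (hb : ∀ p, |v p| ≤ 1) (p : ℝ × ℝ) :
    |prim T L v p| ≤ 2 * L := by
  have h1 : Integrable ((Icc (-L) L).indicator fun _ : ℝ => (1:ℝ)) :=
    (integrable_indicator_iff measurableSet_Icc).2 (integrableOn_const (by simp))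
  have h2 : |prim T L v p| ≤ ∫ y, (Icc (-L) L).indicator (fun _ : ℝ => (1:ℝ)) y := by
    refine norm_integral_le_of_norm_le (f := fun y => if y ≤ p.2 then (Kb T L).indicator v (p.1, y) else 0) h1 (Eventually.of_forall fun y => ?_)
    simp only [indicator, Kb, mem_prod, Real.norm_eq_abs]
    have := hb (p.1, y)
    split_ifs <;> simp_all
  rw [integral_indicator measurableSet_Icc] at h2
  simp at h2
  rcases h2 with h | h
  · linarith
  · rw [h, abs_zero]
    linarith

lemma px_slice {φ : ℝ × ℝ → ℝ} (hφ : ContDiff ℝ 1 φ) (t x : ℝ) :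
    deriv (fun y => φ (t, y)) x = pxF φ (t, x) := by
  have h1 : HasFDerivAt φ (fderiv ℝ φ (t, x)) (t, x) :=
    (hφ.differentiable one_ne_zero (t, x)).hasFDerivAt
  have h2 : HasDerivAt (fun y : ℝ => ((t, y) : ℝ × ℝ)) (0, 1) x :=
    (hasDerivAt_const x t).prodMk (hasDerivAt_id x)
  exact (h1.comp_hasDerivAt x h2).deriv

lemma slice_cpt {φ : ℝ × ℝ → ℝ} (hc : HasCompactSupport φ) (t : ℝ) :
    HasCompactSupport fun y => φ (t, y) := by
  refine HasCompactSupport.intro (hc.isCompact.image continuous_snd) fun y hy => ?_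
  by_contra h
  exact hy ⟨(t, y), subset_tsupport _ h, rfl⟩

lemma bdd_mul_cpt {a g : ℝ × ℝ → ℝ} (ha : Continuous a) (hc : HasCompactSupport a)
    (hg : Measurable g) {C : ℝ} (hC : ∀ p, |g p| ≤ C) : Integrable fun p => g p * a p :=
  (ha.integrable_of_hasCompactSupport hc).bdd_mul hg.aestronglyMeasurable
    (Eventually.of_forall hC)

lemma prim_weak {T L : ℝ} (hL : 0 ≤ L) {v : ℝ × ℝ → ℝ} (hv : Measurable v)
    (hb : ∀ p, |v p| ≤ 1) : HasWeakDx T (prim T L v) ((Kb T L).indicator v) := by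
  intro φ
  have h1 : ContDiff ℝ 1 φ.toFun := φ.smooth.of_le le1
  have hi1 : Integrable fun p => prim T L v p * pxF φ.toFun p :=
    bdd_mul_cpt (px_cont h1) (px_cpt φ.cpt) (prim_meas T L hv) (prim_abs_le hL hb)
  have hi2 : Integrable fun p => (Kb T L).indicator v p * φ.toFun p :=
    bdd_mul_cpt h1.continuous φ.cpt (hv.indicator (Kb_meas T L)) (C := 1) fun p => by
      have := hb p
      simp only [indicator]
      split_ifs <;> simp_all
  rw [pair_px, pair_id]
  rw [Measure.volume_eq_prod] at hi1 hi2 ⊢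
  rw [integral_prod _ hi1, integral_prod _ hi2, ← integral_neg]
  congr 1
  ext t
  have := prim_ibp (indK_slice_int (L := L) (T := T) hv hb t)
    (ψ := fun y => φ.toFun (t, y)) (by fun_prop) (slice_cpt φ.cpt t)
  rw [← this]
  simp only [prim, px_slice h1]

lemma bdd_locInt {g : ℝ × ℝ → ℝ} (hg : Measurable g) {C : ℝ} (hC : ∀ p, |g p| ≤ C) :
    LocallyIntegrable g := by
  have h1 : LocallyIntegrable (fun _ : ℝ × ℝ => C) := locallyIntegrable_const C
  exact h1.mono hg.aestronglyMeasurable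
    (Eventually.of_forall fun p => (hC p).trans (le_abs_self C))

/-- A cutoff times a smooth function, as a test function. -/
def cutTest {T R : ℝ} {m : ℕ} {χ : ℝ × ℝ → ℝ} (hs : CutSupp T R m χ)
    (hχ : ContDiff ℝ (⊤ : ℕ∞) χ) {v : ℝ × ℝ → ℝ}
    (hv : ContDiff ℝ (⊤ : ℕ∞) v) : TTest T where
  toFun := fun p => χ p * v p
  smooth := hχ.mul hv
  cpt := hs.cpt.mul_right
  supp := by
    intro p hp
    have := hs p (left_ne_zero_of_mul hp)
    have h2 : (0:ℝ) < 1 / ((m:ℝ) + 1) := by positivity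
    exact ⟨⟨by linarith [this.1], by linarith [this.2.1]⟩, mem_univ _⟩

lemma cut_mul_int {T R : ℝ} (hR : 0 < R) {m : ℕ} {χ : ℝ × ℝ → ℝ} (hs : CutSupp T R m χ)
    (hχ : Continuous χ) {w : ℝ × ℝ → ℝ} (hw : L2loc T w) : Integrable fun p => χ p * w p := by
  have e : (fun p => χ p * w p) = fun p => (Kb T R).indicator w p * χ p := by
    ext p
    by_cases hp : p ∈ Kb T R
    · simp [hp, mul_comm]
    · simp [hs.zero hp]
  rw [e]
  have hm : MemLp χ 2 := hχ.memLp_of_hasCompactSupport hs.cpt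
  exact (indK_memLp hR hw).integrable_mul hm

/-- The `L²` size of `v` inside a cutoff is controlled by its primitive `V`: testing the weak
derivative of `v` with `χ J_n V` and letting `n → ∞` gives `∫ χ v² = -∫ V (χ_x v + χ w)`. -/
lemma cut_identity {T R : ℝ} (hR : 0 < R) {m : ℕ} {χ : ℝ × ℝ → ℝ}
    (hs : CutSupp T R m χ) (hχ : ContDiff ℝ (⊤ : ℕ∞) χ) {v w : ℝ × ℝ → ℝ} (hv : Measurable v)
    (hb : ∀ p, |v p| ≤ 1) (hw : L2loc T w) (hwd : HasWeakDx T v w) :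
    ∫ p, v p * (pxF χ p * prim T (R + 1) v p + χ p * v p)
      = - ∫ p, (χ p * w p) * prim T (R + 1) v p := by
  have h1 : ContDiff ℝ 1 χ := hχ.of_le le1
  have hVm := prim_meas T (R + 1) hv
  have hVb := prim_abs_le (T := T) (L := R + 1) (by linarith) hb
  have hVl := bdd_locInt hVm hVb
  have hvt : Measurable ((Kb T (R + 1)).indicator v) := hv.indicator (Kb_meas T _)
  have hvtb : ∀ p, |(Kb T (R + 1)).indicator v p| ≤ 1 := fun p => by
    have := hb p
    simp only [indicator]
    split_ifs <;> simp_all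
  have hvtl := bdd_locInt hvt hvtb
  have hwk := prim_weak (T := T) (L := R + 1) (by linarith) hv hb
  have key : ∀ n, m ≤ n → ∫ p, v p * (pxF χ p * J n (prim T (R + 1) v) p
        + χ p * J n ((Kb T (R + 1)).indicator v) p)
      = - ∫ p, (χ p * w p) * J n (prim T (R + 1) v) p := by
    intro n hn
    have e := hwd (cutTest hs hχ (J_contDiff n hVl))
    rw [pair_px, pair_id] at e
    have ii : (Kb T (R + 1)).indicator ((Kb T (R + 1)).indicator v)
        = (Kb T (R + 1)).indicator v := by
      rw [indicator_indicator, inter_self]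
    simp only [cutTest] at e
    simp only [J_px hs hχ hVl hwk n hn, ii] at e
    rw [e]
    congr 2
    ext p
    ring
  obtain ⟨Cx, hCx, hCxb⟩ := bdd_of_cpt (px_cont h1) (px_cpt hs.cpt)
  have hJV : ∀ n p, |J n (prim T (R + 1) v) p| ≤ 2 * (R + 1) :=
    fun n p => J_abs_le n fun q _ => hVb q
  have hJv : ∀ n p, |J n ((Kb T (R + 1)).indicator v) p| ≤ 1 :=
    fun n p => J_abs_le n fun q _ => hvtb q
  have hwi := cut_mul_int hR hs hχ.continuous hw
  have l1 : Tendsto (fun n => ∫ p, v p * (pxF χ p * J n (prim T (R + 1) v) p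
        + χ p * J n ((Kb T (R + 1)).indicator v) p)) atTop
      (𝓝 (∫ p, v p * (pxF χ p * prim T (R + 1) v p + χ p * v p))) := by
    refine tendsto_integral_of_dominated_convergence
      (fun p => |pxF χ p| * (2 * (R + 1)) + |χ p|) (fun n => ?_) ?_ (fun n => ?_) ?_
    · have a1 := J_meas n hVl
      have a2 := J_meas n hvtl
      have a3 := (px_cont h1).measurable
      have a4 := h1.continuous.measurable
      exact (hv.mul ((a3.mul a1).add (a4.mul a2))).aestronglyMeasurable
    · exact (((px_cont h1).abs.integrable_of_hasCompactSupport
        ((px_cpt hs.cpt).comp_left (g := fun x : ℝ => |x|) abs_zero)).mul_const _).add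
        (h1.continuous.abs.integrable_of_hasCompactSupport
        (hs.cpt.comp_left (g := fun x : ℝ => |x|) abs_zero))
    · refine Eventually.of_forall fun p => ?_
      rw [Real.norm_eq_abs, abs_mul]
      calc _ ≤ 1 * (|pxF χ p| * |J n (prim T (R + 1) v) p|
            + |χ p| * |J n ((Kb T (R + 1)).indicator v) p|) := by
            gcongr
            · exact hb p
            · rw [← abs_mul, ← abs_mul]
              exact abs_add_le _ _
        _ ≤ 1 * (|pxF χ p| * (2 * (R + 1)) + |χ p| * 1) := by
            gcongr
            · exact hJV n p
            · exact hJv n p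
        _ = _ := by ring
    · filter_upwards [J_ae_tendsto hVl, J_ae_tendsto hvtl] with p q1 q2
      have e : χ p * v p = χ p * (Kb T (R + 1)).indicator v p := by
        by_cases hp : p ∈ Kb T R
        · rw [indicator_of_mem (Kb_mono (by linarith) hp)]
        · simp [hs.zero hp]
      rw [e]
      exact ((q1.const_mul _).add (q2.const_mul _)).const_mul _
  have l2 : Tendsto (fun n => - ∫ p, (χ p * w p) * J n (prim T (R + 1) v) p) atTop
      (𝓝 (- ∫ p, (χ p * w p) * prim T (R + 1) v p)) := by
    refine Tendsto.neg (tendsto_integral_of_dominated_convergence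
      (fun p => |χ p * w p| * (2 * (R + 1))) (fun n => ?_) ?_ (fun n => ?_) ?_)
    · exact hwi.aestronglyMeasurable.mul (J_meas n hVl).aestronglyMeasurable
    · exact hwi.abs.mul_const _
    · refine Eventually.of_forall fun p => ?_
      rw [Real.norm_eq_abs, abs_mul]
      gcongr
      exact hJV n p
    · filter_upwards [J_ae_tendsto hVl] with p q1
      exact q1.const_mul _
  refine tendsto_nhds_unique l1 (l2.congr' ?_)
  filter_upwards [eventually_ge_atTop m] with n hn
  exact (key n hn).symm

lemma indK_abs {T R : ℝ} {v : ℝ × ℝ → ℝ} (hb : ∀ p, |v p| ≤ 1) (p : ℝ × ℝ) :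
    |(Kb T R).indicator v p| ≤ 1 := by
  have := hb p
  simp only [indicator]
  split_ifs <;> simp_all

lemma bdd_sq_intOn {T R : ℝ} {g : ℝ × ℝ → ℝ} (hg : Measurable g) {C : ℝ} (hC : ∀ p, |g p| ≤ C) :
    IntegrableOn (fun p => g p ^ 2) (Kb T R) := by
  have h1 : IntegrableOn (fun _ : ℝ × ℝ => C ^ 2) (Kb T R) := integrableOn_const (Kb_fin T R)
  refine Integrable.mono' h1 (hg.pow_const 2).aestronglyMeasurable
    (Eventually.of_forall fun p => ?_)
  rw [Real.norm_eq_abs, abs_of_nonneg (sq_nonneg _), ← sq_abs]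
  exact pow_le_pow_left₀ (abs_nonneg _) (hC p) 2

/-- Interpolation between the primitive and the derivative; the constant `A`, which comes from the
derivative of the spatial cutoff, does not depend on `v`, `w`, `κ`. -/
lemma interp {T R : ℝ} (hR : 0 < R) : ∃ A > 0, ∀ (v w : ℝ × ℝ → ℝ), Measurable v →
    (∀ p, |v p| ≤ 1) → L2loc T w → HasWeakDx T v w → ∀ κ > 0,
    ∫ p in Kb T R, v p ^ 2 ≤ κ * (A + ∫ p in Kb T (R + 1), w p ^ 2)
      + 1 / (2 * κ) * ∫ p in Kb T (R + 1), prim T (R + 1 + 1) v p ^ 2 := by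
  obtain ⟨Cθ, hCθ, hθ⟩ : ∃ C > 0, ∀ x, |2 * xbump R hR x * deriv (xbump R hR) x| ≤ C := by
    have hc1 : Continuous (deriv (xbump R hR)) := (xbump_contDiff hR).continuous_deriv le1
    have hcc : HasCompactSupport fun x => 2 * xbump R hR x * deriv (xbump R hR) x :=
      (xbump R hR).hasCompactSupport.deriv.mul_left
    obtain ⟨C, hC⟩ := hcc.exists_bound_of_continuous
      ((continuous_const.mul (xbump_contDiff hR).continuous).mul hc1)
    refine ⟨max C 1, by positivity, fun x => (hC x).trans (le_max_left _ _)⟩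
  refine ⟨Cθ ^ 2 * volume.real (Kb T (R + 1)) + 1, by positivity, ?_⟩
  intro v w hv hb hw hwd κ hκ
  have hVm := prim_meas T (R + 1 + 1) hv
  have hVb := prim_abs_le (T := T) (L := R + 1 + 1) (by linarith) hb
  have hV2 : IntegrableOn (fun p => prim T (R + 1 + 1) v p ^ 2) (Kb T (R + 1)) :=
    bdd_sq_intOn hVm hVb
  have hw2 : IntegrableOn (fun p => w p ^ 2) (Kb T (R + 1)) := hw.2 (R + 1) (by linarith)
  have hv2 : L2loc T v := ⟨hv, fun R _ => bdd_sq_intOn hv hb⟩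
  refine setIntegral_le_of_scut hR (fun p => sq_nonneg _) (hv.pow_const 2)
    (bdd_sq_intOn hv hb) (fun m => scut_le_px T R hR m hv2) fun m => ?_
  have hs := scut_supp T R hR m
  have hχ := scut_contDiff T R hR m
  set χ := scut T R hR m with hχd
  have h1 : ContDiff ℝ 1 χ := hχ.of_le le1
  have id := cut_identity (by linarith : 0 < R + 1) hs hχ hv hb hw hwd
  set V := prim T (R + 1 + 1) v with hV
  have hpx : ∀ p, |pxF χ p| ≤ Cθ := by
    intro p
    rw [pxF, hχd, scut_fderiv]
    have a := tcut_mem T m p.1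
    have := hθ p.2
    simp only [mul_zero, zero_mul, zero_add, mul_one, abs_mul (tcut T m p.1)]
    rw [abs_of_nonneg a.1]
    nlinarith [abs_nonneg (2 * xbump R hR p.2 * deriv (xbump R hR) p.2), a.2]
  have i1 : Integrable fun p => v p * V p * pxF χ p := by
    refine bdd_mul_cpt (px_cont h1) (px_cpt hs.cpt) (hv.mul hVm) (C := 2 * (R + 1 + 1))
      fun p => ?_
    rw [abs_mul]
    nlinarith [hb p, hVb p, abs_nonneg (v p), abs_nonneg (V p)]
  have i2 : Integrable fun p => χ p * v p ^ 2 := scut_le_px T R hR m hv2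
  have i3 : Integrable fun p => χ p * w p * V p :=
    (cut_mul_int (by linarith) hs h1.continuous hw).mul_bdd hVm.aestronglyMeasurable
      (Eventually.of_forall hVb)
  have eq : ∫ p, χ p * v p ^ 2 = ∫ p, (-(v p * V p * pxF χ p) - χ p * w p * V p) := by
    have e : ∫ p, v p * (pxF χ p * V p + χ p * v p)
        = ∫ p, (1 * (v p * V p * pxF χ p) + 1 * (χ p * v p ^ 2) + 0 * (χ p * v p ^ 2)) := by
      congr 1
      ext p
      ring
    rw [e, integral_lin3 i1 i2 i2] at id
    have e2 : ∫ p, (-(v p * V p * pxF χ p) - χ p * w p * V p)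
        = ∫ p, ((-1) * (v p * V p * pxF χ p) + (-1) * (χ p * w p * V p)
          + 0 * (χ p * v p ^ 2)) := by
      congr 1
      ext p
      ring
    rw [e2, integral_lin3 i1 i3 i2]
    linarith
  rw [eq]
  have off : ∀ p ∉ Kb T (R + 1), -(v p * V p * pxF χ p) - χ p * w p * V p = 0 := by
    intro p hp
    rw [pxF, hs.fderiv_zero hp, hs.zero hp]
    simp
  rw [← setIntegral_eq_integral_of_forall_compl_eq_zero off]
  have ci : IntegrableOn (fun _ : ℝ × ℝ => (1:ℝ)) (Kb T (R + 1)) :=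
    integrableOn_const (Kb_fin T (R + 1))
  calc _ ≤ ∫ p in Kb T (R + 1), (κ * Cθ ^ 2 * 1 + κ * w p ^ 2 + 1 / (2 * κ) * V p ^ 2) := by
        refine integral_mono (i1.neg.sub i3).integrableOn
          (((ci.const_mul _).add (hw2.const_mul _)).add (hV2.const_mul _)) fun p => ?_
        have b1 : -(v p * V p * pxF χ p) ≤ |V p| * Cθ := by
          refine (neg_le_abs _).trans ?_
          rw [abs_mul, abs_mul]
          have := mul_le_mul (hb p) (hpx p) (abs_nonneg _) zero_le_one
          nlinarith [abs_nonneg (V p)]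
        have b2 : - (χ p * w p * V p) ≤ |V p| * |w p| := by
          refine (neg_le_abs _).trans ?_
          have c := scut_mem T R hR m p
          rw [abs_mul, abs_mul, abs_of_nonneg c.1]
          have := mul_le_mul_of_nonneg_right c.2 (mul_nonneg (abs_nonneg (w p)) (abs_nonneg (V p)))
          calc _ = scut T R hR m p * (|w p| * |V p|) := by ring
            _ ≤ _ := this
            _ = _ := by ring
        have y : ∀ x : ℝ, |V p| * x ≤ κ * x ^ 2 + 1 / (4 * κ) * V p ^ 2 := by
          intro x
          have : 0 ≤ (1 / (4 * κ)) * (|V p| - 2 * κ * x) ^ 2 := by positivity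
          have e : (1 / (4 * κ)) * (|V p| - 2 * κ * x) ^ 2
            = 1 / (4 * κ) * |V p| ^ 2 - |V p| * x + κ * x ^ 2 := by
              field_simp
              ring
          rw [e, sq_abs] at this
          linarith
        have y1 := y Cθ
        have y2 := y |w p|
        rw [sq_abs] at y2
        have : 1 / (2 * κ) * V p ^ 2 = 1 / (4 * κ) * V p ^ 2 + 1 / (4 * κ) * V p ^ 2 := by
          field_simp
          ring
        simp only
        linarith
    _ = κ * Cθ ^ 2 * (volume.real (Kb T (R + 1))) + κ * (∫ p in Kb T (R + 1), w p ^ 2)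
        + 1 / (2 * κ) * ∫ p in Kb T (R + 1), V p ^ 2 := by
        rw [integral_lin3 ci hw2 hV2]
        simp
    _ ≤ _ := by nlinarith

lemma cU.sub_abs_le {T : ℝ} (u v : cU T) (p : ℝ × ℝ) : |u.toFun p - v.toFun p| ≤ 1 := by
  have h1 := u.mem01 p
  have h2 := v.mem01 p
  rw [_root_.abs_le]
  exact ⟨by linarith [h1.1, h2.2], by linarith [h1.2, h2.1]⟩

lemma prim_tendsto {T R L : ℝ} (hRL : R < L) {u : cU T} {us : ℕ → cU T}
    (h : Tendsto (fun n => dcU T (us n) u) atTop (𝓝 0)) :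
    Tendsto (fun n => ∫ p in Kb T R, prim T L (fun q => (us n).toFun q - u.toFun q) p ^ 2)
      atTop (𝓝 0) := by
  by_cases hR : R < 0
  · have : Kb T R = ∅ := by
      rw [Kb, Icc_eq_empty (by linarith : ¬ (-R ≤ R)), prod_empty]
    simp [this]
  push Not at hR
  have hm : ∀ n, Measurable fun q => (us n).toFun q - u.toFun q :=
    fun n => (us n).meas.sub u.meas
  have hb := fun n => (us n).sub_abs_le u
  rw [show (0:ℝ) = ∫ p in Kb T R, (0:ℝ) by simp]
  refine tendsto_integral_of_dominated_convergence (fun _ => (2 * L) ^ 2)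
    (fun n => ((prim_meas T L (hm n)).pow_const 2).aestronglyMeasurable)
    (integrableOn_const (Kb_fin T R)) (fun n => ?_) ?_
  · refine Eventually.of_forall fun p => ?_
    rw [Real.norm_eq_abs, abs_of_nonneg (sq_nonneg _), ← sq_abs]
    exact pow_le_pow_left₀ (abs_nonneg _) (prim_abs_le (by linarith) (hb n) p) 2
  · filter_upwards [ae_restrict_mem (Kb_meas T R)] with p hp
    have ht : p.1 ∈ Icc (0:ℝ) T := hp.1
    have hx : p.2 ∈ Icc (-R) R := hp.2
    have hr : 0 < (p.2 + L) / 2 := by linarith [hx.1]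
    have key := ball_tendsto (fun n => (us n).slice u p.1)
      (fun φ hφ hc => slice_tendsto h ht hφ hc) ((p.2 - L) / 2) hr
    have e : ∀ n, prim T L (fun q => (us n).toFun q - u.toFun q) p
        = ∫ x in Metric.closedBall ((p.2 - L) / 2) ((p.2 + L) / 2),
          ((us n).toFun (p.1, x) - u.toFun (p.1, x)) := by
      intro n
      rw [← integral_indicator Metric.isClosed_closedBall.measurableSet, prim]
      congr 1
      ext y
      have e3 : Metric.closedBall ((p.2 - L) / 2) ((p.2 + L) / 2) = Icc (-L) p.2 := by
        rw [Real.closedBall_eq_Icc]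
        congr 1 <;> ring
      rw [e3]
      simp only [indicator, Kb, mem_prod, mem_Icc]
      have hxx := hx.2
      by_cases h1 : y ≤ p.2
      · have h3 : y ≤ L := by linarith
        simp [h1, h3, ht.1, ht.2]
      · simp [h1]
    simp_rw [e]
    simpa using key.pow 2

lemma L2loc.sub {T : ℝ} {w₁ w₂ : ℝ × ℝ → ℝ} (h1 : L2loc T w₁) (h2 : L2loc T w₂) :
    L2loc T fun p => w₁ p - w₂ p := by
  refine ⟨h1.1.sub h2.1, fun R hR => ?_⟩
  have := ((h1.2 R hR).const_mul 2).add ((h2.2 R hR).const_mul 2)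
  refine Integrable.mono' this ((h1.1.sub h2.1).pow_const 2).aestronglyMeasurable
    (Eventually.of_forall fun p => ?_)
  rw [Real.norm_eq_abs, abs_of_nonneg (sq_nonneg _)]
  simp only [Pi.add_apply]
  nlinarith [sq_nonneg (w₁ p + w₂ p)]

lemma L2loc.mul_int {T R : ℝ} (hR : 0 < R) {w a : ℝ × ℝ → ℝ} (hw : L2loc T w)
    (ha : Measurable a) {C : ℝ} (hC : ∀ p, |a p| ≤ C) (h0 : ∀ p ∉ Kb T R, a p = 0) :
    Integrable fun p => w p * a p := by
  have e : (fun p => w p * a p) = fun p => (Kb T R).indicator w p * (Kb T R).indicator a p := by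
    ext p
    by_cases hp : p ∈ Kb T R
    · simp [hp]
    · simp [h0 p hp]
  rw [e]
  exact (indK_memLp hR hw).integrable_mul (indK_memLp_bdd ha hC)

lemma HasWeakDx.sub {T : ℝ} {u₁ u₂ : cU T} {w₁ w₂ : ℝ × ℝ → ℝ} (h1 : L2loc T w₁)
    (h2 : L2loc T w₂) (d1 : HasWeakDx T u₁.toFun w₁) (d2 : HasWeakDx T u₂.toFun w₂) :
    HasWeakDx T (fun p => u₁.toFun p - u₂.toFun p) fun p => w₁ p - w₂ p := by
  intro φ
  have hφ : ContDiff ℝ 1 φ.toFun := φ.smooth.of_le le1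
  obtain ⟨R, hR, h0⟩ := φ.exists_box
  obtain ⟨C, hC, hCb⟩ := bdd_of_cpt hφ.continuous φ.cpt
  have a1 := d1 φ
  have a2 := d2 φ
  rw [pair_px, pair_id] at a1 a2 ⊢
  simp only [sub_mul]
  rw [integral_sub
    (bdd_mul_cpt (px_cont hφ) (px_cpt φ.cpt) u₁.meas u₁.abs_le)
    (bdd_mul_cpt (px_cont hφ) (px_cpt φ.cpt) u₂.meas u₂.abs_le),
    integral_sub (h1.mul_int hR hφ.continuous.measurable hCb fun p hp => (h0 p hp).1)
    (h2.mul_int hR hφ.continuous.measurable hCb fun p hp => (h0 p hp).1)]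
  linarith

/-- Convergence in `𝒰` together with locally bounded spatial gradients gives strong local `L²`
convergence. -/
lemma strong_conv {T R : ℝ} (hR : 0 < R) {u : cU T} {us : ℕ → cU T}
    (h : Tendsto (fun n => dcU T (us n) u) atTop (𝓝 0)) {l : Filter ℕ} (hl : l ≤ atTop)
    {w : ℝ × ℝ → ℝ} {ws : ℕ → ℝ × ℝ → ℝ} (hw : L2loc T w) (hwd : HasWeakDx T u.toFun w)
    {B : ℝ} (hws : ∀ᶠ n in l, L2loc T (ws n) ∧ HasWeakDx T (us n).toFun (ws n) ∧
      ∫ p in Kb T (R + 1), (ws n p - w p) ^ 2 ≤ B) :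
    Tendsto (fun n => ∫ p in Kb T R, ((us n).toFun p - u.toFun p) ^ 2) l (𝓝 0) := by
  obtain ⟨A, hA, hintg⟩ := interp (T := T) hR
  have hV := (prim_tendsto (T := T) (R := R + 1) (L := R + 1 + 1) (by linarith) h).mono_left hl
  have hnn : ∀ n, 0 ≤ ∫ p in Kb T R, ((us n).toFun p - u.toFun p) ^ 2 :=
    fun n => integral_nonneg fun p => sq_nonneg _
  rw [Metric.tendsto_nhds]
  intro δ hδ
  -- `κ` makes the gradient part of the interpolation inequality at most `δ / 2`
  set κ := δ / (2 * (A + |B|)) with hκd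
  have hκ : 0 < κ := by positivity
  have h1 := (hV.const_mul (1 / (2 * κ))).eventually (gt_mem_nhds
    (show 1 / (2 * κ) * 0 < δ / 2 by rw [mul_zero]; positivity))
  filter_upwards [h1, hws] with n h1 h2
  rw [Real.dist_eq, sub_zero, abs_of_nonneg (hnn n)]
  have h3 := hintg (fun q => (us n).toFun q - u.toFun q) _ ((us n).meas.sub u.meas)
    ((us n).sub_abs_le u) (h2.1.sub hw)
    (HasWeakDx.sub h2.1 hw h2.2.1 hwd) κ hκ
  have h4 : κ * (A + ∫ p in Kb T (R + 1), (ws n p - w p) ^ 2) ≤ δ / 2 := by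
    calc _ ≤ κ * (A + |B|) := by
          gcongr
          exact h2.2.2.trans (le_abs_self B)
      _ = δ / 2 := by
          rw [hκd]
          field_simp
  linarith

/-- Convergence in `𝒰` implies weak convergence in space-time. -/
lemma weak_conv {T : ℝ} {u : cU T} {us : ℕ → cU T}
    (h : Tendsto (fun n => dcU T (us n) u) atTop (𝓝 0)) {g : ℝ × ℝ → ℝ}
    (hg : ContDiff ℝ (⊤ : ℕ∞) g) (hc : HasCompactSupport g)
    (h0 : ∀ p : ℝ × ℝ, p.1 ∉ Icc (0:ℝ) T → g p = 0) :
    Tendsto (fun n => ∫ p, (us n).toFun p * g p) atTop (𝓝 (∫ p, u.toFun p * g p)) := by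
  have i1 : ∀ v : cU T, Integrable fun p => v.toFun p * g p :=
    fun v => bdd_mul_cpt hg.continuous hc v.meas v.abs_le
  suffices hs : Tendsto (fun n => ∫ p, ((us n).toFun p - u.toFun p) * g p) atTop (𝓝 0) by
    have := hs.add_const (∫ p, u.toFun p * g p)
    rw [zero_add] at this
    refine this.congr fun n => ?_
    simp only [sub_mul]
    rw [integral_sub (i1 _) (i1 _)]
    ring
  have i2 : ∀ n, Integrable fun p => ((us n).toFun p - u.toFun p) * g p :=
    fun n => bdd_mul_cpt hg.continuous hc ((us n).meas.sub u.meas) ((us n).sub_abs_le u)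
  have i3 : Integrable fun p => |g p| := hg.continuous.abs.integrable_of_hasCompactSupport
        (hc.comp_left (g := fun x : ℝ => |x|) abs_zero)
  have e : ∀ n, ∫ p, ((us n).toFun p - u.toFun p) * g p
      = ∫ t, ∫ x, ((us n).toFun (t, x) - u.toFun (t, x)) * g (t, x) := by
    intro n
    have := i2 n
    rw [Measure.volume_eq_prod] at this ⊢
    rw [integral_prod _ this]
  simp_rw [e]
  rw [show (0:ℝ) = ∫ t : ℝ, (0:ℝ) by simp]
  rw [Measure.volume_eq_prod] at i3
  refine tendsto_integral_of_dominated_convergence (fun t => ∫ x, |g (t, x)|)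
    (fun n => ?_) i3.integral_prod_left (fun n => ?_) ?_
  · have := i2 n
    rw [Measure.volume_eq_prod] at this
    exact this.integral_prod_left.aestronglyMeasurable
  · refine Eventually.of_forall fun t => ?_
    refine norm_integral_le_of_norm_le ?_ (Eventually.of_forall fun x => ?_)
    · have : Continuous fun x => |g (t, x)| := by
        have := hg.continuous
        fun_prop
      exact this.integrable_of_hasCompactSupport
        ((slice_cpt hc t).comp_left (g := fun x : ℝ => |x|) abs_zero)
    · rw [Real.norm_eq_abs, abs_mul]
      nlinarith [(us n).sub_abs_le u (t, x), abs_nonneg (g (t, x))]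
  · refine Eventually.of_forall fun t => ?_
    by_cases ht : t ∈ Icc (0:ℝ) T
    · exact slice_tendsto h ht (by fun_prop) (slice_cpt hc t)
    · simp only [h0 (t, _) ht, mul_zero, integral_zero]
      exact tendsto_const_nhds

/-! ### Weak compactness of the gradients -/

/-- Weak compactness of balls of a Hilbert space, along an ultrafilter. -/
lemma hilbert_weak {H : Type*} [NormedAddCommGroup H] [InnerProductSpace ℝ H] [CompleteSpace H]
    {ι : Type*} (F : Ultrafilter ι) {g : ι → H} {C : ℝ} (hC : ∀ᶠ i in (F : Filter ι), ‖g i‖ ≤ C) :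
    ∃ G : H, ∀ ψ : H, Tendsto (fun i => inner ℝ (g i) ψ) F (𝓝 (inner ℝ G ψ)) := by
  have hK : IsCompact (WeakDual.toStrongDual ⁻¹' Metric.closedBall (0 : StrongDual ℝ H) C) :=
    WeakDual.isCompact_closedBall 0 C
  let Φ : ι → WeakDual ℝ H := fun i =>
    StrongDual.toWeakDual (InnerProductSpace.toDual ℝ H (g i))
  have hmem : WeakDual.toStrongDual ⁻¹' Metric.closedBall (0 : StrongDual ℝ H) C ∈ F.map Φ := by
    rw [Ultrafilter.mem_map]
    filter_upwards [hC] with i hi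
    simpa [Φ] using hi
  obtain ⟨x, -, hx⟩ := hK.ultrafilter_le_nhds' (F.map Φ) hmem
  refine ⟨(InnerProductSpace.toDual ℝ H).symm (WeakDual.toStrongDual x), fun ψ => ?_⟩
  have h1 : Tendsto Φ F (𝓝 x) := hx
  have h2 := ((WeakDual.eval_continuous ψ).tendsto x).comp h1
  have e : inner ℝ ((InnerProductSpace.toDual ℝ H).symm (WeakDual.toStrongDual x)) ψ = x ψ := by
    rw [InnerProductSpace.toDual_symm_apply]
    rfl
  rw [e]
  exact h2

lemma L2_weak {μ : Measure (ℝ × ℝ)} (F : Ultrafilter ℕ) {g : ℕ → ℝ × ℝ → ℝ} {C : ℝ}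
    (hg : ∀ n, MemLp (g n) 2 μ) (hC : ∀ᶠ n in (F : Filter ℕ), ∫ p, g n p ^ 2 ∂μ ≤ C) :
    ∃ G : ℝ × ℝ → ℝ, Measurable G ∧ MemLp G 2 μ ∧ ∀ ψ, MemLp ψ 2 μ →
      Tendsto (fun n => ∫ p, g n p * ψ p ∂μ) F (𝓝 (∫ p, G p * ψ p ∂μ)) := by
  have key : ∀ {a b : ℝ × ℝ → ℝ} (ha : MemLp a 2 μ) (hb : MemLp b 2 μ),
      inner ℝ (ha.toLp a) (hb.toLp b) = ∫ p, a p * b p ∂μ := by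
    intro a b ha hb
    rw [L2.inner_def]
    refine integral_congr_ae ?_
    filter_upwards [ha.coeFn_toLp, hb.coeFn_toLp] with p h1 h2
    rw [h1, h2]
    simp [mul_comm]
  obtain ⟨G, hG⟩ := hilbert_weak F (g := fun n => (hg n).toLp (g n)) (C := Real.sqrt C) (by
    filter_upwards [hC] with n hn
    refine Real.le_sqrt_of_sq_le ?_
    rw [← real_inner_self_eq_norm_sq, key]
    simpa only [← sq] using hn)
  have hGm := (Lp.memLp G)
  obtain ⟨G', hG'm, hG'⟩ := hGm.aestronglyMeasurable.aemeasurable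
  have hG'L : MemLp G' 2 μ := hGm.ae_eq hG'
  refine ⟨G', hG'm, hG'L, fun ψ hψ => ?_⟩
  have h1 := hG (hψ.toLp ψ)
  simp_rw [key] at h1
  have e : G = hG'L.toLp G' := by
    refine Lp.ext ?_
    exact hG'.trans hG'L.coeFn_toLp.symm
  rw [e, key] at h1
  exact h1

lemma ind_mul {s : Set (ℝ × ℝ)} {a b : ℝ × ℝ → ℝ} (h : ∀ p ∉ s, b p = 0) (p : ℝ × ℝ) :
    s.indicator a p * b p = a p * b p := by
  by_cases hp : p ∈ s
  · simp [hp]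
  · simp [h p hp]

lemma setInt_sq_eq {T R : ℝ} (w : ℝ × ℝ → ℝ) :
    ∫ p, (Kb T R).indicator w p ^ 2 = ∫ p in Kb T R, w p ^ 2 := by
  rw [← integral_indicator (Kb_meas T R)]
  congr 1
  ext p
  by_cases hp : p ∈ Kb T R <;> simp [hp]

/-- Local weak `L²` compactness: functions bounded in `L²` on each box have a common weak limit
along an ultrafilter. The limits on the boxes `[0,T] × [-(k+1), k+1]` agree almost everywhere
where they overlap, and are glued. -/
lemma loc_weak {T : ℝ} (F : Ultrafilter ℕ) {w : ℕ → ℝ × ℝ → ℝ} (hw : ∀ n, L2loc T (w n))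
    (hB : ∀ R > 0, ∃ C, ∀ᶠ n in (F : Filter ℕ), ∫ p in Kb T R, w n p ^ 2 ≤ C) :
    ∃ W, L2loc T W ∧ ∀ R, ∀ ψ : ℝ × ℝ → ℝ, MemLp ψ 2 → (∀ p ∉ Kb T R, ψ p = 0) →
      Tendsto (fun n => ∫ p, w n p * ψ p) F (𝓝 (∫ p, W p * ψ p)) := by
  have hpos : ∀ k : ℕ, (0:ℝ) < (k:ℝ) + 1 := fun k => by positivity
  have step : ∀ k : ℕ, ∃ G : ℝ × ℝ → ℝ, Measurable G ∧ MemLp G 2 ∧ ∀ ψ : ℝ × ℝ → ℝ, MemLp ψ 2 →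
      (∀ p ∉ Kb T ((k:ℝ) + 1), ψ p = 0) →
      Tendsto (fun n => ∫ p, w n p * ψ p) F (𝓝 (∫ p, G p * ψ p)) := by
    intro k
    obtain ⟨C, hC⟩ := hB _ (hpos k)
    obtain ⟨G, h1, h2, h3⟩ := L2_weak (μ := volume) F (C := C)
      (fun n => indK_memLp (hpos k) (hw n)) (by simpa only [setInt_sq_eq] using hC)
    refine ⟨G, h1, h2, fun ψ hψ h0 => ?_⟩
    simpa only [ind_mul h0] using h3 ψ hψ
  choose G hGm hGL hGt using step
  have cons : ∀ j k : ℕ, j ≤ k → ∀ᵐ p : ℝ × ℝ, p ∈ Kb T ((j:ℝ) + 1) → G k p = G j p := by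
    intro j k hjk
    have hjk' : (j:ℝ) + 1 ≤ (k:ℝ) + 1 := by
      have : (j:ℝ) ≤ k := by exact_mod_cast hjk
      linarith
    let d : ℝ × ℝ → ℝ := (Kb T ((j:ℝ) + 1)).indicator fun p => G k p - G j p
    have hd : MemLp d 2 := ((hGL k).sub (hGL j)).indicator (Kb_meas T _)
    have d0 : ∀ p ∉ Kb T ((j:ℝ) + 1), d p = 0 := fun p hp => indicator_of_notMem hp _
    have e1 := tendsto_nhds_unique (hGt k d hd fun p hp => d0 p fun h => hp (Kb_mono hjk' h))
      (hGt j d hd d0)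
    have e2 : ∫ p, d p ^ 2 = 0 := by
      have : ∀ p, d p ^ 2 = G k p * d p - G j p * d p := by
        intro p
        have := ind_mul (a := fun p => G k p - G j p) d0 p
        rw [← sub_mul, ← this, sq]
      simp_rw [this]
      have m1 : Integrable fun p => G k p * d p := (hGL k).integrable_mul hd
      have m2 : Integrable fun p => G j p * d p := (hGL j).integrable_mul hd
      rw [integral_sub m1 m2, e1, sub_self]
    have e3 := (integral_eq_zero_iff_of_nonneg (fun p => sq_nonneg (d p)) hd.integrable_sq).1 e2
    filter_upwards [e3] with p hp hpK
    have : d p = 0 := by simpa using hp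
    simp only [d, indicator_of_mem hpK] at this
    linarith
  -- the least `j` with `|x| ≤ j + 1`; truncated subtraction gives `0` at `x = 0`
  let idx : ℝ × ℝ → ℕ := fun p => ⌈|p.2|⌉₊ - 1
  have hidx : Measurable idx := by
    have : Measurable fun p : ℝ × ℝ => ⌈|p.2|⌉₊ := by
      have h : Measurable fun p : ℝ × ℝ => |p.2| := by fun_prop
      exact Nat.measurable_ceil.comp h
    exact (measurable_of_countable (fun n : ℕ => n - 1)).comp this
  let W : ℝ × ℝ → ℝ := fun p => G (idx p) p
  have hWm : Measurable W := by
    have : Measurable fun z : ℕ × (ℝ × ℝ) => G z.1 z.2 :=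
      measurable_from_prod_countable_right fun k => hGm k
    exact this.comp (hidx.prodMk measurable_id)
  have hWG : ∀ k : ℕ, ∀ᵐ p : ℝ × ℝ, p ∈ Kb T ((k:ℝ) + 1) → W p = G k p := by
    intro k
    have : ∀ᵐ p : ℝ × ℝ, ∀ j ≤ k, p ∈ Kb T ((j:ℝ) + 1) → G k p = G j p := by
      rw [ae_all_iff]
      intro j
      by_cases hj : j ≤ k
      · filter_upwards [cons j k hj] with p hp _ using hp
      · exact Eventually.of_forall fun p h => absurd h hj
    filter_upwards [this] with p hp hpK
    have hx : |p.2| ≤ (k:ℝ) + 1 := abs_le.2 hpK.2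
    have h1 : ⌈|p.2|⌉₊ ≤ k + 1 := Nat.ceil_le.2 (by exact_mod_cast hx)
    have h2 : |p.2| ≤ ⌈|p.2|⌉₊ := Nat.le_ceil _
    have h3 : ⌈|p.2|⌉₊ ≤ idx p + 1 := by
      simp only [idx]
      omega
    have h4 : |p.2| ≤ (idx p : ℝ) + 1 := h2.trans (by exact_mod_cast h3)
    exact (hp (idx p) (by simp only [idx]; omega) ⟨hpK.1, abs_le.1 h4⟩).symm
  have hbig : ∀ R : ℝ, ∃ k : ℕ, R ≤ (k:ℝ) + 1 := fun R => by
    obtain ⟨k, hk⟩ := exists_nat_ge R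
    exact ⟨k, by linarith⟩
  refine ⟨W, ⟨hWm, fun R _ => ?_⟩, fun R ψ hψ h0 => ?_⟩
  · obtain ⟨k, hk⟩ := hbig R
    have h1 : IntegrableOn (fun p => G k p ^ 2) (Kb T R) := (hGL k).integrable_sq.integrableOn
    refine Integrable.congr h1 ?_
    refine (ae_restrict_iff' (Kb_meas T R)).2 ?_
    filter_upwards [hWG k] with p hp hpK
    simp only [hp (Kb_mono hk hpK)]
  · obtain ⟨k, hk⟩ := hbig R
    have h0' : ∀ p ∉ Kb T ((k:ℝ) + 1), ψ p = 0 := fun p hp => h0 p fun h => hp (Kb_mono hk h)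
    have e : ∫ p, W p * ψ p = ∫ p, G k p * ψ p := by
      refine integral_congr_ae ?_
      filter_upwards [hWG k] with p hp
      by_cases hpK : p ∈ Kb T ((k:ℝ) + 1)
      · rw [hp hpK]
      · simp [h0' p hpK]
    rw [e]
    exact hGt k ψ hψ h0'

/-! ### Uniqueness of weak derivatives -/

lemma L2loc.locInt {T : ℝ} {w : ℝ × ℝ → ℝ} (hw : L2loc T w) :
    LocallyIntegrableOn w (Ioo (0:ℝ) T ×ˢ (univ : Set ℝ)) := by
  intro p hp
  have hL := memLp_locInt (indK_memLp (R := |p.2| + 1) (by positivity) hw)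
  have hU : Kb T (|p.2| + 1) ∈ 𝓝 p :=
    prod_mem_nhds (Icc_mem_nhds hp.1.1 hp.1.2)
      (Icc_mem_nhds (by linarith [neg_abs_le p.2]) (by linarith [le_abs_self p.2]))
  refine ⟨Kb T (|p.2| + 1), mem_nhdsWithin_of_mem_nhds hU, ?_⟩
  exact (hL.integrableOn_isCompact (Kb_cpt T _)).congr_fun
    (fun q hq => indicator_of_mem hq _) (Kb_meas T _)

lemma weak_unique {T : ℝ} {u : ℝ × ℝ → ℝ} {w₁ w₂ : ℝ × ℝ → ℝ} (h1 : L2loc T w₁)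
    (h2 : L2loc T w₂) (d1 : HasWeakDx T u w₁) (d2 : HasWeakDx T u w₂) :
    ∀ᵐ p : ℝ × ℝ, p.1 ∈ Icc (0:ℝ) T → w₁ p = w₂ p := by
  have hU : IsOpen (Ioo (0:ℝ) T ×ˢ (univ : Set ℝ)) := isOpen_Ioo.prod isOpen_univ
  have := hU.ae_eq_zero_of_integral_contDiff_smul_eq_zero (μ := volume) (h1.sub h2).locInt (by
    intro g hg hc hs
    let φ : TTest T := ⟨g, hg, hc, (subset_tsupport g).trans hs⟩
    have hφ : ContDiff ℝ 1 φ.toFun := φ.smooth.of_le le1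
    obtain ⟨R, hR, h0⟩ := φ.exists_box
    obtain ⟨C, hC, hCb⟩ := bdd_of_cpt hφ.continuous φ.cpt
    have a1 := d1 φ
    have a2 := d2 φ
    rw [pair_id] at a1 a2
    have e : ∀ p, g p • (w₁ p - w₂ p) = w₁ p * φ.toFun p - w₂ p * φ.toFun p := by
      intro p
      simp only [φ, smul_eq_mul]
      ring
    simp_rw [e]
    rw [integral_sub (h1.mul_int hR hφ.continuous.measurable hCb fun p hp => (h0 p hp).1)
      (h2.mul_int hR hφ.continuous.measurable hCb fun p hp => (h0 p hp).1)]
    linarith)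
  filter_upwards [this, ae_Ioo_of_Icc T] with p hp hne hpI
  have := hp ⟨⟨lt_of_le_of_ne hpI.1 (Ne.symm hne.1), lt_of_le_of_ne hpI.2 hne.2⟩, mem_univ _⟩
  linarith

lemma wDx_L2loc (T : ℝ) (u : ℝ × ℝ → ℝ) : L2loc T (wDx T u) := by
  unfold wDx
  split_ifs with h
  · exact h.choose_spec.1
  · exact ⟨measurable_zero, fun R _ => by simp⟩

lemma wDx_weak {T : ℝ} {u : ℝ × ℝ → ℝ} (h : hasDx T u) : HasWeakDx T u (wDx T u) := by
  unfold wDx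
  rw [dif_pos h]
  exact h.choose_spec.2

/-! ### Passing to the limit in the functional -/

/-- A modulus of continuity in quadratic form, convenient for integration. -/
lemma modulus {h : ℝ → ℝ} (hh : ContinuousOn h (Icc 0 1)) {η : ℝ} (hη : 0 < η) :
    ∃ C > 0, ∀ a ∈ Icc (0:ℝ) 1, ∀ b ∈ Icc (0:ℝ) 1,
      (h a - h b) ^ 2 ≤ η + C * (a - b) ^ 2 := by
  obtain ⟨B, hB, hb⟩ := bdd01 hh
  have huc := isCompact_Icc.uniformContinuousOn_of_continuous hh
  obtain ⟨δ, hδ, hd⟩ := Metric.uniformContinuousOn_iff.1 huc (Real.sqrt η) (Real.sqrt_pos.2 hη)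
  refine ⟨(2 * B) ^ 2 / δ ^ 2, by positivity, fun a ha b hb' => ?_⟩
  by_cases hab : |a - b| < δ
  · have h1 := hd a ha b hb' hab
    rw [Real.dist_eq] at h1
    have h2 := pow_le_pow_left₀ (abs_nonneg _) h1.le 2
    rw [sq_abs, Real.sq_sqrt hη.le] at h2
    have : 0 ≤ (2 * B) ^ 2 / δ ^ 2 * (a - b) ^ 2 := by positivity
    linarith
  · push Not at hab
    have h1 : |h a - h b| ≤ 2 * B := by
      have := abs_sub (h a) (h b)
      linarith [hb a ha, hb b hb']
    have h2 := pow_le_pow_left₀ (abs_nonneg _) h1 2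
    have h3 := pow_le_pow_left₀ hδ.le hab 2
    rw [sq_abs] at h2 h3
    have h4 : (2 * B) ^ 2 ≤ (2 * B) ^ 2 / δ ^ 2 * (a - b) ^ 2 := by
      rw [div_mul_eq_mul_div, le_div_iff₀ (by positivity)]
      gcongr
    linarith

lemma comp_strong {T R : ℝ} {h : ℝ → ℝ} (hh : ContinuousOn h (Icc 0 1)) {l : Filter ℕ}
    {u : cU T} {us : ℕ → cU T}
    (hu : Tendsto (fun n => ∫ p in Kb T R, ((us n).toFun p - u.toFun p) ^ 2) l (𝓝 0)) :
    Tendsto (fun n => ∫ p in Kb T R, (h ((us n).toFun p) - h (u.toFun p)) ^ 2) l (𝓝 0) := by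
  rw [Metric.tendsto_nhds]
  intro δ hδ
  set V := volume.real (Kb T R) with hV
  have hV0 : 0 ≤ V := measureReal_nonneg
  have hη : 0 < δ / (2 * (V + 1)) := by positivity
  obtain ⟨C, hC, hm⟩ := modulus hh hη
  have h1 := (hu.const_mul C).eventually (gt_mem_nhds
    (show C * 0 < δ / 2 by rw [mul_zero]; positivity))
  filter_upwards [h1] with n hn
  rw [Real.dist_eq, sub_zero, abs_of_nonneg (integral_nonneg fun p => sq_nonneg _)]
  obtain ⟨B, hB, hBb⟩ := bdd01 hh
  have mh : ∀ v : cU T, Measurable fun p => h (v.toFun p) := fun v => comp_meas hh v.meas v.mem01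
  have i1 : IntegrableOn (fun p => (h ((us n).toFun p) - h (u.toFun p)) ^ 2) (Kb T R) := by
    refine bdd_sq_intOn (C := 2 * B) ((mh _).sub (mh _)) fun p => ?_
    have := abs_sub (h ((us n).toFun p)) (h (u.toFun p))
    linarith [hBb _ ((us n).mem01 p), hBb _ (u.mem01 p)]
  have i2 : IntegrableOn (fun p => ((us n).toFun p - u.toFun p) ^ 2) (Kb T R) :=
    bdd_sq_intOn ((us n).meas.sub u.meas) ((us n).sub_abs_le u)
  have ci : IntegrableOn (fun _ : ℝ × ℝ => δ / (2 * (V + 1))) (Kb T R) :=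
    integrableOn_const (Kb_fin T R)
  have h2 := integral_mono i1 (ci.add (i2.const_mul C))
    (fun p => hm _ ((us n).mem01 p) _ (u.mem01 p))
  have e : ∫ p in Kb T R, (δ / (2 * (V + 1)) + C * ((us n).toFun p - u.toFun p) ^ 2)
      = V * (δ / (2 * (V + 1))) + C * ∫ p in Kb T R, ((us n).toFun p - u.toFun p) ^ 2 := by
    rw [integral_add ci (i2.const_mul C), integral_const_mul]
    simp [hV]
  have h3 : V * (δ / (2 * (V + 1))) ≤ δ / 2 := by
    rw [mul_div_assoc', div_le_div_iff₀ (by positivity) (by norm_num)]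
    nlinarith
  have h4 : ∫ p in Kb T R, (h ((us n).toFun p) - h (u.toFun p)) ^ 2
      ≤ V * (δ / (2 * (V + 1))) + C * ∫ p in Kb T R, ((us n).toFun p - u.toFun p) ^ 2 :=
    h2.trans e.le
  linarith

lemma int_restr {s : Set (ℝ × ℝ)} {g a : ℝ × ℝ → ℝ} (h0 : ∀ p ∉ s, a p = 0) :
    ∫ p, g p * a p = ∫ p in s, a p * g p := by
  rw [← setIntegral_eq_integral_of_forall_compl_eq_zero (s := s)
    (fun p hp => by rw [h0 p hp, mul_zero])]
  simp only [mul_comm]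

lemma memLp_restr {T R : ℝ} {a : ℝ × ℝ → ℝ} (ha : Measurable a) {C : ℝ} (hC : ∀ p, |a p| ≤ C) :
    MemLp a 2 (volume.restrict (Kb T R)) :=
  (memLp_two_iff_integrable_sq ha.aestronglyMeasurable).2 (bdd_sq_intOn ha hC)

lemma comp_weak {T R : ℝ} {h : ℝ → ℝ} (hh : ContinuousOn h (Icc 0 1)) {l : Filter ℕ}
    {u : cU T} {us : ℕ → cU T}
    (hu : Tendsto (fun n => ∫ p in Kb T R, ((us n).toFun p - u.toFun p) ^ 2) l (𝓝 0))
    {a : ℝ × ℝ → ℝ} (ha : Measurable a) {C : ℝ} (hC : ∀ p, |a p| ≤ C)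
    (h0 : ∀ p ∉ Kb T R, a p = 0) :
    Tendsto (fun n => ∫ p, h ((us n).toFun p) * a p) l (𝓝 (∫ p, h (u.toFun p) * a p)) := by
  obtain ⟨B, hB, hBb⟩ := bdd01 hh
  have mh : ∀ v : cU T, MemLp (fun p => h (v.toFun p)) 2 (volume.restrict (Kb T R)) :=
    fun v => memLp_restr (comp_meas hh v.meas v.mem01) fun p => hBb _ (v.mem01 p)
  simp_rw [int_restr h0]
  exact tendsto_integral_mul_of_L2 (memLp_restr ha hC) (mh u)
    (Eventually.of_forall fun n => mh (us n)) (comp_strong hh hu)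

lemma flux_conv {T R : ℝ} (hR : 0 < R) {D : ℝ → ℝ} (hD : ContinuousOn D (Icc 0 1))
    {l : Filter ℕ} {u : cU T} {us : ℕ → cU T}
    (hu : Tendsto (fun n => ∫ p in Kb T R, ((us n).toFun p - u.toFun p) ^ 2) l (𝓝 0))
    {w : ℝ × ℝ → ℝ} {ws : ℕ → ℝ × ℝ → ℝ} (hws : ∀ n, L2loc T (ws n)) {B : ℝ}
    (hB : ∀ᶠ n in l, ∫ p in Kb T R, ws n p ^ 2 ≤ B)
    (hlim : ∀ ψ : ℝ × ℝ → ℝ, MemLp ψ 2 → (∀ p ∉ Kb T R, ψ p = 0) →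
      Tendsto (fun n => ∫ p, ws n p * ψ p) l (𝓝 (∫ p, w p * ψ p)))
    {a : ℝ × ℝ → ℝ} (ha : Measurable a) {C : ℝ} (hC : ∀ p, |a p| ≤ C)
    (h0 : ∀ p ∉ Kb T R, a p = 0) :
    Tendsto (fun n => ∫ p, D ((us n).toFun p) * ws n p * a p) l
      (𝓝 (∫ p, D (u.toFun p) * w p * a p)) := by
  obtain ⟨E, hE, hEb⟩ := bdd01 hD
  have mh : ∀ v : cU T, Measurable fun p => D (v.toFun p) := fun v => comp_meas hD v.meas v.mem01
  have hC0 : 0 ≤ C := (abs_nonneg _).trans (hC 0)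
  have hψm : ∀ v : cU T, Measurable fun p => D (v.toFun p) * a p := fun v => (mh v).mul ha
  have hψb : ∀ (v : cU T) p, |D (v.toFun p) * a p| ≤ E * C := fun v p => by
    rw [abs_mul]
    exact mul_le_mul (hEb _ (v.mem01 p)) (hC p) (abs_nonneg _) hE.le
  have hψ0 : ∀ (v : cU T), ∀ p ∉ Kb T R, D (v.toFun p) * a p = 0 := fun v p hp => by
    rw [h0 p hp, mul_zero]
  have hψL : MemLp (fun p => D (u.toFun p) * a p) 2 := by
    have := indK_memLp_bdd (T := T) (R := R) (hψm u) (hψb u)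
    rwa [indicator_eq_self.2 fun p hp => by_contra fun h => hp (hψ0 u p h)] at this
  have l1 := hlim _ hψL (hψ0 u)
  have i1 : ∀ (v : cU T) n, Integrable fun p => ws n p * (D (v.toFun p) * a p) :=
    fun v n => (hws n).mul_int hR (hψm v) (hψb v) (hψ0 v)
  have l2 : Tendsto (fun n => ∫ p, ws n p * ((D ((us n).toFun p) - D (u.toFun p)) * a p)) l
      (𝓝 0) := by
    have hs := comp_strong hD hu
    rw [Metric.tendsto_nhds]
    intro δ hδ
    -- Young's inequality with weight `κ` leaves at most `δ / 2` from the bounded gradients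
    set κ := δ / (2 * (|B| + 1)) with hκd
    have hκ : 0 < κ := by positivity
    have h1 := (hs.const_mul (C ^ 2 / (4 * κ))).eventually (gt_mem_nhds
      (show C ^ 2 / (4 * κ) * 0 < δ / 2 by rw [mul_zero]; positivity))
    filter_upwards [h1, hB] with n h1 h2
    rw [dist_zero_right, ← setIntegral_eq_integral_of_forall_compl_eq_zero (s := Kb T R)
      (fun p hp => by rw [h0 p hp, mul_zero, mul_zero])]
    have j1 : IntegrableOn (fun p => ws n p ^ 2) (Kb T R) := (hws n).2 R hR
    have j2 : IntegrableOn (fun p => (D ((us n).toFun p) - D (u.toFun p)) ^ 2) (Kb T R) := by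
      refine bdd_sq_intOn (C := 2 * E) ((mh _).sub (mh _)) fun p => ?_
      have := abs_sub (D ((us n).toFun p)) (D (u.toFun p))
      linarith [hEb _ ((us n).mem01 p), hEb _ (u.mem01 p)]
    have h3 : ‖∫ p in Kb T R, ws n p * ((D ((us n).toFun p) - D (u.toFun p)) * a p)‖
        ≤ ∫ p in Kb T R, (κ * ws n p ^ 2
          + C ^ 2 / (4 * κ) * (D ((us n).toFun p) - D (u.toFun p)) ^ 2) := by
      refine norm_integral_le_of_norm_le ((j1.const_mul _).add (j2.const_mul _))
        (Eventually.of_forall fun p => ?_)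
      rw [Real.norm_eq_abs, abs_mul, abs_mul]
      have e : C ^ 2 / (4 * κ) * (D ((us n).toFun p) - D (u.toFun p)) ^ 2
          = (1 / (4 * κ)) * (|D ((us n).toFun p) - D (u.toFun p)| * C) ^ 2 := by
        rw [mul_pow, sq_abs]
        ring
      rw [e, ← sq_abs (ws n p)]
      have y : ∀ x y : ℝ, x * y ≤ κ * x ^ 2 + 1 / (4 * κ) * y ^ 2 := by
        intro x y
        have h : 0 ≤ (1 / (4 * κ)) * (y - 2 * κ * x) ^ 2 := by positivity
        have e : (1 / (4 * κ)) * (y - 2 * κ * x) ^ 2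
          = 1 / (4 * κ) * y ^ 2 - x * y + κ * x ^ 2 := by
            field_simp
            ring
        rw [e] at h
        linarith
      refine le_trans ?_ (y _ _)
      gcongr
      exact hC p
    rw [integral_add (j1.const_mul _) (j2.const_mul _), integral_const_mul,
      integral_const_mul] at h3
    have h4 : κ * ∫ p in Kb T R, ws n p ^ 2 ≤ δ / 2 := by
      calc _ ≤ κ * (|B| + 1) := by
            gcongr
            linarith [le_abs_self B]
        _ = δ / 2 := by
            rw [hκd]
            field_simp
    linarith
  have := l2.add l1
  rw [zero_add] at this
  have e : ∫ p, D (u.toFun p) * w p * a p = ∫ p, w p * (D (u.toFun p) * a p) := by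
    congr 1
    ext p
    ring
  rw [e]
  refine this.congr fun n => ?_
  have e2 : (fun p => ws n p * ((D ((us n).toFun p) - D (u.toFun p)) * a p))
      = fun p => ws n p * (D ((us n).toFun p) * a p) - ws n p * (D (u.toFun p) * a p) := by
    ext p
    ring
  rw [e2, integral_sub (i1 _ n) (i1 _ n), sub_add_cancel]
  congr 1
  ext p
  ring

/-- The weak limit of the gradients is the weak gradient of the limit. -/
lemma limit_weakDx {T : ℝ} {u : cU T} {us : ℕ → cU T}
    (h : Tendsto (fun n => dcU T (us n) u) atTop (𝓝 0)) {l : Filter ℕ} [l.NeBot]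
    (hl : l ≤ atTop) {w : ℝ × ℝ → ℝ} {ws : ℕ → ℝ × ℝ → ℝ}
    (hws : ∀ᶠ n in l, HasWeakDx T (us n).toFun (ws n))
    (hlim : ∀ R, ∀ ψ : ℝ × ℝ → ℝ, MemLp ψ 2 → (∀ p ∉ Kb T R, ψ p = 0) →
      Tendsto (fun n => ∫ p, ws n p * ψ p) l (𝓝 (∫ p, w p * ψ p))) :
    HasWeakDx T u.toFun w := by
  intro φ
  obtain ⟨R, hR, h0⟩ := φ.exists_box
  have hpx : ContDiff ℝ (⊤ : ℕ∞) (pxF φ.toFun) :=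
    (φ.smooth.fderiv_right (m := ((⊤ : ℕ∞) : WithTop ℕ∞)) (by simp)).clm_apply contDiff_const
  have l1 := (weak_conv h hpx (px_cpt φ.cpt) fun p hp => by
    rw [pxF, (φ.zero_off p hp).2]
    rfl).mono_left hl
  have l2 := (hlim R φ.toFun (φ.smooth.continuous.memLp_of_hasCompactSupport φ.cpt)
    fun p hp => (h0 p hp).1).neg
  rw [pair_px, pair_id]
  refine tendsto_nhds_unique l1 (l2.congr' ?_)
  filter_upwards [hws] with n hn
  have := hn φ
  rw [pair_px, pair_id] at this
  exact this.symm

lemma Iexpr_congr {f D σ : ℝ → ℝ} {T ε : ℝ} {u w₁ w₂ : ℝ × ℝ → ℝ}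
    (h : ∀ᵐ p : ℝ × ℝ, p.1 ∈ Icc (0:ℝ) T → w₁ p = w₂ p) (φ : TTest T) :
    IexprW f D σ T ε u w₁ φ = IexprW f D σ T ε u w₂ φ := by
  have : pair T (fun p => D (u p) * w₁ p) (pxF φ.toFun)
      = pair T (fun p => D (u p) * w₂ p) (pxF φ.toFun) := by
    refine integral_congr_ae ((ae_restrict_iff' (measurableSet_Icc.prod MeasurableSet.univ)).2 ?_)
    filter_upwards [h] with p hp hpI
    rw [hp hpI.1]
  simp only [IexprW, this]

lemma Iexpr_tendsto {f D σ : ℝ → ℝ} {T : ℝ} (ε : ℝ) (hf : ContinuousOn f (Icc 0 1))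
    (hD : ContinuousOn D (Icc 0 1)) (hσ : ContinuousOn σ (Icc 0 1)) {l : Filter ℕ}
    {u : cU T} {us : ℕ → cU T}
    (hu : ∀ R > 0, Tendsto (fun n => ∫ p in Kb T R, ((us n).toFun p - u.toFun p) ^ 2) l (𝓝 0))
    {w : ℝ × ℝ → ℝ} {ws : ℕ → ℝ × ℝ → ℝ} (hws : ∀ n, L2loc T (ws n))
    (hB : ∀ R > 0, ∃ B, ∀ᶠ n in l, ∫ p in Kb T R, ws n p ^ 2 ≤ B)
    (hlim : ∀ R, ∀ ψ : ℝ × ℝ → ℝ, MemLp ψ 2 → (∀ p ∉ Kb T R, ψ p = 0) →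
      Tendsto (fun n => ∫ p, ws n p * ψ p) l (𝓝 (∫ p, w p * ψ p))) (φ : TTest T) :
    Tendsto (fun n => IexprW f D σ T ε (us n).toFun (ws n) φ) l
      (𝓝 (IexprW f D σ T ε u.toFun w φ)) := by
  have hφ : ContDiff ℝ 1 φ.toFun := φ.smooth.of_le le1
  obtain ⟨R, hR, h0⟩ := φ.exists_box
  obtain ⟨Cx, hCx, hCxb⟩ := bdd_of_cpt (px_cont hφ) (px_cpt φ.cpt)
  obtain ⟨Ct, hCt, hCtb⟩ := bdd_of_cpt (pt_cont hφ) (pt_cpt φ.cpt)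
  have x0 : ∀ p ∉ Kb T R, pxF φ.toFun p = 0 := fun p hp => by
    rw [pxF, (h0 p hp).2]
    rfl
  have t0 : ∀ p ∉ Kb T R, ptF φ.toFun p = 0 := fun p hp => by
    rw [ptF, (h0 p hp).2]
    rfl
  have mx := (px_cont hφ).measurable
  have l1 := comp_weak (h := fun x => x) continuousOn_id (hu R hR) (pt_cont hφ).measurable hCtb t0
  have l2 := comp_weak hf (hu R hR) mx hCxb x0
  have l4 := comp_weak hσ (hu R hR) (a := fun p => pxF φ.toFun p * pxF φ.toFun p) (mx.mul mx)
    (C := Cx * Cx) (fun p => by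
      rw [abs_mul]
      exact mul_le_mul (hCxb p) (hCxb p) (abs_nonneg _) hCx.le)
    (fun p hp => by rw [x0 p hp, mul_zero])
  obtain ⟨B, hB'⟩ := hB R hR
  have l3 := flux_conv hR hD (hu R hR) hws hB' (hlim R) mx hCxb x0
  simp only [IexprW, pair_px, pair_pt, mul_assoc] at l1 l2 l3 l4 ⊢
  exact ((l1.neg.sub l2).add (l3.const_mul (ε / 2))).sub (l4.const_mul (1 / 2))

/-! ### Lower semicontinuity -/

lemma sq_sub_bound {T R B : ℝ} (hR : 0 < R) {w₁ w₂ : ℝ × ℝ → ℝ} (h1 : L2loc T w₁)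
    (h2 : L2loc T w₂) (hB : ∫ p in Kb T R, w₁ p ^ 2 ≤ B) :
    ∫ p in Kb T R, (w₁ p - w₂ p) ^ 2 ≤ 2 * B + 2 * ∫ p in Kb T R, w₂ p ^ 2 := by
  have i1 : IntegrableOn (fun p => w₁ p ^ 2) (Kb T R) := h1.2 R hR
  have i2 : IntegrableOn (fun p => w₂ p ^ 2) (Kb T R) := h2.2 R hR
  have h3 : ∫ p in Kb T R, (w₁ p - w₂ p) ^ 2
      ≤ ∫ p in Kb T R, (2 * w₁ p ^ 2 + 2 * w₂ p ^ 2) :=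
    integral_mono ((h1.sub h2).2 R hR) ((i1.const_mul 2).add (i2.const_mul 2)) fun p => by
      simp only
      nlinarith [sq_nonneg (w₁ p + w₂ p)]
  rw [integral_add (i1.const_mul 2) (i2.const_mul 2), integral_const_mul,
    integral_const_mul] at h3
  linarith

/-- A finite bound on `I_ε` along infinitely many terms of the sequence passes to the limit. -/
lemma Ieps_le_of_frequently {f D σ : ℝ → ℝ} {T ε : ℝ} (hf : ContinuousOn f (Icc 0 1))
    (hD : ContinuousOn D (Icc 0 1)) (hσ : ContinuousOn σ (Icc 0 1)) {c : ℝ} (hc : 0 < c)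
    (hDc : ∀ v ∈ Icc (0:ℝ) 1, c ≤ D v) (hε : 0 < ε) {u : cU T} {us : ℕ → cU T}
    (h : Tendsto (fun n => dcU T (us n) u) atTop (𝓝 0)) {M : ℝ≥0∞} (hM : M ≠ ⊤)
    (hfr : ∃ᶠ n in atTop, Ieps f D σ T ε (us n) < M) : Ieps f D σ T ε u ≤ M := by
  have hne : (atTop ⊓ 𝓟 {n : ℕ | Ieps f D σ T ε (us n) < M}).NeBot :=
    frequently_mem_iff_neBot.1 hfr
  set F : Ultrafilter ℕ := Ultrafilter.of (atTop ⊓ 𝓟 {n : ℕ | Ieps f D σ T ε (us n) < M})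
  have hF := Ultrafilter.of_le (atTop ⊓ 𝓟 {n : ℕ | Ieps f D σ T ε (us n) < M})
  have hFt : (F : Filter ℕ) ≤ atTop := hF.trans inf_le_left
  have hFM : ∀ᶠ n in (F : Filter ℕ), Ieps f D σ T ε (us n) < M :=
    (hF.trans inf_le_right) (mem_principal_self _)
  set ws : ℕ → ℝ × ℝ → ℝ := fun n => wDx T (us n).toFun
  have hws : ∀ n, L2loc T (ws n) := fun n => wDx_L2loc T _
  have hgood : ∀ᶠ n in (F : Filter ℕ), HasWeakDx T (us n).toFun (ws n) ∧
      ∀ φ, IexprW f D σ T ε (us n).toFun (ws n) φ ≤ M.toReal := by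
    filter_upwards [hFM] with n hn
    unfold Ieps at hn
    split_ifs at hn with hdx
    · refine ⟨wDx_weak hdx, fun φ => ?_⟩
      exact (ENNReal.ofReal_le_iff_le_toReal hM).1 ((le_iSup (fun φ : TTest T =>
        ENNReal.ofReal (IexprW f D σ T ε (us n).toFun (wDx T (us n).toFun) φ)) φ).trans hn.le)
    · exact absurd hn not_top_lt
  have hB : ∀ R > 0, ∃ B, ∀ᶠ n in (F : Filter ℕ), ∫ p in Kb T R, ws n p ^ 2 ≤ B := by
    intro R hR
    obtain ⟨B, hB⟩ := apriori (T := T) hf hD hσ hc hDc hε M.toReal hR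
    refine ⟨B, ?_⟩
    filter_upwards [hgood] with n hn
    exact hB (us n) (ws n) (hws n) hn.1 hn.2
  obtain ⟨w, hw, hlim⟩ := loc_weak F hws hB
  have hwd : HasWeakDx T u.toFun w := limit_weakDx h hFt (hgood.mono fun n hn => hn.1) hlim
  have hu : ∀ R > 0, Tendsto (fun n => ∫ p in Kb T R, ((us n).toFun p - u.toFun p) ^ 2) F
      (𝓝 0) := by
    intro R hR
    obtain ⟨B, hB'⟩ := hB (R + 1) (by linarith)
    refine strong_conv hR h hFt hw hwd (ws := ws)
      (B := 2 * B + 2 * ∫ p in Kb T (R + 1), w p ^ 2) ?_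
    filter_upwards [hgood, hB'] with n h1 h2
    exact ⟨hws n, h1.1, sq_sub_bound (by linarith) (hws n) hw h2⟩
  have hdx : hasDx T u.toFun := ⟨w, hw, hwd⟩
  unfold Ieps
  rw [if_pos hdx]
  refine iSup_le fun φ => ?_
  rw [Iexpr_congr (weak_unique (wDx_L2loc T _) hw (wDx_weak hdx) hwd) φ,
    ENNReal.ofReal_le_iff_le_toReal hM]
  exact le_of_tendsto (Iexpr_tendsto ε hf hD hσ hu hws hB hlim φ)
    (hgood.mono fun n hn => hn.2 φ)

/-- For each `ε > 0`, the functional `I_ε : 𝒰 → [0,+∞]` is lower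
semicontinuous with respect to `d_𝒰`. -/
theorem Ieps_lsc (T : ℝ) (hT : 0 < T) (f D σ : ℝ → ℝ)
    (hf : ∃ C : NNReal, LipschitzOnWith C f (Icc 0 1))
    (hD : ContinuousOn D (Icc 0 1)) (hσ : ContinuousOn σ (Icc 0 1))
    (hDpos : ∃ c > 0, ∀ v ∈ Icc (0:ℝ) 1, c ≤ D v)
    (hσpos : ∀ v ∈ Ioo (0:ℝ) 1, 0 < σ v) :
    ∀ ε > 0, ∀ (u : cU T) (us : ℕ → cU T),
      Tendsto (fun n => dcU T (us n) u) atTop (𝓝 0) →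
      Ieps f D σ T ε u ≤ Filter.liminf (fun n => Ieps f D σ T ε (us n)) atTop := by
  obtain ⟨C, hfC⟩ := hf
  obtain ⟨c, hc, hDc⟩ := hDpos
  intro ε hε u us h
  refine le_of_forall_gt_imp_ge_of_dense fun M hM => ?_
  by_cases hMt : M = ⊤
  · rw [hMt]
    exact le_top
  exact Ieps_le_of_frequently hfC.continuousOn hD hσ hc hDc hε h hMt
    (frequently_lt_of_liminf_lt (by isBoundedDefault) hM)

end GammaSCL
end
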